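/- arXiv:1801.08260 — 2 statements merged into one kernel-verified Lean document; each statement's English description precedes it below -/
import Mathlib

section
/- Let A = (A₁,…,Aₙ) be a reduced and irreducible tuple of finite subsets of ℤⁿ. Then the monodromy group G_A is doubly transitive: there exists a proper algebraic subset B ⊊ ℂ^A over whose complement the projection π : {(x,f) ∈ (ℂ∖{0})ⁿ × ℂ^A : f(x) = 0} → ℂ^A is a covering map, such that for every f ∈ ℂ^A ∖ B and any ordered pairs (x,y) and (x',y') of distinct roots of f, some loop γ in ℂ^A ∖ B based at f induces a permutation σ of the root set of f with σ(x) = x' and σ(y) = y'. -/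
open Pointwise MeasureTheory

namespace Esterov

/-- The standard embedding of the lattice `ℤⁿ` into `ℝⁿ`. -/
def toR {n : ℕ} (a : Fin n → ℤ) : Fin n → ℝ := fun j => (a j : ℝ)

/-- The lattice mixed volume of finite sets `A₁, …, Aₙ ⊆ ℤⁿ`:
`MV(A₁,…,Aₙ) = ∑_{∅ ≠ S ⊆ {1,…,n}} (−1)^{n−|S|} vol (conv (∑_{i ∈ S} Aᵢ))`. -/
noncomputable def MV {n : ℕ} (A : Fin n → Finset (Fin n → ℤ)) : ℝ :=
  ∑ S ∈ Finset.univ.powerset.filter (fun S : Finset (Fin n) => S.Nonempty),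
    (-1 : ℝ) ^ (n - S.card) *
      (volume (convexHull ℝ (∑ i ∈ S, toR '' (A i : Set (Fin n → ℤ))))).toReal

/-- The complex torus `(ℂ∖0)ⁿ`. -/
abbrev Torus (n : ℕ) := Fin n → ℂˣ

/-- The index type of the coefficients of a tuple of supports. -/
abbrev CIdx {n : ℕ} (A : Fin n → Finset (Fin n → ℤ)) := Σ i : Fin n, {a : Fin n → ℤ // a ∈ A i}

/-- The space `ℂ^A = ℂ^{A₁} ⊕ ⋯ ⊕ ℂ^{Aₙ}` of systems of Laurent polynomials supported at `A`,
encoded by their coefficients. -/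
abbrev Coeff {n : ℕ} (A : Fin n → Finset (Fin n → ℤ)) := CIdx A → ℂ

/-- The value of the Laurent monomial `x^a` at a point `x` of the torus. -/
noncomputable def mono {n : ℕ} (a : Fin n → ℤ) (x : Torus n) : ℂ :=
  ∏ j, ((x j : ℂ) ^ (a j))

/-- The value of the `i`-th polynomial of the system `c ∈ ℂ^A` at `x`. -/
noncomputable def evalAt {n : ℕ} (A : Fin n → Finset (Fin n → ℤ)) (c : Coeff A) (i : Fin n)
    (x : Torus n) : ℂ :=
  ∑ a ∈ (A i).attach, c ⟨i, a⟩ * mono a.1 x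

/-- `x` is a common root of the system `c ∈ ℂ^A`. -/
def IsRoot {n : ℕ} (A : Fin n → Finset (Fin n → ℤ)) (c : Coeff A) (x : Torus n) : Prop :=
  ∀ i, evalAt A c i x = 0

/-- The Jacobian matrix `(∂fᵢ/∂xⱼ (x))` of the system `c ∈ ℂ^A` at `x`
(note `∂(x^a)/∂xⱼ = aⱼ x^a / xⱼ`). -/
noncomputable def jacobian {n : ℕ} (A : Fin n → Finset (Fin n → ℤ)) (c : Coeff A)
    (x : Torus n) : Matrix (Fin n) (Fin n) ℂ :=
  Matrix.of fun i j => (∑ a ∈ (A i).attach, c ⟨i, a⟩ * (a.1 j : ℂ) * mono a.1 x) * (x j : ℂ)⁻¹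

/-- `x` is a singular root of the system `c`: a common root at which the Jacobian matrix
is degenerate. -/
def IsSingularRoot {n : ℕ} (A : Fin n → Finset (Fin n → ℤ)) (c : Coeff A) (x : Torus n) :
    Prop :=
  IsRoot A c x ∧ (jacobian A c x).det = 0

/-- A subset of `ℂ^ι` is algebraic if it is the common zero locus of a family of polynomials. -/
def IsAlgebraicSet {ι : Type*} (Z : Set (ι → ℂ)) : Prop :=
  ∃ S : Set (MvPolynomial ι ℂ), Z = {c | ∀ p ∈ S, MvPolynomial.eval c p = 0}

/-- The Zariski closure of a subset of `ℂ^ι`. -/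
def zclosure {ι : Type*} (Z : Set (ι → ℂ)) : Set (ι → ℂ) :=
  ⋂₀ {W | IsAlgebraicSet W ∧ Z ⊆ W}

/-- The ideal of polynomials vanishing on a subset of `ℂ^ι`. -/
noncomputable def vanishingIdeal {ι : Type*} (Z : Set (ι → ℂ)) : Ideal (MvPolynomial ι ℂ) where
  carrier := {p | ∀ c ∈ Z, MvPolynomial.eval c p = 0}
  add_mem' := by
    intro p q hp hq c hc
    simp [hp c hc, hq c hc]
  zero_mem' := by
    intro c hc
    simp
  smul_mem' := by
    intro p q hq c hc
    simp [smul_eq_mul, hq c hc]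

/-- The (complex) dimension of a subset of `ℂ^ι`, as the Krull dimension of the coordinate
ring of its Zariski closure. -/
noncomputable def adim {ι : Type*} (Z : Set (ι → ℂ)) : WithBot ℕ∞ :=
  ringKrullDim (MvPolynomial ι ℂ ⧸ vanishingIdeal Z)

/-- The discriminant `D_A`: the Zariski closure of the set of systems having a singular root. -/
noncomputable def discSet {n : ℕ} (A : Fin n → Finset (Fin n → ℤ)) : Set (Coeff A) :=
  zclosure {c | ∃ x, IsSingularRoot A c x}

/-- The tuple `A` is dual effective: `D_A` is a hypersurface, i.e. has complex dimension
`dim ℂ^A − 1`. -/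
def DualEffective {n : ℕ} (A : Fin n → Finset (Fin n → ℤ)) : Prop :=
  adim (discSet A) = ((Fintype.card (CIdx A) - 1 : ℕ) : WithBot ℕ∞)

/-- The finite set `s` can be translated into the subgroup `L` of `ℤⁿ`. -/
def TranslatesInto {n : ℕ} (s : Finset (Fin n → ℤ)) (L : Submodule ℤ (Fin n → ℤ)) : Prop :=
  ∃ v : Fin n → ℤ, ∀ a ∈ s, a - v ∈ L

/-- A tuple of finite sets in `ℤⁿ` is reduced if the sets cannot all be translated into one
common proper subgroup of `ℤⁿ`. -/
def IsReducedTuple {n : ℕ} (A : Fin n → Finset (Fin n → ℤ)) : Prop :=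
  ¬ ∃ L : Submodule ℤ (Fin n → ℤ), L ≠ ⊤ ∧ ∀ i, TranslatesInto (A i) L

/-- A tuple of `n` finite sets in `ℤⁿ` is irreducible if for no `m` with `0 < m < n` can some
`n − m` of the sets be translated into one common subgroup of rank at most `n − m`. -/
def IsIrreducibleTuple {n : ℕ} (A : Fin n → Finset (Fin n → ℤ)) : Prop :=
  ¬ ∃ (I : Finset (Fin n)) (L : Submodule ℤ (Fin n → ℤ)),
      0 < I.card ∧ I.card < n ∧ Module.finrank ℤ L ≤ I.card ∧
      ∀ i ∈ I, TranslatesInto (A i) L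

/-- The incidence variety `E = {(x, f) : f(x) = 0} ⊆ (ℂ∖0)ⁿ × ℂ^A`. -/
def incidence {n : ℕ} (A : Fin n → Finset (Fin n → ℤ)) : Set (Torus n × Coeff A) :=
  {p | IsRoot A p.2 p.1}

/-- The projection `π : E → ℂ^A`. -/
def proj {n : ℕ} (A : Fin n → Finset (Fin n → ℤ)) : incidence A → Coeff A :=
  fun p => p.1.2

/-- The set of roots of the system `c`. -/
def RootSet {n : ℕ} (A : Fin n → Finset (Fin n → ℤ)) (c : Coeff A) :=
  {x : Torus n // IsRoot A c x}

/-- `γ` is a loop in `ℂ^A ∖ B` based at `f`. -/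
def IsLoop {n : ℕ} (A : Fin n → Finset (Fin n → ℤ)) (B : Set (Coeff A)) (f : Coeff A)
    (γ : unitInterval → Coeff A) : Prop :=
  Continuous γ ∧ (∀ t, γ t ∉ B) ∧ γ 0 = f ∧ γ 1 = f

/-- The loop `γ` based at `f` induces the permutation `σ` of the root set of `f` by path
lifting: for every root `x` the lift of `γ` starting at `x` ends at `σ x`. -/
def Induces {n : ℕ} (A : Fin n → Finset (Fin n → ℤ)) (γ : unitInterval → Coeff A)
    (f : Coeff A) (σ : RootSet A f → RootSet A f) : Prop :=
  ∀ x : RootSet A f, ∃ δ : unitInterval → Torus n,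
    Continuous δ ∧ δ 0 = x.1 ∧ (∀ t, IsRoot A (γ t) (δ t)) ∧ δ 1 = (σ x).1


lemma exists_poly_of_not_indep {S ι : Type} (F : ι → S → ℂ)
    (h : ∀ (K : Type) [Field K] [Algebra ℂ K] (Φ : (S → ℂ) →ₐ[ℂ] K),
      ¬ AlgebraicIndependent ℂ (fun i => Φ (F i))) :
    ∃ Q : MvPolynomial ι ℂ, Q ≠ 0 ∧ ∀ s, MvPolynomial.eval (fun i => F i s) Q = 0 := by
  classical
  by_contra hcon
  push Not at hcon
  let ev : MvPolynomial ι ℂ →ₐ[ℂ] (S → ℂ) := MvPolynomial.aeval F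
  have hev : ∀ Q s, ev Q s = MvPolynomial.eval (fun i => F i s) Q := by
    intro Q s
    have : ((Pi.evalAlgHom ℂ (fun _ : S => ℂ) s).comp ev) =
        MvPolynomial.aeval (fun i => F i s) := by
      ext i; simp [ev]
    have := congrArg (fun g => g Q) this
    simpa [MvPolynomial.aeval_eq_eval] using this
  let M : Submonoid (S → ℂ) := (nonZeroDivisors (MvPolynomial ι ℂ)).map ev
  have hdis : Disjoint ((⊥ : Ideal (S → ℂ)) : Set (S → ℂ)) (M : Set (S → ℂ)) := by
    rw [Set.disjoint_left]
    rintro z hz ⟨Q, hQ, rfl⟩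
    have hQ0 : Q ≠ 0 := nonZeroDivisors.ne_zero hQ
    obtain ⟨s, hs⟩ := hcon Q hQ0
    apply hs
    rw [← hev]
    have : ev Q = 0 := by simpa using hz
    exact congrFun this s
  obtain ⟨p, hp, -, hpd⟩ := Ideal.exists_le_prime_disjoint ⊥ M hdis
  let K := FractionRing ((S → ℂ) ⧸ p)
  let Φ : (S → ℂ) →ₐ[ℂ] K :=
    (IsScalarTower.toAlgHom ℂ ((S → ℂ) ⧸ p) K).comp (Ideal.Quotient.mkₐ ℂ p)
  apply h K Φ
  rw [algebraicIndependent_iff]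
  intro Q hQ
  by_contra hQ0
  have h1 : Φ (ev Q) = 0 := by
    rw [← hQ, ← AlgHom.comp_apply]
    congr 1
    ext i
    simp [ev]
  have h2 : ev Q ∈ p := by
    have : algebraMap ((S → ℂ) ⧸ p) K (Ideal.Quotient.mk p (ev Q)) = 0 := h1
    rw [IsFractionRing.to_map_eq_zero_iff] at this
    exact Ideal.Quotient.eq_zero_iff_mem.1 this
  exact Set.disjoint_left.1 hpd h2 ⟨Q, mem_nonZeroDivisors_of_ne_zero hQ0, rfl⟩

section acl
variable {K : Type} [Field K] [Algebra ℂ K]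

/-- Elements algebraic over the subalgebra generated by a set, as a subfield. -/
noncomputable def acl (s : Set K) : Subfield K where
  carrier := {z | IsAlgebraic (Algebra.adjoin ℂ s) z}
  mul_mem' := fun ha hb => IsAlgebraic.mul ha hb
  one_mem' := isAlgebraic_one
  add_mem' := fun ha hb => IsAlgebraic.add ha hb
  zero_mem' := isAlgebraic_zero
  neg_mem' := fun ha => IsAlgebraic.neg ha
  inv_mem' := fun _ ha => IsAlgebraic.inv_iff.2 ha

lemma mem_acl_of_mem {s : Set K} {z : K} (hz : z ∈ s) : z ∈ acl s :=
  isAlgebraic_algebraMap (⟨z, Algebra.subset_adjoin hz⟩ : Algebra.adjoin ℂ s)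

lemma mem_acl_of_pow {s : Set K} {z : K} {m : ℕ} (hm : 0 < m) (hz : z ^ m ∈ acl s) : z ∈ acl s :=
  IsAlgebraic.of_pow hm hz

lemma mem_acl_of_zpow {s : Set K} {z : K} {m : ℤ} (hm : m ≠ 0) (hz : z ^ m ∈ acl s) :
    z ∈ acl s := by
  rcases Int.natAbs_eq m with h | h
  · rw [h, zpow_natCast] at hz
    exact mem_acl_of_pow (Int.natAbs_pos.2 hm) hz
  · rw [h, zpow_neg, zpow_natCast] at hz
    exact mem_acl_of_pow (Int.natAbs_pos.2 hm) (by simpa using inv_mem hz)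

lemma not_indep_of_acl {κ ι : Type} [Fintype κ] [Fintype ι] (G : κ → K) (F : ι → K)
    (hcard : Fintype.card κ < Fintype.card ι) (hF : ∀ i, F i ∈ acl (Set.range G)) :
    ¬ AlgebraicIndependent ℂ F := by
  intro hind
  have h1 := hind.coe_range
  have h2 : (AlgebraicIndependent.matroid ℂ K).Indep (Set.range F) :=
    AlgebraicIndependent.matroid_indep_iff.2 h1
  have h3 : Set.range F ⊆ (AlgebraicIndependent.matroid ℂ K).closure (Set.range G) := by
    rw [AlgebraicIndependent.matroid_closure_eq]
    rintro _ ⟨i, rfl⟩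
    exact hF i
  have h4 := h2.encard_le_eRk_of_subset h3
  rw [Matroid.eRk_closure_eq] at h4
  have h5 := h4.trans (Matroid.eRk_le_encard _ _)
  have h6 : (Set.range F).encard = Fintype.card ι := by
    rw [← Set.image_univ, hind.injective.encard_image]; simp
  have h7 : (Set.range G).encard ≤ Fintype.card κ := by
    rw [← Set.image_univ]
    exact (Set.encard_image_le _ _).trans (by simp)
  have h8 := h5.trans h7
  rw [h6] at h8
  exact absurd (by exact_mod_cast h8) (not_le.2 hcard)

end acl

section gen
variable {K : Type} [Field K] {n : ℕ}

/-- Laurent monomial in a field. -/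
noncomputable def monK (b : Fin n → ℤ) (x : Fin n → K) : K := ∏ j, x j ^ b j

lemma monK_ne {b : Fin n → ℤ} {x : Fin n → K} (hx : ∀ j, x j ≠ 0) : monK b x ≠ 0 :=
  Finset.prod_ne_zero_iff.2 fun j _ => zpow_ne_zero _ (hx j)

lemma monK_zero (x : Fin n → K) : monK 0 x = 1 := by simp [monK]

lemma monK_add {b c : Fin n → ℤ} {x : Fin n → K} (hx : ∀ j, x j ≠ 0) :
    monK (b + c) x = monK b x * monK c x := by
  simp [monK, ← Finset.prod_mul_distrib, zpow_add₀ (hx _)]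

lemma monK_smul (m : ℤ) {b : Fin n → ℤ} {x : Fin n → K} :
    monK (m • b) x = monK b x ^ m := by
  simp only [monK, Pi.smul_apply, smul_eq_mul, ← Finset.prod_zpow]
  refine Finset.prod_congr rfl fun j _ => ?_
  rw [mul_comm, zpow_mul]

lemma monK_sub {b c : Fin n → ℤ} {x : Fin n → K} (hx : ∀ j, x j ≠ 0) :
    monK (b - c) x = monK b x / monK c x := by
  simp [monK, ← Finset.prod_div_distrib, zpow_sub₀ (hx _)]

lemma monK_mul {b : Fin n → ℤ} {x y : Fin n → K} :
    monK b (fun j => x j * y j) = monK b x * monK b y := by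
  simp [monK, ← Finset.prod_mul_distrib, mul_zpow]

lemma monK_single (k : Fin n) (x : Fin n → K) : monK (Pi.single k 1) x = x k := by
  rw [monK, Finset.prod_eq_single k] <;> simp +contextual

lemma monK_mem {F : Subfield K} {b : Fin n → ℤ} {x : Fin n → K} (hx : ∀ j, x j ∈ F) :
    monK b x ∈ F := prod_mem fun j _ => zpow_mem (hx j) _

variable [Algebra ℂ K]

/-- exponents whose monomial at `t` is in a subfield -/
def expIn (F : Subfield K) (t : Fin n → K) (ht : ∀ j, t j ≠ 0) : Submodule ℤ (Fin n → ℤ) where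
  carrier := {b | monK b t ∈ F}
  add_mem' := by intro a b ha hb; simp only [Set.mem_ofPred_eq] at *; rw [monK_add ht]; exact mul_mem ha hb
  zero_mem' := by simp [monK_zero]
  smul_mem' := by intro m b hb; simp only [Set.mem_ofPred_eq] at *; rw [monK_smul]; exact zpow_mem hb _

/-- exponents whose monomial at `t` is one -/
def expOne (t : Fin n → K) (ht : ∀ j, t j ≠ 0) : Submodule ℤ (Fin n → ℤ) where
  carrier := {b | monK b t = 1}
  add_mem' := by intro a b ha hb; simp only [Set.mem_ofPred_eq] at *; rw [monK_add ht, ha, hb, one_mul]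
  zero_mem' := by simp [monK_zero]
  smul_mem' := by intro m b hb; simp only [Set.mem_ofPred_eq] at *; rw [monK_smul, hb, one_zpow]

variable (A : Fin n → Finset (Fin n → ℤ))

lemma nonempty_of_red_irr (hred : IsReducedTuple A) (hirr : IsIrreducibleTuple A) (i : Fin n) :
    (A i).Nonempty := by
  by_contra hne
  rw [Finset.not_nonempty_iff_eq_empty] at hne
  by_cases hn : n = 1
  · subst hn
    apply hred
    refine ⟨⊥, ?_, ?_⟩
    · exact bot_ne_top
    · intro j
      have : j = i := Subsingleton.elim _ _
      subst this
      exact ⟨0, by simp [hne]⟩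
  · apply hirr
    refine ⟨{i}, ⊥, by simp, ?_, by simp, ?_⟩
    · have := i.pos; simp; omega
    · intro j hj
      rw [Finset.mem_singleton] at hj
      subst hj
      exact ⟨0, by simp [hne]⟩

/-- there are few coordinates generating all others modulo a lattice -/
lemma exists_coords (L : Submodule ℤ (Fin n → ℤ)) :
    ∃ J : Finset (Fin n), J.card + Module.finrank ℤ L ≤ n ∧
      ∀ k, ∃ m : ℤ, m ≠ 0 ∧ m • (Pi.single k 1 : Fin n → ℤ) ∈
        L ⊔ Submodule.span ℤ ((fun j => (Pi.single j 1 : Fin n → ℤ)) '' (J : Set (Fin n))) := by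
  classical
  let v : Fin n → ((Fin n → ℤ) ⧸ L) := fun j => L.mkQ (Pi.single j 1)
  obtain ⟨I, hI, hmax⟩ := exists_maximal_linearIndepOn ℤ v
  refine ⟨I.toFinset, ?_, ?_⟩
  · have h1 : I.toFinset.card ≤ Module.finrank ℤ ((Fin n → ℤ) ⧸ L) := by
      have := LinearIndependent.fintype_card_le_finrank hI
      rwa [← Set.toFinset_card] at this
    have h2 := Submodule.finrank_quotient_add_finrank L
    rw [Module.finrank_fin_fun] at h2
    omega
  · intro k
    rw [Set.coe_toFinset]
    have key : ∃ m : ℤ, m ≠ 0 ∧ m • v k ∈ Submodule.span ℤ (v '' I) := by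
      by_cases hk : k ∈ I
      · exact ⟨1, one_ne_zero, by rw [one_smul]; exact Submodule.subset_span ⟨k, hk, rfl⟩⟩
      · exact hmax k hk
    obtain ⟨m, hm, hmem⟩ := key
    refine ⟨m, hm, ?_⟩
    have : v '' I = L.mkQ '' ((fun j => (Pi.single j 1 : Fin n → ℤ)) '' I) := by
      rw [Set.image_image]
    rw [this, Submodule.span_image] at hmem
    have h2 : m • (Pi.single k 1 : Fin n → ℤ) ∈ Submodule.comap L.mkQ (Submodule.map L.mkQ
      (Submodule.span ℤ ((fun j => (Pi.single j 1 : Fin n → ℤ)) '' I))) := by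
      rw [Submodule.mem_comap, map_smul]; exact hmem
    rwa [Submodule.comap_map_mkQ] at h2

/-- polynomial relation among the coordinates of roots. -/
lemma not_indep_root (hA : ∀ i, (A i).Nonempty) (x : Fin n → K) (hx : ∀ j, x j ≠ 0)
    (c : CIdx A → K) (hc : ∀ i, ∑ a ∈ (A i).attach, c ⟨i, a⟩ * monK a.1 x = 0)
    (z : K) (hz : z ∈ acl (Set.range x)) :
    ¬ AlgebraicIndependent ℂ (fun o : Option (CIdx A) => o.elim z c) := by
  classical
  choose a0 ha0 using hA
  let r : Fin n → CIdx A := fun i => ⟨i, a0 i, ha0 i⟩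
  have hr : Function.Injective r := fun i j h => congrArg Sigma.fst h
  let κ := Fin n ⊕ {p : CIdx A // p ∉ Finset.univ.image r}
  let G : κ → K := Sum.elim x (fun p => c p.1)
  refine not_indep_of_acl G _ ?_ ?_
  · have h1 : (Finset.univ.image r).card = n := by
      rw [Finset.card_image_of_injective _ hr]; simp
    have h2 : Fintype.card {p : CIdx A // p ∉ Finset.univ.image r} =
      Fintype.card (CIdx A) - n := by
      rw [Fintype.card_subtype_compl, Fintype.card_coe, h1]
    have h3 : n ≤ Fintype.card (CIdx A) := by
      exact h1.symm.le.trans (Finset.card_le_univ _)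
    rw [Fintype.card_sum, Fintype.card_option, h2, Fintype.card_fin]
    omega
  · have hxm : ∀ j, x j ∈ acl (Set.range G) := fun j => mem_acl_of_mem ⟨Sum.inl j, rfl⟩
    have hcm : ∀ p, p ∉ Finset.univ.image r → c p ∈ acl (Set.range G) :=
      fun p hp => mem_acl_of_mem ⟨Sum.inr ⟨p, hp⟩, rfl⟩
    have hcr : ∀ i, c (r i) ∈ acl (Set.range G) := by
      intro i
      have h1 := hc i
      rw [← Finset.add_sum_erase _ _ (Finset.mem_attach (A i) ⟨a0 i, ha0 i⟩)] at h1
      have h2 : c (r i) * monK (a0 i) x ∈ acl (Set.range G) := by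
        rw [show c (r i) * monK (a0 i) x = _ from eq_neg_of_add_eq_zero_left h1]
        refine neg_mem (sum_mem fun a ha => mul_mem (hcm _ ?_) (monK_mem hxm))
        intro hmem
        obtain ⟨k, -, hk⟩ := Finset.mem_image.1 hmem
        have hki : k = i := congrArg Sigma.fst hk
        subst hki
        apply (Finset.mem_erase.1 ha).1
        exact (eq_of_heq (Sigma.mk.inj hk).2).symm
      have := div_mem h2 (monK_mem (b := a0 i) hxm)
      rwa [mul_div_cancel_right₀ _ (monK_ne hx)] at this
    rintro (_ | p)
    · have : acl (Set.range x) ≤ acl (Set.range G) := by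
        intro w hw
        refine IsAlgebraic.adjoin_of_forall_isAlgebraic (s := Set.range x) ?_ hw
        rintro y ⟨⟨j, rfl⟩, -⟩
        exact hxm j
      exact this hz
    · by_cases hp : p ∈ Finset.univ.image r
      · obtain ⟨k, -, rfl⟩ := Finset.mem_image.1 hp
        exact hcr k
      · exact hcm p hp

end gen

section gen
variable {K : Type} [Field K] {n : ℕ} [Algebra ℂ K]
variable (A : Fin n → Finset (Fin n → ℤ))

/-- a generic system has no two distinct roots which some support does not separate. -/
lemma not_indep_bad (hred : IsReducedTuple A) (hirr : IsIrreducibleTuple A)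
    (x y : Fin n → K) (hx : ∀ j, x j ≠ 0) (hy : ∀ j, y j ≠ 0) (hxy : x ≠ y)
    (c : CIdx A → K) (hcx : ∀ i, ∑ a ∈ (A i).attach, c ⟨i, a⟩ * monK a.1 x = 0)
    (hcy : ∀ i, ∑ a ∈ (A i).attach, c ⟨i, a⟩ * monK a.1 y = 0)
    (hbad : ∃ i, ∀ a ∈ A i, ∀ b ∈ A i, monK a x * monK b y = monK b x * monK a y) :
    ¬ AlgebraicIndependent ℂ c := by
  classical
  have hA := nonempty_of_red_irr A hred hirr
  choose a0 ha0 using hA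
  let t : Fin n → K := fun j => x j / y j
  have ht : ∀ j, t j ≠ 0 := fun j => div_ne_zero (hx j) (hy j)
  have hxt : ∀ b, monK b x = monK b t * monK b y := by
    intro b
    rw [← monK_mul]
    congr 1
    ext j
    simp [t, hy j]
  let I : Finset (Fin n) := Finset.univ.filter fun i => ∀ a ∈ A i, monK a t = monK (a0 i) t
  have hI0 : 0 < I.card := by
    obtain ⟨i, hi⟩ := hbad
    refine Finset.card_pos.2 ⟨i, Finset.mem_filter.2 ⟨Finset.mem_univ _, fun a ha => ?_⟩⟩
    have := hi a ha (a0 i) (ha0 i)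
    rw [hxt, hxt] at this
    have h1 := monK_ne (b := a) hy
    have h2 := monK_ne (b := a0 i) hy
    apply mul_right_cancel₀ (mul_ne_zero h1 h2)
    linear_combination this
  have hmemI : ∀ i ∈ I, ∀ a ∈ A i, monK (a - a0 i) t = 1 := by
    intro i hi a ha
    rw [monK_sub ht, (Finset.mem_filter.1 hi).2 a ha, div_self (monK_ne ht)]
  have hIn : I.card < n := by
    by_contra hcon
    have hcard : I.card = Fintype.card (Fin n) := by
      have := Finset.card_le_univ I
      rw [Fintype.card_fin] at *
      omega
    have hIu : I = Finset.univ := (Finset.card_eq_iff_eq_univ I).1 hcard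
    apply hred
    refine ⟨expOne t ht, ?_, fun i => ⟨a0 i, fun a ha => hmemI i (hIu ▸ Finset.mem_univ i) a ha⟩⟩
    intro htop
    apply hxy
    ext j
    have : (Pi.single j 1 : Fin n → ℤ) ∈ expOne t ht := htop ▸ Submodule.mem_top
    have h1 : monK (Pi.single j 1) t = 1 := this
    rw [monK_single] at h1
    exact (div_eq_one_iff_eq (hy j)).1 h1
  let L : Submodule ℤ (Fin n → ℤ) :=
    Submodule.span ℤ {d | ∃ i ∈ I, ∃ a ∈ A i, d = a - a0 i}
  have hL1 : L ≤ expOne t ht := by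
    refine Submodule.span_le.2 ?_
    rintro _ ⟨i, hi, a, ha, rfl⟩
    exact hmemI i hi a ha
  have hLrank : I.card < Module.finrank ℤ L := by
    by_contra hcon
    apply hirr
    refine ⟨I, L, hI0, hIn, not_lt.1 hcon, fun i hi => ⟨a0 i, fun a ha => ?_⟩⟩
    exact Submodule.subset_span ⟨i, hi, a, ha, rfl⟩
  obtain ⟨J, hJcard, hJ⟩ := exists_coords L
  have hb0 : ∀ i, ∃ b ∈ A i, i ∉ I → monK b t ≠ monK (a0 i) t := by
    intro i
    by_cases hi : i ∈ I
    · exact ⟨a0 i, ha0 i, fun h => absurd hi h⟩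
    · have : ¬ ∀ a ∈ A i, monK a t = monK (a0 i) t := fun h =>
        hi (Finset.mem_filter.2 ⟨Finset.mem_univ _, h⟩)
      push Not at this
      obtain ⟨b, hb, hne⟩ := this
      exact ⟨b, hb, fun _ => hne⟩
  choose b0 hb0 hb0t using hb0
  let r : Fin n → CIdx A := fun i => ⟨i, a0 i, ha0 i⟩
  let r' : Fin n → CIdx A := fun i => ⟨i, b0 i, hb0 i⟩
  have hr : Function.Injective r := fun i j h => congrArg Sigma.fst h
  have hr' : Function.Injective r' := fun i j h => congrArg Sigma.fst h
  let R : Finset (CIdx A) := Finset.univ.image r ∪ Iᶜ.image r'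
  have hRcard : R.card = n + (n - I.card) := by
    rw [Finset.card_union_of_disjoint, Finset.card_image_of_injective _ hr,
      Finset.card_image_of_injective _ hr', Finset.card_compl, Finset.card_univ, Fintype.card_fin]
    rw [Finset.disjoint_left]
    intro p hp hp'
    obtain ⟨k, -, rfl⟩ := Finset.mem_image.1 hp
    obtain ⟨k', hk', hkk⟩ := Finset.mem_image.1 hp'
    have hki : k' = k := congrArg Sigma.fst hkk
    subst hki
    have h2 : b0 k' = a0 k' := congrArg Subtype.val (eq_of_heq (Sigma.mk.inj hkk).2)
    exact hb0t k' (Finset.mem_compl.1 hk') (by rw [h2])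
  let κ := (J ⊕ Fin n) ⊕ {p : CIdx A // p ∉ R}
  let G : κ → K := Sum.elim (Sum.elim (fun j => t j.1) y) (fun p => c p.1)
  refine not_indep_of_acl G _ ?_ ?_
  · have h2 : Fintype.card {p : CIdx A // p ∉ R} = Fintype.card (CIdx A) - R.card := by
      rw [Fintype.card_subtype_compl, Fintype.card_coe]
    have h3 : R.card ≤ Fintype.card (CIdx A) := Finset.card_le_univ _
    rw [Fintype.card_sum, Fintype.card_sum, h2, Fintype.card_fin, Fintype.card_coe]
    omega
  · set F := acl (Set.range G) with hF
    have hym : ∀ j, y j ∈ F := fun j => mem_acl_of_mem ⟨Sum.inl (Sum.inr j), rfl⟩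
    have htJ : ∀ j ∈ J, t j ∈ F := fun j hj => mem_acl_of_mem ⟨Sum.inl (Sum.inl ⟨j, hj⟩), rfl⟩
    have hcm : ∀ p, p ∉ R → c p ∈ F := fun p hp => mem_acl_of_mem ⟨Sum.inr ⟨p, hp⟩, rfl⟩
    have htm : ∀ j, t j ∈ F := by
      intro k
      obtain ⟨m, hm, hmem⟩ := hJ k
      have hle : L ⊔ Submodule.span ℤ ((fun j => (Pi.single j 1 : Fin n → ℤ)) '' (J : Set (Fin n)))
          ≤ expIn F t ht := by
        refine sup_le (hL1.trans ?_) (Submodule.span_le.2 ?_)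
        · intro b hb
          have hb1 : monK b t = 1 := hb
          change monK b t ∈ F
          rw [hb1]; exact one_mem _
        · rintro _ ⟨j, hj, rfl⟩
          change monK _ t ∈ F
          rw [monK_single]
          exact htJ j hj
      have h1 : monK (m • (Pi.single k 1 : Fin n → ℤ)) t ∈ F := hle hmem
      rw [monK_smul, monK_single] at h1
      exact mem_acl_of_zpow hm h1
    have hxm : ∀ j, x j ∈ F := by
      intro j
      have := mul_mem (htm j) (hym j)
      rwa [div_mul_cancel₀ _ (hy j)] at this
    have hRmem : ∀ p : CIdx A, p ∈ R → p = r p.1 ∨ (p.1 ∉ I ∧ p = r' p.1) := by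
      intro p hp
      rcases Finset.mem_union.1 hp with h | h
      · obtain ⟨k, -, rfl⟩ := Finset.mem_image.1 h
        exact Or.inl rfl
      · obtain ⟨k, hk, rfl⟩ := Finset.mem_image.1 h
        exact Or.inr ⟨Finset.mem_compl.1 hk, rfl⟩
    have hcI : ∀ i ∈ I, c (r i) ∈ F := by
      intro i hi
      have h1 := hcy i
      rw [← Finset.add_sum_erase _ _ (Finset.mem_attach (A i) ⟨a0 i, ha0 i⟩)] at h1
      have h2 : c (r i) * monK (a0 i) y ∈ F := by
        rw [show c (r i) * monK (a0 i) y = _ from eq_neg_of_add_eq_zero_left h1]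
        refine neg_mem (sum_mem fun a ha => mul_mem (hcm _ ?_) (monK_mem hym))
        intro hmem
        rcases hRmem _ hmem with h | h
        · exact (Finset.mem_erase.1 ha).1 (eq_of_heq (Sigma.mk.inj h).2)
        · exact h.1 hi
      have := div_mem h2 (monK_mem (b := a0 i) hym)
      rwa [mul_div_cancel_right₀ _ (monK_ne hy)] at this
    have hcII : ∀ i, i ∉ I → c (r i) ∈ F ∧ c (r' i) ∈ F := by
      intro i hi
      have hne : b0 i ≠ a0 i := fun h => hb0t i hi (by rw [h])
      have hmb : (⟨b0 i, hb0 i⟩ : {a // a ∈ A i}) ∈ (A i).attach.erase ⟨a0 i, ha0 i⟩ :=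
        Finset.mem_erase.2 ⟨fun h => hne (congrArg Subtype.val h), Finset.mem_attach _ _⟩
      have key : ∀ w : Fin n → K, (∀ j, w j ∈ F) →
          ∑ a ∈ (A i).attach, c ⟨i, a⟩ * monK a.1 w = 0 →
          c (r i) * monK (a0 i) w + c (r' i) * monK (b0 i) w ∈ F := by
        intro w hw h1
        rw [← Finset.add_sum_erase _ _ (Finset.mem_attach (A i) ⟨a0 i, ha0 i⟩),
          ← Finset.add_sum_erase _ _ hmb, ← add_assoc] at h1
        rw [show c (r i) * monK (a0 i) w + c (r' i) * monK (b0 i) w = _ from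
          eq_neg_of_add_eq_zero_left h1]
        refine neg_mem (sum_mem fun a ha => mul_mem (hcm _ ?_) (monK_mem hw))
        intro hmem
        rw [Finset.mem_erase, Finset.mem_erase] at ha
        rcases hRmem _ hmem with h | h
        · exact ha.2.1 (eq_of_heq (Sigma.mk.inj h).2)
        · exact ha.1 (eq_of_heq (Sigma.mk.inj h.2).2)
      have kx := key x hxm (hcx i)
      have ky := key y hym (hcy i)
      have hdet : monK (a0 i) x * monK (b0 i) y - monK (b0 i) x * monK (a0 i) y ≠ 0 := by
        rw [hxt, hxt]
        have : (monK (a0 i) t - monK (b0 i) t) * (monK (a0 i) y * monK (b0 i) y) ≠ 0 :=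
          mul_ne_zero (sub_ne_zero.2 (hb0t i hi).symm) (mul_ne_zero (monK_ne hy) (monK_ne hy))
        intro h
        apply this
        linear_combination h
      have mx : ∀ b, monK b x ∈ F := fun b => monK_mem hxm
      have my : ∀ b, monK b y ∈ F := fun b => monK_mem hym
      have hdm := sub_mem (mul_mem (mx (a0 i)) (my (b0 i))) (mul_mem (mx (b0 i)) (my (a0 i)))
      constructor
      · have h1 := div_mem (sub_mem (mul_mem kx (my (b0 i))) (mul_mem ky (mx (b0 i)))) hdm
        convert! h1 using 1
        rw [eq_div_iff hdet]; ring
      · have h1 := div_mem (sub_mem (mul_mem ky (mx (a0 i))) (mul_mem kx (my (a0 i)))) hdm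
        convert! h1 using 1
        rw [eq_div_iff hdet]; ring
    intro p
    by_cases hp : p ∈ R
    · rcases hRmem p hp with h | ⟨h1, h2⟩
      · rw [h]
        by_cases hi : p.1 ∈ I
        · exact hcI _ hi
        · exact (hcII _ hi).1
      · rw [h2]; exact (hcII _ h1).2
    · exact hcm p hp

end gen

section
variable {n : ℕ} (A : Fin n → Finset (Fin n → ℤ))

lemma evalAt_def' (c : Coeff A) (i : Fin n) (x : Torus n) :
    evalAt A c i x = ∑ a ∈ (A i).attach, c ⟨i, a⟩ * mono a.1 x := rfl

/-- transfer of a torus valued function to a point of a field -/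
noncomputable def psi {S K : Type} [Field K] [Algebra ℂ K] (Φ : (S → ℂ) →ₐ[ℂ] K) :
    (S → ℂˣ) →* Kˣ :=
  (Units.map (Φ : (S → ℂ) →* K)).comp (MulEquiv.piUnits (M := fun _ : S => ℂ)).symm.toMonoidHom

lemma psi_val {S K : Type} [Field K] [Algebra ℂ K] (Φ : (S → ℂ) →ₐ[ℂ] K) (u : S → ℂˣ) :
    (psi Φ u : K) = Φ (fun s => (u s : ℂ)) := rfl

lemma Phi_mono {S K : Type} [Field K] [Algebra ℂ K] (Φ : (S → ℂ) →ₐ[ℂ] K) (x : S → Torus n)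
    (a : Fin n → ℤ) :
    Φ (fun s => mono a (x s)) = monK a (fun j => Φ (fun s => (x s j : ℂ))) := by
  have h1 : (fun s => mono a (x s)) = fun s => ((∏ j, (fun s => x s j) ^ a j : S → ℂˣ) s : ℂ) := by
    ext s
    simp [mono, Finset.prod_apply]
  rw [h1, ← psi_val, map_prod, monK]
  simp only [map_zpow, Units.coe_prod, Units.val_zpow_eq_zpow_val, psi_val]

lemma Phi_root {S K : Type} [Field K] [Algebra ℂ K] (Φ : (S → ℂ) →ₐ[ℂ] K) (x : S → Torus n)
    (c : S → Coeff A) (hroot : ∀ s, IsRoot A (c s) (x s)) (i : Fin n) :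
    ∑ a ∈ (A i).attach, Φ (fun s => c s ⟨i, a⟩) * monK a.1 (fun j => Φ (fun s => (x s j : ℂ)))
      = 0 := by
  simp only [← Phi_mono, ← map_mul, ← map_sum]
  refine (congrArg Φ (funext fun s => ?_)).trans (map_zero Φ)
  have := hroot s i
  rw [evalAt_def'] at this
  simpa [Finset.sum_apply] using this

lemma exists_Qbad (hred : IsReducedTuple A) (hirr : IsIrreducibleTuple A) :
    ∃ Q : MvPolynomial (CIdx A) ℂ, Q ≠ 0 ∧ ∀ (c : Coeff A) (x y : Torus n),
      MvPolynomial.eval c Q ≠ 0 → IsRoot A c x → IsRoot A c y → x ≠ y →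
      ∀ i, ∃ a ∈ A i, ∃ b ∈ A i, mono a x * mono b y ≠ mono b x * mono a y := by
  classical
  let S := {s : Torus n × Torus n × Coeff A // IsRoot A s.2.2 s.1 ∧ IsRoot A s.2.2 s.2.1 ∧
    s.1 ≠ s.2.1 ∧ ∃ i, ∀ a ∈ A i, ∀ b ∈ A i,
      mono a s.1 * mono b s.2.1 = mono b s.1 * mono a s.2.1}
  obtain ⟨Q, hQ, hQ0⟩ := exists_poly_of_not_indep (S := S) (fun p s => s.1.2.2 p) (by
    intro K _ _ Φ
    refine not_indep_bad A hred hirr (fun j => Φ (fun s => (s.1.1 j : ℂ)))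
      (fun j => Φ (fun s => (s.1.2.1 j : ℂ))) ?_ ?_ ?_ _ ?_ ?_ ?_
    · intro j; exact (psi Φ (fun s => s.1.1 j)).ne_zero
    · intro j; exact (psi Φ (fun s => s.1.2.1 j)).ne_zero
    · intro heq
      have hu : ∀ s : S, ∃ u : Fin n → ℂ, ∑ j, u j * ((s.1.1 j : ℂ) - (s.1.2.1 j : ℂ)) = 1 := by
        intro s
        have := s.2.2.2.1
        obtain ⟨j, hj⟩ := Function.ne_iff.1 this
        refine ⟨Pi.single j ((s.1.1 j : ℂ) - (s.1.2.1 j : ℂ))⁻¹, ?_⟩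
        rw [Finset.sum_eq_single j]
        · rw [Pi.single_eq_same, inv_mul_cancel₀]
          exact sub_ne_zero.2 fun h => hj (Units.ext h)
        · intro k _ hk; simp [hk]
        · simp
      choose u hu using hu
      have h1 : Φ (fun s => ∑ j, u s j * ((s.1.1 j : ℂ) - (s.1.2.1 j : ℂ))) = 1 := by
        rw [show (fun s => ∑ j, u s j * ((s.1.1 j : ℂ) - (s.1.2.1 j : ℂ))) = 1 from funext hu,
          map_one]
      have h2 : (fun s : S => ∑ j, u s j * ((s.1.1 j : ℂ) - (s.1.2.1 j : ℂ))) =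
          ∑ j, (fun s => u s j) * ((fun s => (s.1.1 j : ℂ)) - fun s => (s.1.2.1 j : ℂ)) := by
        ext s; simp [Finset.sum_apply]
      rw [h2, map_sum] at h1
      apply zero_ne_one (α := K)
      rw [← h1]
      symm
      refine Finset.sum_eq_zero fun j _ => ?_
      rw [map_mul, map_sub, show Φ (fun s => (s.1.1 j : ℂ)) = _ from congrFun heq j, sub_self,
        mul_zero]
    · exact Phi_root A Φ (fun s => s.1.1) (fun s => s.1.2.2) fun s => s.2.1
    · exact Phi_root A Φ (fun s => s.1.2.1) (fun s => s.1.2.2) fun s => s.2.2.1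
    · by_contra hcon
      push Not at hcon
      choose a ha b hb hab using hcon
      have h1 : ∏ i, Φ (fun s => mono (a i) s.1.1 * mono (b i) s.1.2.1 -
          mono (b i) s.1.1 * mono (a i) s.1.2.1) ≠ 0 := by
        refine Finset.prod_ne_zero_iff.2 fun i _ => ?_
        have h2 := hab i
        rw [← Phi_mono Φ (fun s => s.1.1), ← Phi_mono Φ (fun s => s.1.1),
          ← Phi_mono Φ (fun s => s.1.2.1), ← Phi_mono Φ (fun s => s.1.2.1), ← map_mul,
          ← map_mul, ← sub_ne_zero, ← map_sub] at h2
        exact h2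
      apply h1
      rw [← map_prod]
      refine (congrArg Φ (funext fun s => ?_)).trans (map_zero Φ)
      obtain ⟨i, hi⟩ := s.2.2.2.2
      rw [Finset.prod_apply]
      refine Finset.prod_eq_zero (Finset.mem_univ i) ?_
      rw [hi _ (ha i) _ (hb i), sub_self])
  refine ⟨Q, hQ, fun c x y hc hx hy hxy => ?_⟩
  by_contra hcon
  push Not at hcon
  exact hc (hQ0 ⟨(x, y, c), hx, hy, hxy, hcon⟩)

lemma exists_P (hA : ∀ i, (A i).Nonempty) (j : Fin n) (e : ℤ) :
    ∃ P : Polynomial (MvPolynomial (CIdx A) ℂ), P ≠ 0 ∧ ∀ (c : Coeff A) (x : Torus n),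
      IsRoot A c x → (P.map (MvPolynomial.eval c)).eval ((x j : ℂ) ^ e) = 0 := by
  let S := {s : Torus n × Coeff A // IsRoot A s.2 s.1}
  obtain ⟨Q, hQ, hQ0⟩ := exists_poly_of_not_indep (S := S) (ι := Option (CIdx A))
    (fun o s => o.elim ((s.1.1 j : ℂ) ^ e) s.1.2) (by
    intro K _ _ Φ
    have := not_indep_root A hA (fun j => Φ (fun s => (s.1.1 j : ℂ)))
      (fun j => (psi Φ (fun s => s.1.1 j)).ne_zero) (fun p => Φ (fun s => s.1.2 p))
      (Phi_root A Φ (fun s => s.1.1) (fun s => s.1.2) fun s => s.2)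
      (Φ (fun s => (s.1.1 j : ℂ) ^ e)) (by
        have h1 : Φ (fun s => (s.1.1 j : ℂ) ^ e) = Φ (fun s => (s.1.1 j : ℂ)) ^ e := by
          have : (fun s : S => (s.1.1 j : ℂ) ^ e) = fun s => (((fun s => s.1.1 j) ^ e : S → ℂˣ) s : ℂ) := by
            ext s; simp
          rw [this, ← psi_val, map_zpow, Units.val_zpow_eq_zpow_val, psi_val]
        rw [h1]
        exact zpow_mem (mem_acl_of_mem (Set.mem_range_self (f := fun j => Φ (fun s : S => (s.1.1 j : ℂ))) j)) e)
    refine fun h => this ?_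
    have heq : (fun o : Option (CIdx A) => o.elim (Φ fun s : S => (s.1.1 j : ℂ) ^ e)
        (fun p => Φ fun s => s.1.2 p)) =
        fun o : Option (CIdx A) => Φ fun s : S => o.elim ((s.1.1 j : ℂ) ^ e) s.1.2 := by
      funext o
      cases o <;> rfl
    rw [heq]
    exact h)
  refine ⟨MvPolynomial.optionEquivLeft ℂ _ Q, by simpa using hQ, fun c x hx => ?_⟩
  have key : ∀ T : ℂ, ((Polynomial.evalRingHom T).comp
      (Polynomial.mapRingHom (MvPolynomial.eval c))).comp
      (MvPolynomial.optionEquivLeft ℂ (CIdx A)).toRingEquiv.toRingHom =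
      MvPolynomial.eval (fun o : Option (CIdx A) => o.elim T c) := by
    intro T
    refine MvPolynomial.ringHom_ext (fun r => ?_) (fun o => ?_)
    · simp
    · cases o <;> simp
  have h1 := hQ0 ⟨(x, c), hx⟩
  have h2 := congrArg (fun g => g Q) (key ((x j : ℂ) ^ e))
  refine Eq.trans ?_ (h2.trans ?_)
  · simp
  · exact h1

end

open Polynomial in
lemma clear_den {R K : Type} [CommRing R] [IsDomain R] [Field K] [Algebra R K]
    [IsFractionRing R K] (p : K[X]) :
    ∃ (b : R) (q : R[X]), b ≠ 0 ∧ q.map (algebraMap R K) = C (algebraMap R K b) * p := by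
  obtain ⟨b, hbM, hb⟩ := IsLocalization.integerNormalization_spec (nonZeroDivisors R) p
  refine ⟨b, _, nonZeroDivisors.ne_zero hbM, hb.trans ?_⟩
  ext k
  rw [Polynomial.coeff_C_mul, Polynomial.coeff_smul, Algebra.smul_def]

open Polynomial in
lemma exists_sep {ι : Type} (P : (MvPolynomial ι ℂ)[X]) (hP : P ≠ 0) :
    ∃ (q : MvPolynomial ι ℂ) (r : (MvPolynomial ι ℂ)[X]), q ≠ 0 ∧
      ∀ (c : ι → ℂ) (T : ℂ), MvPolynomial.eval c q ≠ 0 →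
        (P.map (MvPolynomial.eval c)).eval T = 0 →
        (r.map (MvPolynomial.eval c)).eval T = 0 ∧
        (r.map (MvPolynomial.eval c)).derivative.eval T ≠ 0 := by
  let R := MvPolynomial ι ℂ
  let K := FractionRing R
  have hinj : Function.Injective (Polynomial.map (algebraMap R K)) :=
    Polynomial.map_injective _ (IsFractionRing.injective R K)
  have hPK : P.map (algebraMap R K) ≠ 0 := fun h => hP (hinj (by rw [h, Polynomial.map_zero]))
  obtain ⟨y, m, hsq, -, w, hw⟩ :=
    exists_squarefree_dvd_pow_of_ne_zero hPK
  haveI : CharZero K := charZero_of_injective_algebraMap (IsFractionRing.injective R K)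
  have hsep : y.Separable := PerfectField.separable_iff_squarefree.2 hsq
  obtain ⟨u, v, huv⟩ := hsep
  obtain ⟨b1, r, hb1, hr⟩ := clear_den (R := R) y
  obtain ⟨b2, W, hb2, hW⟩ := clear_den (R := R) w
  obtain ⟨b3, U, hb3, hU⟩ := clear_den (R := R) u
  obtain ⟨b4, V, hb4, hV⟩ := clear_den (R := R) v
  have e1 : C b2 * r ^ m = C (b1 ^ m) * P * W := by
    apply hinj
    simp only [Polynomial.map_mul, Polynomial.map_pow, Polynomial.map_C, hr, hW, mul_pow, hw,
      map_pow]
    ring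
  have e2 : C b4 * U * r + C b3 * V * derivative r = C (b1 * b3 * b4) := by
    apply hinj
    simp only [Polynomial.map_mul, Polynomial.map_add, Polynomial.map_C, ← derivative_map, hr, hU,
      hV, derivative_C_mul, map_mul]
    linear_combination (C ((algebraMap R K) b1) * C ((algebraMap R K) b3) * C ((algebraMap R K) b4)) * huv
  refine ⟨b1 * b2 * b3 * b4, r, by simp [hb1, hb2, hb3, hb4], fun c T hq hP0 => ?_⟩
  simp only [map_mul, mul_ne_zero_iff] at hq
  have E1 := congrArg (fun p => (p.map (MvPolynomial.eval c)).eval T) e1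
  have E2 := congrArg (fun p => (p.map (MvPolynomial.eval c)).eval T) e2
  simp only [Polynomial.map_mul, Polynomial.map_add, Polynomial.map_pow, Polynomial.map_C, eval_mul,
    eval_add, eval_pow, eval_C, hP0, mul_zero, zero_mul, map_mul] at E1 E2
  have hr0 : (r.map (MvPolynomial.eval c)).eval T = 0 := by
    have := (mul_eq_zero.1 E1).resolve_left hq.1.1.2
    exact eq_zero_of_pow_eq_zero this
  refine ⟨hr0, fun h => ?_⟩
  rw [derivative_map] at h
  rw [hr0, h] at E2
  have : (MvPolynomial.eval c) b1 * (MvPolynomial.eval c) b3 * (MvPolynomial.eval c) b4 ≠ 0 := by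
    simp [hq]
  apply this
  rw [← E2]; ring

open Polynomial in
lemma exists_bound {ι : Type} (P : (MvPolynomial ι ℂ)[X]) :
    ∃ M : (ι → ℂ) → ℝ, ContinuousOn M {c | MvPolynomial.eval c P.leadingCoeff ≠ 0} ∧
      ∀ c T, MvPolynomial.eval c P.leadingCoeff ≠ 0 →
        (P.map (MvPolynomial.eval c)).eval T = 0 → ‖T‖ ≤ M c := by
  refine ⟨fun c => (∑ k ∈ Finset.range P.natDegree, ‖MvPolynomial.eval c (P.coeff k)‖) /
    ‖MvPolynomial.eval c P.leadingCoeff‖ + 1, ?_, ?_⟩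
  · refine ContinuousOn.add (ContinuousOn.div ?_ ?_ fun c hc => norm_ne_zero_iff.2 hc)
      continuousOn_const
    · exact (continuous_finsetSum _ fun k _ =>
        (MvPolynomial.continuous_eval (P.coeff k)).norm).continuousOn
    · exact (MvPolynomial.continuous_eval _).norm.continuousOn
  · intro c T hc hT
    have hne : P.map (MvPolynomial.eval c) ≠ 0 := fun h => hc (by
      have := congrArg (fun p => p.coeff P.natDegree) h
      simpa using this)
    have h1 := Polynomial.IsRoot.norm_lt_cauchyBound hne (a := T) hT
    have h2 : (‖T‖ : ℝ) ≤ cauchyBound (P.map (MvPolynomial.eval c)) := by exact_mod_cast h1.le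
    refine h2.trans ?_
    rw [cauchyBound, Polynomial.natDegree_map_of_leadingCoeff_ne_zero _ hc,
      Polynomial.leadingCoeff_map_of_leadingCoeff_ne_zero _ hc]
    push_cast
    gcongr
    have : Finset.sup (Finset.range P.natDegree)
        (fun k => ‖(P.map (MvPolynomial.eval c)).coeff k‖₊) ≤
        ∑ k ∈ Finset.range P.natDegree, ‖MvPolynomial.eval c (P.coeff k)‖₊ := by
      refine Finset.sup_le fun k hk => ?_
      rw [Polynomial.coeff_map]
      exact Finset.single_le_sum (f := fun k => ‖MvPolynomial.eval c (P.coeff k)‖₊)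
        (fun _ _ => zero_le) hk
    have h3 := NNReal.coe_le_coe.2 this
    rw [NNReal.coe_sum] at h3
    exact h3

section
variable {n : ℕ} (A : Fin n → Finset (Fin n → ℤ))

lemma exists_Q (hred : IsReducedTuple A) (hirr : IsIrreducibleTuple A) :
    ∃ Q : MvPolynomial (CIdx A) ℂ, Q ≠ 0 ∧
      (∀ (c : Coeff A) (x y : Torus n),
        MvPolynomial.eval c Q ≠ 0 → IsRoot A c x → IsRoot A c y → x ≠ y →
        ∀ i, ∃ a ∈ A i, ∃ b ∈ A i, mono a x * mono b y ≠ mono b x * mono a y) ∧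
      (∀ j, ∃ r : Polynomial (MvPolynomial (CIdx A) ℂ), ∀ (c : Coeff A) (x : Torus n),
        MvPolynomial.eval c Q ≠ 0 → IsRoot A c x →
        (r.map (MvPolynomial.eval c)).eval (x j : ℂ) = 0 ∧
        (r.map (MvPolynomial.eval c)).derivative.eval (x j : ℂ) ≠ 0) ∧
      (∀ j, ∃ M : Coeff A → ℝ, ContinuousOn M {c | MvPolynomial.eval c Q ≠ 0} ∧
        ∀ (c : Coeff A) (x : Torus n), MvPolynomial.eval c Q ≠ 0 → IsRoot A c x →
          ‖(x j : ℂ)‖ ≤ M c ∧ ‖(x j : ℂ)⁻¹‖ ≤ M c) ∧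
      (∀ c : Coeff A, MvPolynomial.eval c Q ≠ 0 → {x | IsRoot A c x}.Finite) := by
  have hA := nonempty_of_red_irr A hred hirr
  obtain ⟨Q0, hQ0, hbad⟩ := exists_Qbad A hred hirr
  choose P hP0 hP using fun j => exists_P A hA j 1
  choose P' hP0' hP' using fun j => exists_P A hA j (-1)
  choose q r hq hr using fun j => exists_sep (P j) (hP0 j)
  let Q := Q0 * ∏ j, (q j * (P j).leadingCoeff * (P' j).leadingCoeff)
  have hQc : ∀ c : Coeff A, MvPolynomial.eval c Q ≠ 0 → MvPolynomial.eval c Q0 ≠ 0 ∧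
      ∀ j, MvPolynomial.eval c (q j) ≠ 0 ∧ MvPolynomial.eval c (P j).leadingCoeff ≠ 0 ∧
      MvPolynomial.eval c (P' j).leadingCoeff ≠ 0 := by
    intro c hc
    simp only [Q, map_mul, map_prod, mul_ne_zero_iff, Finset.prod_ne_zero_iff] at hc
    exact ⟨hc.1, fun j => ⟨(hc.2 j (Finset.mem_univ _)).1.1, (hc.2 j (Finset.mem_univ _)).1.2,
      (hc.2 j (Finset.mem_univ _)).2⟩⟩
  simp only [zpow_one, zpow_neg] at hP hP'
  refine ⟨Q, ?_, ?_, ?_, ?_, ?_⟩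
  · simp [Q, Finset.prod_ne_zero_iff, hQ0, hq, hP0, hP0']
  · exact fun c x y hc => hbad c x y (hQc c hc).1
  · exact fun j => ⟨r j, fun c x hc hx => hr j c _ ((hQc c hc).2 j).1 (hP j c x hx)⟩
  · intro j
    obtain ⟨M, hM, hMb⟩ := exists_bound (P j)
    obtain ⟨M', hM', hMb'⟩ := exists_bound (P' j)
    refine ⟨fun c => max (M c) (M' c), ?_, ?_⟩
    · refine ContinuousOn.sup (hM.mono ?_) (hM'.mono ?_)
      · exact fun c hc => ((hQc c hc).2 j).2.1
      · exact fun c hc => ((hQc c hc).2 j).2.2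
    · exact fun c x hc hx => ⟨(hMb c _ ((hQc c hc).2 j).2.1 (hP j c x hx)).trans (le_max_left _ _),
        (hMb' c _ ((hQc c hc).2 j).2.2 (hP' j c x hx)).trans (le_max_right _ _)⟩
  · intro c hc
    have hne : ∀ j, (P j).map (MvPolynomial.eval c) ≠ 0 := fun j h => ((hQc c hc).2 j).2.1 (by
      have := congrArg (fun p => p.coeff (P j).natDegree) h
      simpa using this)
    have hfin : (Set.pi Set.univ fun j =>
        {T : ℂ | ((P j).map (MvPolynomial.eval c)).eval T = 0}).Finite :=
      Set.Finite.pi fun j => (Polynomial.finite_setOfPred_isRoot (hne j))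
    refine Set.Finite.of_finite_image (f := fun (x : Torus n) j => (x j : ℂ)) (hfin.subset ?_) ?_
    · rintro _ ⟨x, hx, rfl⟩ j _
      exact hP j c x hx
    · intro x _ y _ hxy
      funext j
      exact Units.ext (congrFun hxy j)
end

section
variable {n : ℕ} (A : Fin n → Finset (Fin n → ℤ))

/-- the system as a function of coefficients and a complex vector -/
noncomputable def FF (p : Coeff A × (Fin n → ℂ)) : Fin n → ℂ :=
  fun i => ∑ a ∈ (A i).attach, p.1 ⟨i, a⟩ * monK a.1 p.2

/-- torus point as a complex vector -/
def tv (x : Torus n) : Fin n → ℂ := fun j => (x j : ℂ)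

/-- complex vector as torus point -/
noncomputable def mkT (z : Fin n → ℂ) (hz : ∀ j, z j ≠ 0) : Torus n :=
  fun j => Units.mk0 (z j) (hz j)

lemma isRoot_iff (c : Coeff A) (x : Torus n) : IsRoot A c x ↔ FF A (c, tv x) = 0 := by
  rw [funext_iff]; rfl

lemma isRoot_mkT (c : Coeff A) (z : Fin n → ℂ) (hz : ∀ j, z j ≠ 0) :
    IsRoot A c (mkT z hz) ↔ FF A (c, z) = 0 := isRoot_iff A c _

lemma analyticAt_monK (a : Fin n → ℤ) (z : Fin n → ℂ) (hz : ∀ j, z j ≠ 0) :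
    AnalyticAt ℂ (monK a : (Fin n → ℂ) → ℂ) z := by
  unfold monK
  refine Finset.analyticAt_fun_prod _ fun j _ => ?_
  exact AnalyticAt.fun_zpow ((ContinuousLinearMap.proj (R := ℂ) (φ := fun _ : Fin n => ℂ) j).analyticAt z) (hz j)

lemma analyticAt_FF (p : Coeff A × (Fin n → ℂ)) (hz : ∀ j, p.2 j ≠ 0) :
    AnalyticAt ℂ (FF A) p := by
  rw [analyticAt_pi_iff]
  intro i
  refine Finset.analyticAt_fun_sum _ fun a _ => ?_
  refine AnalyticAt.mul ?_ ?_
  · exact ((ContinuousLinearMap.proj (R := ℂ) (φ := fun _ : CIdx A => ℂ) ⟨i, a⟩).analyticAt _).comp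
      analyticAt_fst
  · exact (analyticAt_monK a.1 p.2 hz).comp analyticAt_snd

lemma hasDerivAt_eval_zero {ι : Type} (c : ℂ → ι → ℂ)
    (h : ∀ i, HasDerivAt (fun s => c s i) 0 0) (p : MvPolynomial ι ℂ) :
    HasDerivAt (fun s => MvPolynomial.eval (c s) p) 0 0 := by
  induction p using MvPolynomial.induction_on with
  | C a => simpa using hasDerivAt_const (0 : ℂ) a
  | add p q hp hq => simpa using hp.fun_add hq
  | mul_X p i hp => simpa using hp.fun_mul (h i)

lemma hasDerivAt_poly {ι : Type} (c : ℂ → ι → ℂ)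
    (h : ∀ i, HasDerivAt (fun s => c s i) 0 0) (r : Polynomial (MvPolynomial ι ℂ))
    (T : ℂ → ℂ) (v : ℂ) (hT : HasDerivAt T v 0) :
    HasDerivAt (fun s => (r.map (MvPolynomial.eval (c s))).eval (T s))
      ((r.map (MvPolynomial.eval (c 0))).derivative.eval (T 0) * v) 0 := by
  induction r using Polynomial.induction_on' with
  | add p q hp hq =>
    simp only [Polynomial.map_add, Polynomial.eval_add, Polynomial.derivative_add, add_mul]
    exact hp.add hq
  | monomial k a =>
    simp only [Polynomial.map_monomial, Polynomial.eval_monomial, Polynomial.derivative_monomial]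
    refine ((hasDerivAt_eval_zero c h a).mul (hT.pow k)).congr_deriv ?_
    simp only [Pi.pow_apply]
    ring

lemma FF_modify {z : Fin n → ℂ} (hz : ∀ j, z j ≠ 0) (c : Coeff A)
    (a0 : ∀ i, {a // a ∈ A i}) :
    FF A (fun q => c q - if q.2 = a0 q.1 then FF A (c, z) q.1 * (monK (a0 q.1).1 z)⁻¹ else 0, z)
      = 0 := by
  funext i
  have h1 : FF A (c, z) i = ∑ a ∈ (A i).attach, c ⟨i, a⟩ * monK a.1 z := rfl
  change ∑ a ∈ (A i).attach, (c ⟨i, a⟩ - if a = a0 i then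
    FF A (c, z) i * (monK (a0 i).1 z)⁻¹ else 0) * monK a.1 z = 0
  simp only [sub_mul, Finset.sum_sub_distrib, ← h1, ite_mul, zero_mul]
  rw [Finset.sum_ite_eq' (A i).attach (a0 i), if_pos (Finset.mem_attach _ _), mul_assoc,
    inv_mul_cancel₀ (monK_ne hz), mul_one, sub_self]

lemma nondeg (hA : ∀ i, (A i).Nonempty) (Q : MvPolynomial (CIdx A) ℂ)
    (hr : ∀ j, ∃ r : Polynomial (MvPolynomial (CIdx A) ℂ), ∀ (c : Coeff A) (x : Torus n),
        MvPolynomial.eval c Q ≠ 0 → IsRoot A c x →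
        (r.map (MvPolynomial.eval c)).eval (x j : ℂ) = 0 ∧
        (r.map (MvPolynomial.eval c)).derivative.eval (x j : ℂ) ≠ 0)
    (c : Coeff A) (x : Torus n) (hc : MvPolynomial.eval c Q ≠ 0) (hx : IsRoot A c x)
    (v : Fin n → ℂ) (hv : fderiv ℂ (FF A) (c, tv x) (0, v) = 0) : v = 0 := by
  choose a0 ha0 using hA
  have hx0 : ∀ j, tv x j ≠ 0 := fun j => (x j).ne_zero
  let z : ℂ → Fin n → ℂ := fun s => tv x + s • v
  have hz0 : z 0 = tv x := by simp [z]
  have hzd : HasDerivAt z v 0 := by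
    have := ((hasDerivAt_id (0 : ℂ)).smul_const v).const_add (tv x)
    simpa [z] using this
  have hzj : ∀ j, HasDerivAt (fun s => z s j) (v j) 0 := hasDerivAt_pi.1 hzd
  have hF : HasDerivAt (fun s => FF A (c, z s)) 0 0 := by
    have h1 : HasDerivAt (fun s => (c, z s)) ((0 : Coeff A), v) 0 :=
      (hasDerivAt_const (0 : ℂ) c).prodMk hzd
    have h2 : HasFDerivAt (FF A) (fderiv ℂ (FF A) (c, tv x)) (c, z 0) := by
      rw [hz0]
      exact (analyticAt_FF A (c, tv x) hx0).differentiableAt.hasFDerivAt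
    have := h2.comp_hasDerivAt (0 : ℂ) h1
    rw [hv] at this
    exact this
  have hFi : ∀ i, HasDerivAt (fun s => FF A (c, z s) i) 0 0 := hasDerivAt_pi.1 hF
  have hF0 : ∀ i, FF A (c, z 0) i = 0 := by
    rw [hz0]; exact congrFun ((isRoot_iff A c x).1 hx)
  let cs : ℂ → Coeff A := fun s q => c q -
    if q.2 = ⟨a0 q.1, ha0 q.1⟩ then FF A (c, z s) q.1 * (monK (a0 q.1) (z s))⁻¹ else 0
  have hcs0 : cs 0 = c := by
    funext q
    simp [cs, hF0]
  have hcs : ∀ q, HasDerivAt (fun s => cs s q) 0 0 := by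
    intro q
    have h1 : HasDerivAt (fun s => if q.2 = ⟨a0 q.1, ha0 q.1⟩ then
        FF A (c, z s) q.1 * (monK (a0 q.1) (z s))⁻¹ else 0) 0 0 := by
      split_ifs
      · have h2 : DifferentiableAt ℂ (fun s => (monK (a0 q.1) (z s))⁻¹) 0 := by
          refine DifferentiableAt.fun_inv ?_ ?_
          · refine DifferentiableAt.comp (0 : ℂ) (g := monK (a0 q.1)) (f := z) ?_ hzd.differentiableAt
            rw [hz0]
            exact (analyticAt_monK _ _ hx0).differentiableAt
          · rw [hz0]; exact monK_ne hx0
        refine ((hFi q.1).mul h2.hasDerivAt).congr_deriv ?_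
        simp [hF0]
      · exact hasDerivAt_const _ _
    simpa [cs] using h1.const_sub (c q)
  have hev1 : ∀ᶠ s in nhds (0 : ℂ), ∀ j, z s j ≠ 0 := by
    refine Filter.eventually_all.2 fun j => ?_
    refine (hzj j).continuousAt.eventually_ne ?_
    rw [hz0]; exact hx0 j
  have hev2 : ∀ᶠ s in nhds (0 : ℂ), MvPolynomial.eval (cs s) Q ≠ 0 := by
    refine (hasDerivAt_eval_zero cs hcs Q).continuousAt.eventually_ne ?_
    rw [hcs0]; exact hc
  funext j
  obtain ⟨r, hr⟩ := hr j
  have h1 := hasDerivAt_poly cs hcs r (fun s => z s j) (v j) (hzj j)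
  have h2 : HasDerivAt (fun s => (r.map (MvPolynomial.eval (cs s))).eval (z s j)) 0 0 := by
    refine (hasDerivAt_const (0 : ℂ) (0 : ℂ)).congr_of_eventuallyEq ?_
    filter_upwards [hev1, hev2] with s hs1 hs2
    have := (hr (cs s) (mkT (z s) hs1) hs2 ((isRoot_mkT A _ _ _).2 ?_)).1
    · exact this
    · exact FF_modify A hs1 c fun i => ⟨a0 i, ha0 i⟩
  have h3 := h1.unique h2
  rw [hcs0, hz0] at h3
  exact (mul_eq_zero.1 h3).resolve_left (hr c x hc hx).2
end

section
open Filter Topology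
variable {n : ℕ} (A : Fin n → Finset (Fin n → ℤ))

lemma continuous_tv : Continuous (tv : Torus n → Fin n → ℂ) :=
  continuous_pi fun j => Units.continuous_val.comp (continuous_apply j)

lemma tendsto_torus {α : Type} {l : Filter α} {u : α → Torus n} {x : Torus n}
    (h : Tendsto (fun s => tv (u s)) l (𝓝 (tv x))) : Tendsto u l (𝓝 x) := by
  rw [tendsto_pi_nhds] at h ⊢
  intro j
  exact Units.isEmbedding_val₀.tendsto_nhds_iff.2 (h j)

lemma local_section (c : Coeff A) (x : Torus n) (hx : IsRoot A c x)
    (hnd : ∀ v, fderiv ℂ (FF A) (c, tv x) (0, v) = 0 → v = 0) :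
    ∃ Ψ : Coeff A → Torus n, Tendsto Ψ (𝓝 c) (𝓝 x) ∧ (∀ᶠ c' in 𝓝 c, IsRoot A c' (Ψ c')) ∧
      ∀ᶠ q in 𝓝 (x, c), IsRoot A q.2 q.1 → Ψ q.2 = q.1 := by
  have hx0 : ∀ j, tv x j ≠ 0 := fun j => (x j).ne_zero
  have hF0 := (isRoot_iff A c x).1 hx
  have hstrict := (analyticAt_FF A (c, tv x) hx0).hasStrictFDerivAt
  set f' := fderiv ℂ (FF A) (c, tv x) with hf'
  have hinj : Function.Injective (f' ∘L ContinuousLinearMap.inr ℂ (Coeff A) (Fin n → ℂ)) := by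
    refine (injective_iff_map_eq_zero _).2 fun v hv => hnd v ?_
    simpa using hv
  have hinv : (f' ∘L ContinuousLinearMap.inr ℂ (Coeff A) (Fin n → ℂ)).IsInvertible := by
    refine ⟨(LinearEquiv.ofInjectiveEndo
      (f' ∘L ContinuousLinearMap.inr ℂ (Coeff A) (Fin n → ℂ)).toLinearMap
      hinj).toContinuousLinearEquiv, ?_⟩
    ext v
    rfl
  let ψ := hstrict.implicitFunctionOfProdDomain hinv
  have h1 : Tendsto ψ (𝓝 c) (𝓝 (tv x)) := hstrict.tendsto_implicitFunctionOfProdDomain hinv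
  have h2 : ∀ᶠ c' in 𝓝 c, FF A (c', ψ c') = FF A (c, tv x) :=
    hstrict.eventually_apply_implicitFunctionOfProdDomain hinv
  have h3 : ∀ᶠ v in 𝓝 (c, tv x), FF A v = FF A (c, tv x) ↔ ψ v.1 = v.2 :=
    hstrict.eventually_apply_eq_iff_implicitFunctionOfProdDomain hinv
  rw [hF0] at h2 h3
  have h4 : ∀ᶠ c' in 𝓝 c, ∀ j, ψ c' j ≠ 0 := by
    refine eventually_all.2 fun j => ?_
    exact ((tendsto_pi_nhds.1 h1) j).eventually_ne (hx0 j)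
  classical
  let Ψ : Coeff A → Torus n := fun c' => if h : ∀ j, ψ c' j ≠ 0 then mkT (ψ c') h else 1
  have hΨ : ∀ᶠ c' in 𝓝 c, tv (Ψ c') = ψ c' := by
    filter_upwards [h4] with c' hc'
    simp only [Ψ, dif_pos hc']
    rfl
  refine ⟨Ψ, tendsto_torus (h1.congr' (hΨ.mono fun _ h => h.symm)), ?_, ?_⟩
  · filter_upwards [hΨ, h2] with c' h5 h6
    rw [isRoot_iff, h5]; exact h6
  · have hcont : Tendsto (fun q : Torus n × Coeff A => (q.2, tv q.1)) (𝓝 (x, c)) (𝓝 (c, tv x)) :=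
      (continuous_snd.prodMk (continuous_tv.comp continuous_fst)).tendsto (x, c)
    have h7 : ∀ᶠ q : Torus n × Coeff A in 𝓝 (x, c), tv (Ψ q.2) = ψ q.2 :=
      (continuous_snd.tendsto (x, c)).eventually hΨ
    filter_upwards [hcont.eventually h3, h7] with q h8 h9 hq
    have := h8.1 ((isRoot_iff A _ _).1 hq)
    funext j
    apply Units.ext
    have h10 := congrFun (h9.trans this) j
    exact h10

lemma isCompact_units_bdd (M : ℝ) : IsCompact {u : ℂˣ | ‖(u : ℂ)‖ ≤ M ∧ ‖(u : ℂ)⁻¹‖ ≤ M} := by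
  have h1 : IsCompact ((Metric.closedBall (0 : ℂ) M) ×ˢ
      (MulOpposite.opHomeomorph.symm ⁻¹' (Metric.closedBall (0 : ℂ) M))) :=
    (isCompact_closedBall _ _).prod
      (MulOpposite.opHomeomorph.symm.isCompact_preimage.2 (isCompact_closedBall _ _))
  have h2 := Units.isClosedEmbedding_embedProduct (α := ℂ) |>.isCompact_preimage h1
  convert! h2 using 1
  ext u
  simp [Units.embedProduct]

lemma continuous_mono (a : Fin n → ℤ) : Continuous (mono a) := by
  have : mono a = fun x : Torus n => ((∏ j, x j ^ a j : ℂˣ) : ℂ) := by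
    ext x; simp [mono]
  rw [this]
  exact Units.continuous_val.comp (continuous_finsetProd _ fun j _ => (continuous_apply j).zpow _)

lemma isClosed_incidence : IsClosed (incidence A) := by
  have : incidence A = ⋂ i, {p : Torus n × Coeff A | evalAt A p.2 i p.1 = 0} := by
    ext p; simp [incidence, IsRoot]
  rw [this]
  refine isClosed_iInter fun i => isClosed_eq ?_ continuous_const
  unfold evalAt
  refine continuous_finsetSum _ fun a _ => ?_
  exact ((continuous_apply _).comp continuous_snd).mul ((continuous_mono _).comp continuous_fst)

lemma covering (hA : ∀ i, (A i).Nonempty) (Q : MvPolynomial (CIdx A) ℂ)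
    (hr : ∀ j, ∃ r : Polynomial (MvPolynomial (CIdx A) ℂ), ∀ (c : Coeff A) (x : Torus n),
        MvPolynomial.eval c Q ≠ 0 → IsRoot A c x →
        (r.map (MvPolynomial.eval c)).eval (x j : ℂ) = 0 ∧
        (r.map (MvPolynomial.eval c)).derivative.eval (x j : ℂ) ≠ 0)
    (hM : ∀ j, ∃ M : Coeff A → ℝ, ContinuousOn M {c | MvPolynomial.eval c Q ≠ 0} ∧
        ∀ (c : Coeff A) (x : Torus n), MvPolynomial.eval c Q ≠ 0 → IsRoot A c x →
          ‖(x j : ℂ)‖ ≤ M c ∧ ‖(x j : ℂ)⁻¹‖ ≤ M c)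
    (hfin : ∀ c : Coeff A, MvPolynomial.eval c Q ≠ 0 → {x | IsRoot A c x}.Finite) :
    IsCoveringMapOn (proj A) {c | MvPolynomial.eval c Q ≠ 0} := by
  set W : Set (Coeff A) := {c | MvPolynomial.eval c Q ≠ 0} with hW
  have hWo : IsOpen W := isOpen_ne_fun (MvPolynomial.continuous_eval Q) continuous_const
  have hproj : Continuous (proj A) := continuous_snd.comp continuous_subtype_val
  refine IsCoveringMapOn.of_isCoveringMap_restrictPreimage _ hWo (hWo.preimage hproj) ?_
  let g := W.restrictPreimage (proj A)
  have hg : Continuous g := hproj.restrictPreimage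
  let e : (proj A ⁻¹' W) → Torus n × Coeff A := fun p => p.1.1
  have he : IsEmbedding e := IsEmbedding.subtypeVal.comp IsEmbedding.subtypeVal
  have hsec : ∀ p : proj A ⁻¹' W, ∃ Ψ : Coeff A → Torus n,
      Tendsto Ψ (𝓝 (e p).2) (𝓝 (e p).1) ∧ (∀ᶠ c' in 𝓝 (e p).2, IsRoot A c' (Ψ c')) ∧
      ∀ᶠ q in 𝓝 (e p), IsRoot A q.2 q.1 → Ψ q.2 = q.1 := fun p =>
    local_section A (e p).2 (e p).1 p.1.2 (nondeg A hA Q hr _ _ p.2 p.1.2)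
  have hopen : IsOpenMap g := by
    refine IsOpenMap.of_nhds_le fun p S hS => ?_
    obtain ⟨Ψ, h1, h2, -⟩ := hsec p
    rw [mem_map, he.nhds_eq_comap, mem_comap] at hS
    obtain ⟨N, hN, hNS⟩ := hS
    have h3 : Tendsto (fun c' => (Ψ c', c')) (𝓝 (e p).2) (𝓝 (e p)) := h1.prodMk_nhds tendsto_id
    rw [mem_nhds_subtype]
    refine ⟨{c' | (Ψ c', c') ∈ N ∧ IsRoot A c' (Ψ c')}, (h3.eventually hN).and h2, ?_⟩
    rintro w ⟨hw1, hw2⟩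
    exact hNS (a := (⟨⟨(Ψ w.1, w.1), hw2⟩, w.2⟩ : proj A ⁻¹' W)) hw1
  have hlh : IsLocalHomeomorph g := by
    rw [isLocalHomeomorph_iff_isOpenEmbedding_restrict]
    intro p
    obtain ⟨Ψ, -, -, h3⟩ := hsec p
    obtain ⟨N, hN, hNo, hpN⟩ := eventually_nhds_iff.1 h3
    have hU : IsOpen (e ⁻¹' N) := hNo.preimage he.continuous
    refine ⟨e ⁻¹' N, hU.mem_nhds hpN, IsOpenEmbedding.of_continuous_injective_isOpenMap
      (hg.comp continuous_subtype_val) ?_ (hopen.comp hU.isOpenMap_subtype_val)⟩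
    intro q q' hqq
    have hc : (e q.1).2 = (e q'.1).2 := congrArg Subtype.val hqq
    have hx : (e q.1).1 = (e q'.1).1 := by
      rw [← hN _ q.2 q.1.1.2, ← hN _ q'.2 q'.1.1.2, hc]
    exact Subtype.ext (he.injective (Prod.ext hx hc))
  have hproper : IsProperMap g := by
    rw [isProperMap_iff_isCompact_preimage]
    refine ⟨hg, fun K hK => ?_⟩
    have hK' : IsCompact (Subtype.val '' K) := hK.image continuous_subtype_val
    have hb : ∀ j, ∃ R : ℝ, ∀ (c : Coeff A) (x : Torus n), c ∈ Subtype.val '' K →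
        IsRoot A c x → ‖(x j : ℂ)‖ ≤ R ∧ ‖(x j : ℂ)⁻¹‖ ≤ R := by
      intro j
      obtain ⟨M, hMc, hMb⟩ := hM j
      have hsub : Subtype.val '' K ⊆ W := by rintro _ ⟨w, -, rfl⟩; exact w.2
      obtain ⟨R, hR⟩ := hK'.bddAbove_image (hMc.mono hsub)
      refine ⟨R, fun c x hc hx => ?_⟩
      have h1 := hMb c x (hsub hc) hx
      have h2 := hR ⟨c, hc, rfl⟩
      exact ⟨h1.1.trans h2, h1.2.trans h2⟩
    choose R hR using hb
    rw [he.isInducing.isCompact_iff]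
    have hcomp : IsCompact (((Set.pi Set.univ fun j =>
        {u : ℂˣ | ‖(u : ℂ)‖ ≤ R j ∧ ‖(u : ℂ)⁻¹‖ ≤ R j}) ×ˢ (Subtype.val '' K)) ∩ incidence A) :=
      ((isCompact_univ_pi fun j => isCompact_units_bdd (R j)).prod hK').inter_right
        (isClosed_incidence A)
    convert! hcomp using 1
    ext p
    constructor
    · rintro ⟨q, hq, rfl⟩
      have hm : (e q).2 ∈ Subtype.val '' K := ⟨g q, hq, rfl⟩
      exact ⟨⟨fun j _ => hR j _ _ hm q.1.2, hm⟩, q.1.2⟩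
    · rintro ⟨⟨-, w, hw, hwp⟩, hp⟩
      refine ⟨⟨⟨p, hp⟩, ?_⟩, ?_, rfl⟩
      · change p.2 ∈ W
        rw [← hwp]; exact w.2
      · have hpW : p.2 ∈ W := by
          rw [← hwp]; exact w.2
        have h5 : w = (⟨p.2, hpW⟩ : W) := Subtype.ext hwp
        have h6 : (⟨p.2, hpW⟩ : W) ∈ K := h5 ▸ hw
        exact h6
  rw [isCoveringMap_iff_isCoveringMapOn_univ]
  refine hproper.isClosedMap.isCoveringMapOn_of_isLocalHomeomorphOn ?_ ?_
  · intro w _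
    refine Set.Finite.of_finite_image (f := fun q => (e q).1) ((hfin w.1 w.2).subset ?_) ?_
    · rintro _ ⟨q, hq, rfl⟩
      have : (e q).2 = w.1 := congrArg Subtype.val hq
      rw [← this]
      exact q.1.2
    · intro q hq q' hq' hx
      refine he.injective (Prod.ext hx ?_)
      have h1 : (e q).2 = w.1 := congrArg Subtype.val hq
      have h2 : (e q').2 = w.1 := congrArg Subtype.val hq'
      rw [h1, h2]
  · exact hlh.isLocalHomeomorphOn
end

section
open Filter Topology
variable {n : ℕ} (A : Fin n → Finset (Fin n → ℤ))

lemma shrink {U : Set ℂ} (hU : IsOpen U) (hUc : Uᶜ.Countable) {f : ℂ → ℂ}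
    (hf : AnalyticOnNhd ℂ f U) (h0 : (0 : ℂ) ∈ U) (hf0 : f 0 ≠ 0) :
    IsOpen (U ∩ {s | f s ≠ 0}) ∧ (U ∩ {s | f s ≠ 0})ᶜ.Countable := by
  constructor
  · exact hf.continuousOn.isOpen_inter_preimage hU isOpen_ne
  · have hrank : 1 < Module.rank ℝ ℂ := by
      rw [Complex.rank_real_complex]; exact Nat.one_lt_ofNat
    have hconn : IsPreconnected U := by
      have := (hUc.isConnected_compl_of_one_lt_rank hrank).isPreconnected
      rwa [compl_compl] at this
    have hZ : (U ∩ {s | f s = 0}).Countable := by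
      obtain ⟨t, -, htc, ht⟩ := TopologicalSpace.countable_cover_nhdsWithin
        (f := fun s : ℂ => {s}) (s := U ∩ {s | f s = 0}) (by
          intro s hs
          have h1 : ∀ᶠ w in 𝓝[≠] s, f w ≠ 0 := by
            by_contra hcon
            exact hf0 (hf.eqOn_zero_of_preconnected_of_frequently_eq_zero hconn hs.1
              hcon h0)
          rw [eventually_nhdsWithin_iff] at h1
          refine mem_nhdsWithin_iff_eventually.2 ?_
          filter_upwards [h1] with w hw hwZ
          by_contra hne
          exact hw hne hwZ.2)
      refine htc.mono (ht.trans ?_)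
      simp
    refine (hUc.union hZ).mono ?_
    intro s hs
    by_cases hsU : s ∈ U
    · right
      refine ⟨hsU, ?_⟩
      by_contra hne
      exact hs ⟨hsU, hne⟩
    · exact Or.inl hsU

lemma quad_exists (p0 p1 p2 q0 q1 q2 : ℂ) (hp : p0 ≠ 0) (hq : q2 ≠ 0) :
    ∃ s : ℂ, p0 + p1 * s + p2 * s ^ 2 ≠ 0 ∧ q0 + q1 * s + q2 * s ^ 2 ≠ 0 := by
  by_contra hcon
  push Not at hcon
  open Polynomial in
  let P : ℂ[X] := C p0 + C p1 * X + C p2 * X ^ 2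
  open Polynomial in
  let R : ℂ[X] := C q0 + C q1 * X + C q2 * X ^ 2
  have h : P * R = 0 := by
    refine Polynomial.funext fun s => ?_
    by_cases h1 : p0 + p1 * s + p2 * s ^ 2 = 0
    · simp [P, h1]
    · simp [R, hcon s h1]
  rcases mul_eq_zero.1 h with h | h
  · apply hp
    have := congrArg (Polynomial.eval 0) h
    simpa [P] using this
  · apply hq
    have := congrArg (fun p => p.coeff 2) h
    simpa [R, Polynomial.coeff_X, Polynomial.coeff_C] using this

/-- linear combination of monomials -/
noncomputable def lc {S : Finset (Fin n → ℤ)} (g : {a // a ∈ S} → ℂ) (z : Fin n → ℂ) : ℂ :=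
  ∑ a ∈ S.attach, g a * monK a.1 z

lemma lc_two {S : Finset (Fin n → ℤ)} (a b : {a // a ∈ S}) (s : ℂ) (z : Fin n → ℂ) :
    lc (Pi.single a 1 + s • Pi.single b 1) z = monK a.1 z + s * monK b.1 z := by
  classical
  have h : ∀ a : {a // a ∈ S}, ∑ x ∈ S.attach, (Pi.single a (1 : ℂ) : _ → ℂ) x * monK x.1 z
      = monK a.1 z := by
    intro a
    rw [Finset.sum_eq_single a]
    · simp
    · intro b _ hb; simp [hb]
    · simp
  simp only [lc, Pi.add_apply, Pi.smul_apply, smul_eq_mul, add_mul, Finset.sum_add_distrib,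
    mul_assoc, ← Finset.mul_sum, h]

lemma exists_gh {S : Finset (Fin n → ℤ)} (x y x' y' : Fin n → ℂ)
    (h1 : ∃ a ∈ S, ∃ b ∈ S, monK a x * monK b y ≠ monK b x * monK a y)
    (h2 : ∃ a ∈ S, ∃ b ∈ S, monK a x' * monK b y' ≠ monK b x' * monK a y') :
    ∃ g h : {a // a ∈ S} → ℂ, lc g x * lc h y - lc g y * lc h x ≠ 0 ∧
      lc g x' * lc h y' - lc g y' * lc h x' ≠ 0 := by
  obtain ⟨a, ha, b, hb, hab⟩ := h1
  obtain ⟨a', ha', b', hb', hab'⟩ := h2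
  obtain ⟨s, hs1, hs2⟩ := quad_exists
    (monK a x * monK b y - monK a y * monK b x)
    (monK a x * monK b' y + monK a' x * monK b y - monK a y * monK b' x - monK a' y * monK b x)
    (monK a' x * monK b' y - monK a' y * monK b' x)
    (monK a x' * monK b y' - monK a y' * monK b x')
    (monK a x' * monK b' y' + monK a' x' * monK b y' - monK a y' * monK b' x'
      - monK a' y' * monK b x')
    (monK a' x' * monK b' y' - monK a' y' * monK b' x')
    (by rw [sub_ne_zero, mul_comm (monK a y)]; exact hab)
    (by rw [sub_ne_zero, mul_comm (monK a' y')]; exact hab')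
  refine ⟨Pi.single ⟨a, ha⟩ 1 + s • Pi.single ⟨a', ha'⟩ 1,
    Pi.single ⟨b, hb⟩ 1 + s • Pi.single ⟨b', hb'⟩ 1, ?_, ?_⟩
  · simp only [lc_two]
    convert hs1 using 1
    ring
  · simp only [lc_two]
    convert hs2 using 1
    ring

lemma analyticAt_lc {S : Finset (Fin n → ℤ)} (g : {a // a ∈ S} → ℂ) (z : ℂ → Fin n → ℂ) (s : ℂ)
    (hz : AnalyticAt ℂ z s) (hz0 : ∀ j, z s j ≠ 0) : AnalyticAt ℂ (fun s => lc g (z s)) s := by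
  unfold lc
  refine Finset.analyticAt_fun_sum _ fun a _ => analyticAt_const.mul ?_
  exact (analyticAt_monK a.1 (z s) hz0).comp hz

lemma analyticAt_eval {ι : Type} (c : ℂ → ι → ℂ) (s : ℂ)
    (h : ∀ i, AnalyticAt ℂ (fun s => c s i) s) (p : MvPolynomial ι ℂ) :
    AnalyticAt ℂ (fun s => MvPolynomial.eval (c s) p) s := by
  induction p using MvPolynomial.induction_on with
  | C a => simpa using analyticAt_const
  | add p q hp hq => simpa using hp.fun_add hq
  | mul_X p i hp => simpa using hp.fun_mul (h i)

lemma exists_loop (Q : MvPolynomial (CIdx A) ℂ)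
    (hbad : ∀ (c : Coeff A) (x y : Torus n),
        MvPolynomial.eval c Q ≠ 0 → IsRoot A c x → IsRoot A c y → x ≠ y →
        ∀ i, ∃ a ∈ A i, ∃ b ∈ A i, mono a x * mono b y ≠ mono b x * mono a y)
    (f : Coeff A) (hf : MvPolynomial.eval f Q ≠ 0) (x y x' y' : Torus n)
    (hx : IsRoot A f x) (hy : IsRoot A f y) (hx' : IsRoot A f x') (hy' : IsRoot A f y')
    (hxy : x ≠ y) (hxy' : x' ≠ y') :
    ∃ (γ : unitInterval → Coeff A) (δ ε : unitInterval → Torus n),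
      Continuous γ ∧ Continuous δ ∧ Continuous ε ∧ (∀ t, MvPolynomial.eval (γ t) Q ≠ 0) ∧
      γ 0 = f ∧ γ 1 = f ∧ (∀ t, IsRoot A (γ t) (δ t)) ∧ (∀ t, IsRoot A (γ t) (ε t)) ∧
      δ 0 = x ∧ δ 1 = x' ∧ ε 0 = y ∧ ε 1 = y' := by
  choose g h hD0 hD1 using fun i => exists_gh (S := A i) (tv x) (tv y) (tv x') (tv y')
    (hbad f x y hf hx hy hxy i) (hbad f x' y' hf hx' hy' hxy' i)
  let z : ℂ → Fin n → ℂ := fun s => tv x + s • (tv x' - tv x)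
  let w : ℂ → Fin n → ℂ := fun s => tv y + s • (tv y' - tv y)
  have hz0 : z 0 = tv x := by simp [z]
  have hz1 : z 1 = tv x' := by simp [z]
  have hw0 : w 0 = tv y := by simp [w]
  have hw1 : w 1 = tv y' := by simp [w]
  have hza : ∀ s, AnalyticAt ℂ z s := fun s => by fun_prop
  have hwa : ∀ s, AnalyticAt ℂ w s := fun s => by fun_prop
  have hzj : ∀ s j, AnalyticAt ℂ (fun s => z s j) s := fun s => analyticAt_pi_iff.1 (hza s)
  have hwj : ∀ s j, AnalyticAt ℂ (fun s => w s j) s := fun s => analyticAt_pi_iff.1 (hwa s)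
  let D : Fin n → ℂ → ℂ := fun i s => lc (g i) (z s) * lc (h i) (w s) - lc (g i) (w s) * lc (h i) (z s)
  let φ : Fin n → ℂ → ℂ := fun i s => lc (fun a => f ⟨i, a⟩) (z s)
  let χ : Fin n → ℂ → ℂ := fun i s => lc (fun a => f ⟨i, a⟩) (w s)
  let c : ℂ → Coeff A := fun s q => f q
    - (φ q.1 s * lc (h q.1) (w s) - χ q.1 s * lc (h q.1) (z s)) / D q.1 s * g q.1 q.2
    - (lc (g q.1) (z s) * χ q.1 s - lc (g q.1) (w s) * φ q.1 s) / D q.1 s * h q.1 q.2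
  have hφ0 : ∀ i, φ i 0 = 0 := fun i => by
    change lc (fun a => f ⟨i, a⟩) (z 0) = 0
    rw [hz0]; exact hx i
  have hφ1 : ∀ i, φ i 1 = 0 := fun i => by
    change lc (fun a => f ⟨i, a⟩) (z 1) = 0
    rw [hz1]; exact hx' i
  have hχ0 : ∀ i, χ i 0 = 0 := fun i => by
    change lc (fun a => f ⟨i, a⟩) (w 0) = 0
    rw [hw0]; exact hy i
  have hχ1 : ∀ i, χ i 1 = 0 := fun i => by
    change lc (fun a => f ⟨i, a⟩) (w 1) = 0
    rw [hw1]; exact hy' i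
  have hc0 : c 0 = f := by funext q; simp [c, hφ0, hχ0]
  have hc1 : c 1 = f := by funext q; simp [c, hφ1, hχ1]
  have hlin : ∀ s i v, FF A (c s, v) i = lc (fun a => f ⟨i, a⟩) v
    - (φ i s * lc (h i) (w s) - χ i s * lc (h i) (z s)) / D i s * lc (g i) v
    - (lc (g i) (z s) * χ i s - lc (g i) (w s) * φ i s) / D i s * lc (h i) v := by
    intro s i v
    simp only [FF, c]
    conv_rhs => enter [1, 1]; rw [lc]
    conv_rhs => enter [1, 2, 2]; rw [lc]
    conv_rhs => enter [2, 2]; rw [lc]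
    rw [Finset.mul_sum, Finset.mul_sum, ← Finset.sum_sub_distrib, ← Finset.sum_sub_distrib]
    refine Finset.sum_congr rfl fun a _ => ?_
    ring
  have hrz : ∀ s, (∀ i, D i s ≠ 0) → FF A (c s, z s) = 0 := by
    intro s hs
    funext i
    rw [hlin]
    have h1 := hs i
    change φ i s - _ - _ = (0 : ℂ)
    have h2 : D i s = lc (g i) (z s) * lc (h i) (w s) - lc (g i) (w s) * lc (h i) (z s) := rfl
    field_simp
    rw [h2]
    ring
  have hrw : ∀ s, (∀ i, D i s ≠ 0) → FF A (c s, w s) = 0 := by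
    intro s hs
    funext i
    rw [hlin]
    have h1 := hs i
    change χ i s - _ - _ = (0 : ℂ)
    have h2 : D i s = lc (g i) (z s) * lc (h i) (w s) - lc (g i) (w s) * lc (h i) (z s) := rfl
    field_simp
    rw [h2]
    ring
  -- the good set of parameters
  let U0 : Set ℂ := Set.univ ∩ {s | ∏ j, (z s j * w s j) ≠ 0}
  obtain ⟨hU0o, hU0c⟩ : IsOpen U0 ∧ U0ᶜ.Countable := by
    refine shrink isOpen_univ (by simp) (f := fun s => ∏ j, (z s j * w s j)) ?_ (Set.mem_univ _) ?_
    · exact fun s _ => Finset.analyticAt_fun_prod _ fun j _ => (hzj s j).fun_mul (hwj s j)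
    · refine Finset.prod_ne_zero_iff.2 fun j _ => ?_
      rw [hz0, hw0]
      exact mul_ne_zero (x j).ne_zero (y j).ne_zero
  have hU0z : ∀ s ∈ U0, ∀ j, z s j ≠ 0 := fun s hs j =>
    (mul_ne_zero_iff.1 (Finset.prod_ne_zero_iff.1 hs.2 j (Finset.mem_univ _))).1
  have hU0w : ∀ s ∈ U0, ∀ j, w s j ≠ 0 := fun s hs j =>
    (mul_ne_zero_iff.1 (Finset.prod_ne_zero_iff.1 hs.2 j (Finset.mem_univ _))).2
  have h0U0 : (0 : ℂ) ∈ U0 := by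
    refine ⟨Set.mem_univ _, Finset.prod_ne_zero_iff.2 fun j _ => ?_⟩
    rw [hz0, hw0]
    exact mul_ne_zero (x j).ne_zero (y j).ne_zero
  have h1U0 : (1 : ℂ) ∈ U0 := by
    refine ⟨Set.mem_univ _, Finset.prod_ne_zero_iff.2 fun j _ => ?_⟩
    rw [hz1, hw1]
    exact mul_ne_zero (x' j).ne_zero (y' j).ne_zero
  have hlz : ∀ i (k : {a // a ∈ A i} → ℂ), ∀ s ∈ U0, AnalyticAt ℂ (fun s => lc k (z s)) s :=
    fun i k s hs => analyticAt_lc k z s (hza s) (hU0z s hs)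
  have hlw : ∀ i (k : {a // a ∈ A i} → ℂ), ∀ s ∈ U0, AnalyticAt ℂ (fun s => lc k (w s)) s :=
    fun i k s hs => analyticAt_lc k w s (hwa s) (hU0w s hs)
  have hDa : ∀ i, ∀ s ∈ U0, AnalyticAt ℂ (D i) s := fun i s hs =>
    ((hlz i (g i) s hs).fun_mul (hlw i (h i) s hs)).fun_sub ((hlw i (g i) s hs).fun_mul (hlz i (h i) s hs))
  let U1 : Set ℂ := U0 ∩ {s | ∏ i, D i s ≠ 0}
  have hD00 : ∏ i, D i 0 ≠ 0 := by
    refine Finset.prod_ne_zero_iff.2 fun i _ => ?_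
    change lc (g i) (z 0) * lc (h i) (w 0) - lc (g i) (w 0) * lc (h i) (z 0) ≠ 0
    rw [hz0, hw0]; exact hD0 i
  have hD11 : ∏ i, D i 1 ≠ 0 := by
    refine Finset.prod_ne_zero_iff.2 fun i _ => ?_
    change lc (g i) (z 1) * lc (h i) (w 1) - lc (g i) (w 1) * lc (h i) (z 1) ≠ 0
    rw [hz1, hw1]; exact hD1 i
  obtain ⟨hU1o, hU1c⟩ : IsOpen U1 ∧ U1ᶜ.Countable :=
    shrink hU0o hU0c (f := fun s => ∏ i, D i s)
      (fun s hs => Finset.analyticAt_fun_prod _ fun i _ => hDa i s hs) h0U0 hD00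
  have hU1D : ∀ s ∈ U1, ∀ i, D i s ≠ 0 := fun s hs i =>
    Finset.prod_ne_zero_iff.1 hs.2 i (Finset.mem_univ _)
  have hca : ∀ s ∈ U1, ∀ q, AnalyticAt ℂ (fun s => c s q) s := by
    intro s hs q
    have a1 := hlz q.1 (h q.1) s hs.1
    have a2 := hlw q.1 (h q.1) s hs.1
    have a3 := hlz q.1 (g q.1) s hs.1
    have a4 := hlw q.1 (g q.1) s hs.1
    have a5 : AnalyticAt ℂ (φ q.1) s := hlz q.1 (fun a => f ⟨q.1, a⟩) s hs.1
    have a6 : AnalyticAt ℂ (χ q.1) s := hlw q.1 (fun a => f ⟨q.1, a⟩) s hs.1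
    have a7 := hDa q.1 s hs.1
    have a8 := hU1D s hs q.1
    exact (analyticAt_const.fun_sub ((((a5.fun_mul a2).fun_sub (a6.fun_mul a1)).fun_div a7 a8).fun_mul
      analyticAt_const)).fun_sub ((((a3.fun_mul a6).fun_sub (a4.fun_mul a5)).fun_div a7 a8).fun_mul
      analyticAt_const)
  let U2 : Set ℂ := U1 ∩ {s | MvPolynomial.eval (c s) Q ≠ 0}
  obtain ⟨hU2o, hU2c⟩ : IsOpen U2 ∧ U2ᶜ.Countable :=
    shrink hU1o hU1c (f := fun s => MvPolynomial.eval (c s) Q)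
      (fun s hs => analyticAt_eval c s (hca s hs) Q) ⟨h0U0, hD00⟩ (by rw [hc0]; exact hf)
  have h0U2 : (0 : ℂ) ∈ U2 := ⟨⟨h0U0, hD00⟩, by
    change MvPolynomial.eval (c 0) Q ≠ 0
    rw [hc0]; exact hf⟩
  have h1U2 : (1 : ℂ) ∈ U2 := ⟨⟨h1U0, hD11⟩, by
    change MvPolynomial.eval (c 1) Q ≠ 0
    rw [hc1]; exact hf⟩
  have hrank : 1 < Module.rank ℝ ℂ := by
    rw [Complex.rank_real_complex]; exact Nat.one_lt_ofNat
  have hpc : IsPathConnected U2 := by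
    have := hU2c.isPathConnected_compl_of_one_lt_rank hrank
    rwa [compl_compl] at this
  obtain ⟨p, hp⟩ := hpc.joinedIn 0 h0U2 1 h1U2
  refine ⟨fun t => c (p t), fun t => mkT (z (p t)) (hU0z _ (hp t).1.1),
    fun t => mkT (w (p t)) (hU0w _ (hp t).1.1), ?_, ?_, ?_, fun t => (hp t).2, ?_, ?_,
    fun t => (isRoot_mkT A _ _ _).2 (hrz _ (hU1D _ (hp t).1)),
    fun t => (isRoot_mkT A _ _ _).2 (hrw _ (hU1D _ (hp t).1)), ?_, ?_, ?_, ?_⟩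
  · refine continuous_pi fun q => continuous_iff_continuousAt.2 fun t => ?_
    exact ContinuousAt.comp (f := p) (g := fun s => c s q) (hca _ (hp t).1 q).continuousAt
      p.continuous.continuousAt
  · refine continuous_iff_continuousAt.2 fun t => tendsto_torus ?_
    exact ContinuousAt.comp (f := p) (g := z) (hza (p t)).continuousAt p.continuous.continuousAt
  · refine continuous_iff_continuousAt.2 fun t => tendsto_torus ?_
    exact ContinuousAt.comp (f := p) (g := w) (hwa (p t)).continuousAt p.continuous.continuousAt
  · simp [hc0]
  · simp [hc1]
  · funext j; apply Units.ext; change z (p 0) j = x j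
    rw [p.source, hz0]; rfl
  · funext j; apply Units.ext; change z (p 1) j = x' j
    rw [p.target, hz1]; rfl
  · funext j; apply Units.ext; change w (p 0) j = y j
    rw [p.source, hw0]; rfl
  · funext j; apply Units.ext; change w (p 1) j = y' j
    rw [p.target, hw1]; rfl
end

section
variable {n : ℕ} (A : Fin n → Finset (Fin n → ℤ))

lemma lift_exists {s : Set (Coeff A)} (cov : IsCoveringMapOn (proj A) s)
    (γ : unitInterval → Coeff A) (hγ : Continuous γ) (hs : ∀ t, γ t ∈ s)
    (z : Torus n) (hz : IsRoot A (γ 0) z) :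
    ∃ δ : unitInterval → Torus n, Continuous δ ∧ δ 0 = z ∧ ∀ t, IsRoot A (γ t) (δ t) := by
  have : ContractibleSpace unitInterval :=
    (convex_Icc (0 : ℝ) 1).contractibleSpace ⟨0, by simp⟩
  have : LocallyPathConnectedSpace unitInterval :=
    (isQuotientMap_projIcc (h := zero_le_one (α := ℝ))).locallyPathConnectedSpace
  obtain ⟨F, ⟨hF0, hF⟩, -⟩ := cov.existsUnique_continuousMap_lifts (f := ⟨γ, hγ⟩)
    (a₀ := (0 : unitInterval)) (e₀ := (⟨(z, γ 0), hz⟩ : incidence A)) rfl hs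
  refine ⟨fun t => (F t).1.1, by fun_prop, by simp [hF0], fun t => ?_⟩
  have h1 : (F t).1.2 = γ t := congrFun hF t
  have h2 : IsRoot A (F t).1.2 (F t).1.1 := (F t).2
  rwa [h1] at h2

lemma lift_unique {s : Set (Coeff A)} (cov : IsCoveringMapOn (proj A) s)
    (γ : unitInterval → Coeff A) (hγ : Continuous γ) (hs : ∀ t, γ t ∈ s)
    (δ ε : unitInterval → Torus n) (hδ : Continuous δ) (hε : Continuous ε)
    (hδr : ∀ t, IsRoot A (γ t) (δ t)) (hεr : ∀ t, IsRoot A (γ t) (ε t))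
    (a : unitInterval) (ha : δ a = ε a) : δ = ε := by
  have : ContractibleSpace unitInterval :=
    (convex_Icc (0 : ℝ) 1).contractibleSpace ⟨0, by simp⟩
  have : LocallyPathConnectedSpace unitInterval :=
    (isQuotientMap_projIcc (h := zero_le_one (α := ℝ))).locallyPathConnectedSpace
  obtain ⟨F, -, hu⟩ := cov.existsUnique_continuousMap_lifts (f := ⟨γ, hγ⟩)
    (a₀ := a) (e₀ := (⟨(δ a, γ a), hδr a⟩ : incidence A)) rfl hs
  let D : C(unitInterval, incidence A) :=
    ⟨fun t => ⟨(δ t, γ t), hδr t⟩, (hδ.prodMk hγ).subtype_mk _⟩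
  let E : C(unitInterval, incidence A) :=
    ⟨fun t => ⟨(ε t, γ t), hεr t⟩, (hε.prodMk hγ).subtype_mk _⟩
  have h1 : D = F := hu D ⟨rfl, rfl⟩
  have h2 : E = F := hu E ⟨Subtype.ext (Prod.ext ha.symm rfl), rfl⟩
  funext t
  exact congrArg (fun G : C(unitInterval, incidence A) => (G t).1.1) (h1.trans h2.symm)
end

/-- Theorem 1.23: for a reduced irreducible tuple `A`, the monodromy group
`G_A` is doubly transitive. -/
theorem monodromy_doubly_transitive {n : ℕ} (A : Fin n → Finset (Fin n → ℤ))
    (hred : IsReducedTuple A) (hirr : IsIrreducibleTuple A) :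
    ∃ B : Set (Coeff A), IsAlgebraicSet B ∧ B ≠ Set.univ ∧
      IsCoveringMapOn (proj A) Bᶜ ∧
      ∀ f : Coeff A, f ∉ B →
        ∀ x y x' y' : RootSet A f, x ≠ y → x' ≠ y' →
          ∃ γ : unitInterval → Coeff A, IsLoop A B f γ ∧
            ∃ σ : Equiv.Perm (RootSet A f), Induces A γ f σ ∧ σ x = x' ∧ σ y = y' := by
  obtain ⟨Q, hQ, hbad, hr, hM, hfin⟩ := exists_Q A hred hirr
  have hA := nonempty_of_red_irr A hred hirr
  have cov := covering A hA Q hr hM hfin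
  refine ⟨{c | MvPolynomial.eval c Q = 0}, ⟨{Q}, by simp⟩, ?_, cov, ?_⟩
  · intro h
    apply hQ
    apply MvPolynomial.funext
    intro c
    have : c ∈ {c | MvPolynomial.eval c Q = 0} := h ▸ Set.mem_univ c
    simpa using this
  intro f hf x y x' y' hxy hxy'
  have hf : MvPolynomial.eval f Q ≠ 0 := hf
  obtain ⟨γ, δ, ε, hγ, hδ, hε, hγQ, hγ0, hγ1, hδr, hεr, hδ0, hδ1, hε0, hε1⟩ :=
    exists_loop A Q hbad f hf x.1 y.1 x'.1 y'.1 x.2 y.2 x'.2 y'.2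
      (fun h => hxy (Subtype.ext h)) (fun h => hxy' (Subtype.ext h))
  have hex : ∀ z : RootSet A f, ∃ δ : unitInterval → Torus n,
      Continuous δ ∧ δ 0 = z.1 ∧ ∀ t, IsRoot A (γ t) (δ t) := fun z =>
    lift_exists A cov γ hγ hγQ z.1 (by rw [hγ0]; exact z.2)
  choose l hlc hl0 hlr using hex
  let τ : RootSet A f → RootSet A f := fun z => ⟨l z 1, by
    have := hlr z 1
    rwa [hγ1] at this⟩
  have hinj : Function.Injective τ := by
    intro z w h
    have h1 : l z 1 = l w 1 := congrArg Subtype.val h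
    have h2 := lift_unique A cov γ hγ hγQ _ _ (hlc z) (hlc w) (hlr z) (hlr w) 1 h1
    apply Subtype.ext
    rw [← hl0 z, ← hl0 w, h2]
  have : Finite (RootSet A f) := (hfin f hf).to_subtype
  refine ⟨γ, ⟨hγ, hγQ, hγ0, hγ1⟩,
    Equiv.ofBijective τ (Finite.injective_iff_bijective.1 hinj), ?_, ?_, ?_⟩
  · intro z
    exact ⟨l z, hlc z, hl0 z, hlr z, rfl⟩
  · apply Subtype.ext
    change l x 1 = x'.1
    rw [lift_unique A cov γ hγ hγQ _ _ (hlc x) hδ (hlr x) hδr 0 ((hl0 x).trans hδ0.symm), hδ1]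
  · apply Subtype.ext
    change l y 1 = y'.1
    rw [lift_unique A cov γ hγ hγQ _ _ (hlc y) hε (hlr y) hεr 0 ((hl0 y).trans hε0.symm), hε1]


end Esterov
end

section
/- For all positive integers n and V there are only finitely many irreducible tuples (A₁,…,Aₙ) of finite subsets of ℤⁿ of lattice mixed volume V, up to the equivalence that identifies (A₁,…,Aₙ) with (φ(A₁)+v₁,…,φ(Aₙ)+vₙ) for a group automorphism φ of ℤⁿ and vectors v₁,…,vₙ ∈ ℤⁿ. -/
open Pointwise MeasureTheory

namespace Esterov

/-! ### Log-sum-exp functions, their gradients and Hessians -/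

/-- The partition function of a weighted finite set of lattice points. -/
noncomputable def ZZ {n : ℕ} (s : Finset (Fin n → ℤ)) (c : (Fin n → ℤ) → ℝ) (x : Fin n → ℝ) : ℝ :=
  ∑ a ∈ s, c a * Real.exp (toR a ⬝ᵥ x)

/-- The Gibbs weights. -/
noncomputable def pp {n : ℕ} (s : Finset (Fin n → ℤ)) (c : (Fin n → ℤ) → ℝ) (x : Fin n → ℝ)
    (a : Fin n → ℤ) : ℝ :=
  c a * Real.exp (toR a ⬝ᵥ x) / ZZ s c x

/-- The mean (gradient of `log ZZ`). -/
noncomputable def mm {n : ℕ} (s : Finset (Fin n → ℤ)) (c : (Fin n → ℤ) → ℝ) (x : Fin n → ℝ) :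
    Fin n → ℝ :=
  fun r => ∑ a ∈ s, pp s c x a * toR a r

/-- The covariance matrix (Hessian of `log ZZ`). -/
noncomputable def HH {n : ℕ} (s : Finset (Fin n → ℤ)) (c : (Fin n → ℤ) → ℝ) (x : Fin n → ℝ) :
    Matrix (Fin n) (Fin n) ℝ :=
  Matrix.of fun r t => ∑ a ∈ s, ∑ b ∈ s,
    (1 / 2 * pp s c x a * pp s c x b) * ((toR a r - toR b r) * (toR a t - toR b t))

/-- Dot product as a continuous linear functional. -/
noncomputable def dotL {n : ℕ} (v : Fin n → ℝ) : (Fin n → ℝ) →L[ℝ] ℝ :=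
  ∑ r, v r • ContinuousLinearMap.proj r

lemma dotL_apply {n : ℕ} (v x : Fin n → ℝ) : dotL v x = v ⬝ᵥ x := by
  simp [dotL, dotProduct]

lemma hasFDerivAt_exp_dot {n : ℕ} (v x : Fin n → ℝ) :
    HasFDerivAt (fun x => Real.exp (v ⬝ᵥ x)) (Real.exp (v ⬝ᵥ x) • dotL v) x := by
  have h : HasFDerivAt (fun x => v ⬝ᵥ x) (dotL v) x := by
    have := (dotL v).hasFDerivAt (x := x)
    simpa only [← dotL_apply] using this
  exact h.exp

lemma ZZ_pos {n : ℕ} {s : Finset (Fin n → ℤ)} (hs : s.Nonempty) {c : (Fin n → ℤ) → ℝ}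
    (hc : ∀ a, 0 < c a) (x : Fin n → ℝ) : 0 < ZZ s c x :=
  Finset.sum_pos (fun a _ => mul_pos (hc a) (Real.exp_pos _)) hs

lemma pp_pos {n : ℕ} {s : Finset (Fin n → ℤ)} (hs : s.Nonempty) {c : (Fin n → ℤ) → ℝ}
    (hc : ∀ a, 0 < c a) (x : Fin n → ℝ) (a) : 0 < pp s c x a :=
  div_pos (mul_pos (hc a) (Real.exp_pos _)) (ZZ_pos hs hc x)

lemma pp_sum {n : ℕ} {s : Finset (Fin n → ℤ)} (hs : s.Nonempty) {c : (Fin n → ℤ) → ℝ}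
    (hc : ∀ a, 0 < c a) (x : Fin n → ℝ) : ∑ a ∈ s, pp s c x a = 1 := by
  unfold pp
  rw [← Finset.sum_div]
  exact div_self (ZZ_pos hs hc x).ne'

lemma hasFDerivAt_ZZ {n : ℕ} (s : Finset (Fin n → ℤ)) (c : (Fin n → ℤ) → ℝ) (x : Fin n → ℝ) :
    HasFDerivAt (ZZ s c) (∑ a ∈ s, (c a * Real.exp (toR a ⬝ᵥ x)) • dotL (toR a)) x := by
  unfold ZZ
  refine HasFDerivAt.fun_sum fun a _ => ?_
  simpa [smul_smul] using (hasFDerivAt_exp_dot (toR a) x).const_mul (c a)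

lemma hasFDerivAt_logZZ {n : ℕ} {s : Finset (Fin n → ℤ)} (hs : s.Nonempty)
    {c : (Fin n → ℤ) → ℝ} (hc : ∀ a, 0 < c a) (x : Fin n → ℝ) :
    HasFDerivAt (fun x => Real.log (ZZ s c x)) (dotL (mm s c x)) x := by
  have h := (hasFDerivAt_ZZ s c x).log (ZZ_pos hs hc x).ne'
  refine h.congr_fderiv ?_
  ext v
  simp only [ContinuousLinearMap.smul_apply, ContinuousLinearMap.sum_apply, dotL_apply,
    smul_eq_mul, mm, pp, dotProduct, Finset.mul_sum, Finset.sum_mul]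
  rw [Finset.sum_comm]
  refine Finset.sum_congr rfl fun a _ => Finset.sum_congr rfl fun r _ => ?_
  ring

lemma cov_identity {ι : Type*} (s : Finset ι) (p f g : ι → ℝ) (hp : ∑ a ∈ s, p a = 1) :
    ∑ a ∈ s, ∑ b ∈ s, (1 / 2 * p a * p b) * ((f a - f b) * (g a - g b)) =
      ∑ a ∈ s, p a * f a * g a - (∑ a ∈ s, p a * f a) * (∑ a ∈ s, p a * g a) := by
  have e : ∀ a b, (1 / 2 * p a * p b) * ((f a - f b) * (g a - g b)) =
      1 / 2 * ((p a * f a * g a) * p b) + 1 / 2 * (p a * (p b * f b * g b))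
      - 1 / 2 * ((p a * f a) * (p b * g b)) - 1 / 2 * ((p a * g a) * (p b * f b)) := by
    intro a b; ring
  simp only [e, Finset.sum_sub_distrib, Finset.sum_add_distrib, ← Finset.mul_sum,
    ← Finset.sum_mul, hp]
  ring

lemma hasFDerivAt_mm {n : ℕ} {s : Finset (Fin n → ℤ)} (hs : s.Nonempty)
    {c : (Fin n → ℤ) → ℝ} (hc : ∀ a, 0 < c a) (x : Fin n → ℝ) :
    HasFDerivAt (mm s c) (LinearMap.toContinuousLinearMap (Matrix.toLin' (HH s c x))) x := by
  have hZ := (ZZ_pos hs hc x).ne'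
  rw [hasFDerivAt_pi']
  intro r
  have h1 : HasFDerivAt (fun x => ∑ a ∈ s, (c a * toR a r) * Real.exp (toR a ⬝ᵥ x))
      (∑ a ∈ s, ((c a * toR a r) * Real.exp (toR a ⬝ᵥ x)) • dotL (toR a)) x := by
    refine HasFDerivAt.fun_sum fun a _ => ?_
    simpa [smul_smul] using (hasFDerivAt_exp_dot (toR a) x).const_mul (c a * toR a r)
  have h2 := h1.fun_mul ((hasDerivAt_inv hZ).comp_hasFDerivAt x (hasFDerivAt_ZZ s c x))
  have e : (fun x => mm s c x r) = fun x =>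
      (∑ a ∈ s, (c a * toR a r) * Real.exp (toR a ⬝ᵥ x)) * (Inv.inv ∘ ZZ s c) x := by
    funext y
    simp only [mm, pp, Function.comp]
    rw [← div_eq_mul_inv, Finset.sum_div]
    refine Finset.sum_congr rfl fun a _ => ?_
    ring
  rw [e]
  refine h2.congr_fderiv ?_
  symm
  ext v
  have hid : ((Matrix.toLin' (HH s c x)) v) r =
      ∑ a ∈ s, ∑ b ∈ s, (1 / 2 * pp s c x a * pp s c x b) *
        ((toR a r - toR b r) * (toR a ⬝ᵥ v - toR b ⬝ᵥ v)) := by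
    simp only [Matrix.toLin'_apply, Matrix.mulVec, HH, dotProduct, Matrix.of_apply,
      Finset.sum_mul]
    rw [Finset.sum_comm]
    refine Finset.sum_congr rfl fun a _ => ?_
    rw [Finset.sum_comm]
    refine Finset.sum_congr rfl fun b _ => ?_
    rw [← Finset.sum_sub_distrib, Finset.mul_sum, Finset.mul_sum]
    refine Finset.sum_congr rfl fun t _ => ?_
    ring
  rw [cov_identity _ _ _ _ (pp_sum hs hc x)] at hid
  have e0 : (ContinuousLinearMap.proj (R := ℝ) (φ := fun _ : Fin n => ℝ) r ∘SL
      LinearMap.toContinuousLinearMap (Matrix.toLin' (HH s c x))) v =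
      ((Matrix.toLin' (HH s c x)) v) r := rfl
  rw [e0, hid]
  simp only [ContinuousLinearMap.add_apply, ContinuousLinearMap.smul_apply, Function.comp,
    ContinuousLinearMap.sum_apply, dotL_apply, smul_eq_mul]
  have q1 : ∑ a ∈ s, pp s c x a * toR a r * toR a ⬝ᵥ v =
     (∑ a ∈ s, ((c a * toR a r) * Real.exp (toR a ⬝ᵥ x)) * toR a ⬝ᵥ v) / ZZ s c x := by
    rw [Finset.sum_div]; refine Finset.sum_congr rfl fun a _ => ?_
    unfold pp; ring
  have q2 : ∑ a ∈ s, pp s c x a * toR a r =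
     (∑ a ∈ s, ((c a * toR a r) * Real.exp (toR a ⬝ᵥ x))) / ZZ s c x := by
    rw [Finset.sum_div]; refine Finset.sum_congr rfl fun a _ => ?_
    unfold pp; ring
  have q3 : ∑ a ∈ s, pp s c x a * toR a ⬝ᵥ v =
     (∑ a ∈ s, ((c a) * Real.exp (toR a ⬝ᵥ x)) * toR a ⬝ᵥ v) / ZZ s c x := by
    rw [Finset.sum_div]; refine Finset.sum_congr rfl fun a _ => ?_
    unfold pp; ring
  rw [q1, q2, q3]
  field_simp
  ring

lemma toR_sub {n : ℕ} (a b : Fin n → ℤ) : toR (a - b) = toR a - toR b := by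
  funext j; simp [toR]

lemma mm_mem {n : ℕ} {s : Finset (Fin n → ℤ)} (hs : s.Nonempty) {c : (Fin n → ℤ) → ℝ}
    (hc : ∀ a, 0 < c a) (x : Fin n → ℝ) :
    mm s c x ∈ convexHull ℝ (toR '' (s : Set (Fin n → ℤ))) := by
  have e : mm s c x = ∑ a ∈ s, pp s c x a • toR a := by
    funext r; simp [mm]
  rw [e]
  refine (convex_convexHull ℝ _).sum_mem (fun a _ => (pp_pos hs hc x a).le) (pp_sum hs hc x) ?_
  intro a ha
  exact subset_convexHull ℝ _ ⟨a, ha, rfl⟩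

lemma dot_le_log {n : ℕ} {s : Finset (Fin n → ℤ)} (hs : s.Nonempty) {c : (Fin n → ℤ) → ℝ}
    (hc : ∀ a, 0 < c a) : ∃ M : ℝ, ∀ x, ∀ z ∈ convexHull ℝ (toR '' (s : Set (Fin n → ℤ))),
      z ⬝ᵥ x ≤ Real.log (ZZ s c x) + M := by
  obtain ⟨a0, -, ha0⟩ := s.exists_max_image (fun a => - Real.log (c a)) hs
  refine ⟨- Real.log (c a0), fun x z hz => ?_⟩
  have hconv : Convex ℝ {z : Fin n → ℝ | z ⬝ᵥ x ≤ Real.log (ZZ s c x) + - Real.log (c a0)} := by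
    refine convex_halfSpace_le (f := fun z : Fin n → ℝ => z ⬝ᵥ x) ?_ _
    exact ⟨fun a b => add_dotProduct a b x, fun r a => smul_dotProduct r a x⟩
  refine convexHull_min ?_ hconv hz
  rintro _ ⟨a, ha, rfl⟩
  have h1 : c a * Real.exp (toR a ⬝ᵥ x) ≤ ZZ s c x :=
    Finset.single_le_sum (f := fun a => c a * Real.exp (toR a ⬝ᵥ x))
      (fun b _ => (mul_pos (hc b) (Real.exp_pos _)).le) ha
  have h2 := Real.log_le_log (mul_pos (hc a) (Real.exp_pos _)) h1
  rw [Real.log_mul (hc a).ne' (Real.exp_pos _).ne', Real.log_exp] at h2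
  have h3 := ha0 a ha
  simp only [Set.mem_setOf_eq]
  linarith

lemma log_mono_nonneg {a b : ℝ} (ha : 0 < a) (hb : 0 < b) :
    0 ≤ (a - b) * (Real.log a - Real.log b) := by
  rcases le_total a b with h | h
  · have := Real.log_le_log ha h
    nlinarith
  · have := Real.log_le_log hb h
    nlinarith

lemma log_mono_eq {a b : ℝ} (ha : 0 < a) (hb : 0 < b)
    (h0 : (a - b) * (Real.log a - Real.log b) = 0) : a = b := by
  rcases mul_eq_zero.1 h0 with h | h
  · linarith
  · exact Real.log_injOn_pos ha hb (by linarith)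

lemma log_pp {n : ℕ} {s : Finset (Fin n → ℤ)} (hs : s.Nonempty) {c : (Fin n → ℤ) → ℝ}
    (hc : ∀ a, 0 < c a) (x : Fin n → ℝ) (a) :
    Real.log (pp s c x a) = Real.log (c a) + toR a ⬝ᵥ x - Real.log (ZZ s c x) := by
  unfold pp
  rw [Real.log_div (mul_pos (hc a) (Real.exp_pos _)).ne' (ZZ_pos hs hc x).ne',
    Real.log_mul (hc a).ne' (Real.exp_pos _).ne', Real.log_exp]

lemma mm_mono {n : ℕ} {s : Finset (Fin n → ℤ)} (hs : s.Nonempty) {c : (Fin n → ℤ) → ℝ}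
    (hc : ∀ a, 0 < c a) (x y : Fin n → ℝ) :
    (mm s c x - mm s c y) ⬝ᵥ (x - y) = ∑ a ∈ s, (pp s c x a - pp s c y a) *
      (Real.log (pp s c x a) - Real.log (pp s c y a)) := by
  have e : (mm s c x - mm s c y) ⬝ᵥ (x - y) =
      ∑ a ∈ s, (pp s c x a - pp s c y a) * (toR a ⬝ᵥ x - toR a ⬝ᵥ y) := by
    have e1 : mm s c x - mm s c y = ∑ a ∈ s, (pp s c x a - pp s c y a) • toR a := by
      funext r; simp [mm, sub_mul]
    rw [e1, sum_dotProduct]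
    refine Finset.sum_congr rfl fun a _ => ?_
    rw [smul_dotProduct, dotProduct_sub, smul_eq_mul]
  have e2 : ∑ a ∈ s, (pp s c x a - pp s c y a) *
      (Real.log (pp s c x a) - Real.log (pp s c y a)) =
      ∑ a ∈ s, (pp s c x a - pp s c y a) * (toR a ⬝ᵥ x - toR a ⬝ᵥ y) -
      (∑ a ∈ s, (pp s c x a - pp s c y a)) * (Real.log (ZZ s c x) - Real.log (ZZ s c y)) := by
    rw [Finset.sum_mul, ← Finset.sum_sub_distrib]
    refine Finset.sum_congr rfl fun a _ => ?_
    rw [log_pp hs hc, log_pp hs hc]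
    ring
  rw [e, e2, Finset.sum_sub_distrib, pp_sum hs hc, pp_sum hs hc]
  ring

/-- Nondegeneracy of the subtuple indexed by `S`. -/
def Nondeg {n : ℕ} (A : Fin n → Finset (Fin n → ℤ)) (S : Finset (Fin n)) : Prop :=
  ∀ v : Fin n → ℝ, (∀ i ∈ S, ∀ a ∈ A i, ∀ b ∈ A i, (toR a - toR b) ⬝ᵥ v = 0) → v = 0

lemma mS_injective {n : ℕ} {A : Fin n → Finset (Fin n → ℤ)} (hA : ∀ i, (A i).Nonempty)
    {c : Fin n → (Fin n → ℤ) → ℝ} (hc : ∀ i a, 0 < c i a) {S : Finset (Fin n)}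
    (hS : Nondeg A S) : Function.Injective (fun x => ∑ i ∈ S, mm (A i) (c i) x) := by
  intro x y hxy
  have h0 : ∑ i ∈ S, (mm (A i) (c i) x - mm (A i) (c i) y) ⬝ᵥ (x - y) = 0 := by
    rw [← sum_dotProduct, Finset.sum_sub_distrib]
    simp only at hxy
    rw [hxy, sub_self, zero_dotProduct]
  have hnn : ∀ i ∈ S, 0 ≤ (mm (A i) (c i) x - mm (A i) (c i) y) ⬝ᵥ (x - y) := by
    intro i _
    rw [mm_mono (hA i) (hc i)]
    exact Finset.sum_nonneg fun a _ =>
      log_mono_nonneg (pp_pos (hA i) (hc i) x a) (pp_pos (hA i) (hc i) y a)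
  rw [Finset.sum_eq_zero_iff_of_nonneg hnn] at h0
  have key : x - y = 0 := by
    apply hS
    intro i hi a ha b hb
    have h1 := h0 i hi
    rw [mm_mono (hA i) (hc i), Finset.sum_eq_zero_iff_of_nonneg (fun a _ =>
      log_mono_nonneg (pp_pos (hA i) (hc i) x a) (pp_pos (hA i) (hc i) y a))] at h1
    have ea := congrArg Real.log
      (log_mono_eq (pp_pos (hA i) (hc i) x a) (pp_pos (hA i) (hc i) y a) (h1 a ha))
    have eb := congrArg Real.log
      (log_mono_eq (pp_pos (hA i) (hc i) x b) (pp_pos (hA i) (hc i) y b) (h1 b hb))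
    rw [log_pp (hA i) (hc i), log_pp (hA i) (hc i)] at ea eb
    rw [sub_dotProduct, dotProduct_sub, dotProduct_sub]
    linarith
  exact sub_eq_zero.1 key

lemma mS_surj {n : ℕ} {A : Fin n → Finset (Fin n → ℤ)} (hA : ∀ i, (A i).Nonempty)
    {c : Fin n → (Fin n → ℤ) → ℝ} (hc : ∀ i a, 0 < c i a) (S : Finset (Fin n))
    {y : Fin n → ℝ}
    (hy : y ∈ interior (convexHull ℝ (∑ i ∈ S, toR '' (A i : Set (Fin n → ℤ))))) :
    ∃ x, ∑ i ∈ S, mm (A i) (c i) x = y := by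
  choose M hM using fun i => dot_le_log (hA i) (hc i)
  set G : (Fin n → ℝ) → ℝ := fun x => ∑ i ∈ S, Real.log (ZZ (A i) (c i) x) - y ⬝ᵥ x with hG
  have hGd : ∀ x, HasFDerivAt G (∑ i ∈ S, dotL (mm (A i) (c i) x) - dotL y) x := by
    intro x
    refine HasFDerivAt.fun_sub (HasFDerivAt.fun_sum fun i _ => hasFDerivAt_logZZ (hA i) (hc i) x) ?_
    have := (dotL y).hasFDerivAt (x := x)
    have e : dotProduct y = ⇑(dotL y) := by funext x; rw [dotL_apply]
    rw [e]; exact this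
  have hGc : Continuous G := continuous_iff_continuousAt.2 fun x => (hGd x).continuousAt
  obtain ⟨r, hr, hball⟩ := Metric.mem_nhds_iff.1 (mem_interior_iff_mem_nhds.1 hy)
  have hcoer : ∀ x, r / 2 * ‖x‖ - ∑ i ∈ S, M i ≤ G x := by
    intro x
    set z : Fin n → ℝ := y + fun j => (r / 2) * (SignType.sign (x j) : ℝ) with hz
    have hzb : z ∈ Metric.ball y r := by
      rw [mem_ball_iff_norm, hz, add_sub_cancel_left]
      refine lt_of_le_of_lt ((pi_norm_le_iff_of_nonneg (by positivity)).2 ?_) (half_lt_self hr)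
      intro j
      rw [norm_mul, Real.norm_of_nonneg (by positivity : (0:ℝ) ≤ r / 2)]
      have : ‖((SignType.sign (x j) : SignType) : ℝ)‖ ≤ 1 := by
        rcases SignType.sign (x j) with _ | _ | _ <;> simp
      nlinarith
    have hzK := hball hzb
    rw [convexHull_sum, Set.mem_finset_sum] at hzK
    obtain ⟨g, hg, hgz⟩ := hzK
    have h1 : z ⬝ᵥ x ≤ ∑ i ∈ S, (Real.log (ZZ (A i) (c i) x) + M i) := by
      rw [← hgz, sum_dotProduct]
      exact Finset.sum_le_sum fun i hi => hM i x _ (hg hi)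
    have h2 : z ⬝ᵥ x = y ⬝ᵥ x + r / 2 * ∑ j, |x j| := by
      rw [hz, add_dotProduct]
      congr 1
      simp only [dotProduct]
      rw [Finset.mul_sum]
      refine Finset.sum_congr rfl fun j _ => ?_
      rw [mul_assoc, sign_mul_self]
    have h3 : ‖x‖ ≤ ∑ j, |x j| := by
      refine (pi_norm_le_iff_of_nonneg (Finset.sum_nonneg fun _ _ => abs_nonneg _)).2 fun j => ?_
      exact Finset.single_le_sum (f := fun j => |x j|) (fun _ _ => abs_nonneg _) (Finset.mem_univ j)
    rw [Finset.sum_add_distrib] at h1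
    simp only [hG]
    nlinarith
  have htend : Filter.Tendsto G (Filter.cocompact _) Filter.atTop := by
    refine Filter.tendsto_atTop_mono hcoer ?_
    apply Filter.tendsto_atTop_add_const_right
    exact Filter.Tendsto.const_mul_atTop (by positivity) (tendsto_norm_cocompact_atTop)
  obtain ⟨x, hx⟩ := hGc.exists_forall_le htend
  refine ⟨x, ?_⟩
  have hmin : IsLocalMin G x := Filter.Eventually.of_forall hx
  have h0 := hmin.hasFDerivAt_eq_zero (hGd x)
  funext j
  have := congrArg (fun f : (Fin n → ℝ) →L[ℝ] ℝ => f (Pi.single j 1)) h0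
  simp only [ContinuousLinearMap.sub_apply, ContinuousLinearMap.sum_apply, dotL_apply,
    dotProduct_single_one, ContinuousLinearMap.zero_apply] at this
  rw [Finset.sum_apply]
  linarith

lemma convexHull_tuple_compact {n : ℕ} (A : Fin n → Finset (Fin n → ℤ)) (S : Finset (Fin n)) :
    IsCompact (convexHull ℝ (∑ i ∈ S, toR '' (A i : Set (Fin n → ℤ)))) := by
  apply Set.Finite.isCompact_convexHull
  induction S using Finset.induction_on with
  | empty => simp
  | insert i S hi ih =>
    rw [Finset.sum_insert hi]
    exact Set.Finite.add (((A i).finite_toSet).image _) ih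

lemma HH_mulVec {n : ℕ} (s : Finset (Fin n → ℤ)) (c : (Fin n → ℤ) → ℝ) (x v : Fin n → ℝ) (r) :
    (HH s c x).mulVec v r = ∑ a ∈ s, ∑ b ∈ s, (1 / 2 * pp s c x a * pp s c x b) *
        ((toR a r - toR b r) * ((toR a - toR b) ⬝ᵥ v)) := by
  simp only [Matrix.mulVec, HH, dotProduct, Matrix.of_apply, Finset.sum_mul]
  rw [Finset.sum_comm]
  refine Finset.sum_congr rfl fun a _ => ?_
  rw [Finset.sum_comm]
  refine Finset.sum_congr rfl fun b _ => ?_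
  rw [Finset.mul_sum, Finset.mul_sum]
  refine Finset.sum_congr rfl fun t _ => ?_
  simp only [Pi.sub_apply]
  ring

lemma HH_posSemidef {n : ℕ} {s : Finset (Fin n → ℤ)} (hs : s.Nonempty) {c : (Fin n → ℤ) → ℝ}
    (hc : ∀ a, 0 < c a) (x : Fin n → ℝ) : (HH s c x).PosSemidef := by
  refine Matrix.PosSemidef.of_dotProduct_mulVec_nonneg ?_ ?_
  · ext r t
    simp only [Matrix.conjTranspose_apply, HH, Matrix.of_apply, star_trivial]
    refine Finset.sum_congr rfl fun a _ => Finset.sum_congr rfl fun b _ => ?_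
    ring
  · intro v
    have : star v ⬝ᵥ (HH s c x).mulVec v = ∑ a ∈ s, ∑ b ∈ s, (1 / 2 * pp s c x a * pp s c x b) *
        ((toR a - toR b) ⬝ᵥ v * ((toR a - toR b) ⬝ᵥ v)) := by
      simp only [dotProduct, HH_mulVec, Finset.mul_sum, star_trivial]
      rw [Finset.sum_comm]
      refine Finset.sum_congr rfl fun a _ => ?_
      rw [Finset.sum_comm]
      refine Finset.sum_congr rfl fun b _ => ?_
      rw [Finset.sum_comm]
      simp only [Finset.sum_mul, Finset.mul_sum, Pi.sub_apply]
      refine Finset.sum_congr rfl fun a _ => Finset.sum_congr rfl fun b _ => ?_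
      ring
    rw [this]
    refine Finset.sum_nonneg fun a _ => Finset.sum_nonneg fun b _ => ?_
    have h1 := pp_pos hs hc x a
    have h2 := pp_pos hs hc x b
    exact mul_nonneg (by positivity) (mul_self_nonneg _)

lemma HS_det_nonneg {n : ℕ} {A : Fin n → Finset (Fin n → ℤ)} (hA : ∀ i, (A i).Nonempty)
    {c : Fin n → (Fin n → ℤ) → ℝ} (hc : ∀ i a, 0 < c i a) (S : Finset (Fin n)) (x) :
    0 ≤ (∑ i ∈ S, HH (A i) (c i) x).det := by
  apply Matrix.PosSemidef.det_nonneg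
  exact Matrix.posSemidef_sum S fun i _ => HH_posSemidef (hA i) (hc i) x

lemma volume_degenerate {n : ℕ} {A : Fin n → Finset (Fin n → ℤ)} (hA : ∀ i, (A i).Nonempty)
    {S : Finset (Fin n)} {v : Fin n → ℝ} (hv : v ≠ 0)
    (h : ∀ i ∈ S, ∀ a ∈ A i, ∀ b ∈ A i, (toR a - toR b) ⬝ᵥ v = 0) :
    volume (convexHull ℝ (∑ i ∈ S, toR '' (A i : Set (Fin n → ℤ)))) = 0 := by
  choose a0 ha0 using hA
  set t : ℝ := ∑ i ∈ S, toR (a0 i) ⬝ᵥ v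
  have hsub : convexHull ℝ (∑ i ∈ S, toR '' (A i : Set (Fin n → ℤ))) ⊆
      {z : Fin n → ℝ | z ⬝ᵥ v = t} := by
    refine convexHull_min ?_ ?_
    · intro z hz
      rw [Set.mem_finset_sum] at hz
      obtain ⟨g, hg, rfl⟩ := hz
      simp only [Set.mem_setOf_eq, sum_dotProduct, t]
      refine Finset.sum_congr rfl fun i hi => ?_
      obtain ⟨a, ha, hga⟩ := hg hi
      have := h i hi a ha (a0 i) (ha0 i)
      rw [← hga]
      rw [sub_dotProduct] at this
      linarith
    · exact convex_hyperplane (f := fun z : Fin n → ℝ => z ⬝ᵥ v)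
        ⟨fun a b => add_dotProduct a b v, fun r a => smul_dotProduct r a v⟩ t
  refine measure_mono_null hsub ?_
  let L : AffineSubspace ℝ (Fin n → ℝ) :=
    { carrier := {z : Fin n → ℝ | z ⬝ᵥ v = t}
      smul_vsub_vadd_mem' := by
        intro r p q w hp hq hw
        simp only [Set.mem_setOf_eq] at *
        simp [add_dotProduct, smul_dotProduct, sub_dotProduct, hp, hq, hw] }
  refine Measure.addHaar_affineSubspace volume L ?_
  intro hL
  have hall : ∀ z : Fin n → ℝ, z ⬝ᵥ v = t := by
    intro z
    have : z ∈ L := by rw [hL]; trivial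
    exact this
  have h0 := hall 0
  have h1 := hall v
  rw [zero_dotProduct] at h0
  rw [← h0] at h1
  exact hv (dotProduct_self_eq_zero.1 h1)

theorem volume_eq_lintegral {n : ℕ} {A : Fin n → Finset (Fin n → ℤ)} (hA : ∀ i, (A i).Nonempty)
    {c : Fin n → (Fin n → ℤ) → ℝ} (hc : ∀ i a, 0 < c i a) (S : Finset (Fin n)) :
    ∫⁻ x, ENNReal.ofReal (∑ i ∈ S, HH (A i) (c i) x).det =
      volume (convexHull ℝ (∑ i ∈ S, toR '' (A i : Set (Fin n → ℤ)))) := by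
  by_cases hS : Nondeg A S
  · have hd : ∀ x, HasFDerivAt (fun x => ∑ i ∈ S, mm (A i) (c i) x)
        (LinearMap.toContinuousLinearMap (Matrix.toLin' (∑ i ∈ S, HH (A i) (c i) x))) x := by
      intro x
      have := HasFDerivAt.fun_sum (u := S) fun i _ => hasFDerivAt_mm (hA i) (hc i) x
      refine this.congr_fderiv ?_
      simp [map_sum]
    have h := lintegral_abs_det_fderiv_eq_addHaar_image volume MeasurableSet.univ
      (fun x _ => (hd x).hasFDerivWithinAt) (mS_injective hA hc hS).injOn
    have e : ∀ x, |(LinearMap.toContinuousLinearMap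
        (Matrix.toLin' (∑ i ∈ S, HH (A i) (c i) x))).det| = (∑ i ∈ S, HH (A i) (c i) x).det := by
      intro x
      rw [LinearMap.det_toContinuousLinearMap, LinearMap.det_toLin',
        abs_of_nonneg (HS_det_nonneg hA hc S x)]
    simp only [e, Measure.restrict_univ, Set.image_univ] at h
    rw [h]
    set K := convexHull ℝ (∑ i ∈ S, toR '' (A i : Set (Fin n → ℤ)))
    have hK : Convex ℝ K := convex_convexHull ℝ _
    apply le_antisymm
    · apply measure_mono
      rintro _ ⟨x, rfl⟩
      simp only [K]
      rw [convexHull_sum]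
      exact Set.finsetSum_mem_finsetSum S _ _ fun i _ => mm_mem (hA i) (hc i) x
    · have h1 : volume K ≤ volume (interior K) := by
        have : K ⊆ interior K ∪ frontier K := by
          rw [← closure_eq_interior_union_frontier]; exact subset_closure
        calc volume K ≤ _ := measure_mono this
          _ ≤ _ := measure_union_le _ _
          _ = _ := by rw [hK.addHaar_frontier volume, add_zero]
      refine h1.trans (measure_mono ?_)
      intro y hy
      obtain ⟨x, hx⟩ := mS_surj hA hc S hy
      exact ⟨x, hx⟩
  · unfold Nondeg at hS
    push Not at hS
    obtain ⟨v, hv, hv0⟩ := hS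
    rw [volume_degenerate hA hv0 hv]
    have : ∀ x, (∑ i ∈ S, HH (A i) (c i) x).det = 0 := by
      intro x
      rw [← Matrix.exists_mulVec_eq_zero_iff]
      refine ⟨v, hv0, ?_⟩
      rw [Matrix.sum_mulVec]
      refine Finset.sum_eq_zero fun i hi => ?_
      funext r
      rw [HH_mulVec]
      refine Finset.sum_eq_zero fun a ha => Finset.sum_eq_zero fun b hb => ?_
      rw [hv i hi a ha b hb]; simp
    simp [this]

/-! ### The mixed discriminant formula -/

lemma incl_excl {n : ℕ} (T : Finset (Fin n)) :
    ∑ S ∈ (Finset.univ : Finset (Fin n)).powerset, (if T ⊆ S then (-1 : ℝ) ^ (n - S.card) else 0)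
      = if T = Finset.univ then 1 else 0 := by
  have h := Finset.sum_powerset_neg_one_pow_card (x := Tᶜ)
  have e : ∑ S ∈ (Finset.univ : Finset (Fin n)).powerset,
      (if T ⊆ S then (-1 : ℝ) ^ (n - S.card) else 0) =
      ∑ U ∈ (Tᶜ).powerset, (-1 : ℝ) ^ U.card := by
    rw [← Finset.sum_filter]
    refine Finset.sum_nbij' (fun S => Sᶜ) (fun S => Sᶜ) ?_ ?_ ?_ ?_ ?_
    · intro S hS
      simp only [Finset.mem_filter] at hS
      simp only [Finset.mem_powerset]
      exact Finset.compl_subset_compl.2 hS.2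
    · intro S hS
      simp only [Finset.mem_powerset] at hS
      simp only [Finset.mem_filter, Finset.mem_powerset, Finset.subset_univ, true_and]
      rw [← Finset.compl_subset_compl, compl_compl]; exact hS
    · intro S _; simp
    · intro S _; simp
    · intro S _
      rw [Finset.card_compl, Fintype.card_fin]
  rw [e]
  have h2 : ((∑ U ∈ (Tᶜ).powerset, (-1 : ℤ) ^ U.card : ℤ) : ℝ) =
      ((if Tᶜ = ∅ then 1 else 0 : ℤ) : ℝ) := by rw [h]
  push_cast at h2
  rw [h2]
  simp

lemma polarization {n : ℕ} (H : Fin n → Matrix (Fin n) (Fin n) ℝ) :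
    ∑ S ∈ (Finset.univ : Finset (Fin n)).powerset,
      (-1 : ℝ) ^ (n - S.card) * (∑ i ∈ S, H i).det =
    ∑ σ : Equiv.Perm (Fin n), ((Equiv.Perm.sign σ : ℤ) : ℝ) *
      (Matrix.of fun i => H i (σ i)).det := by
  have h1 : ∀ S : Finset (Fin n), (∑ i ∈ S, H i).det =
      ∑ f : Fin n → Fin n, if Finset.univ.image f ⊆ S then
        (Matrix.of fun r => H (f r) r).det else 0 := by
    intro S
    have h := MultilinearMap.map_sum_finset
      (Matrix.detRowAlternating (n := Fin n) (R := ℝ)).toMultilinearMap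
      (fun (r : Fin n) (i : Fin n) => H i r) (fun _ => S)
    have e : (∑ i ∈ S, H i).det = (Matrix.detRowAlternating (n := Fin n) (R := ℝ)).toMultilinearMap
        (fun r => ∑ i ∈ S, H i r) := by
      change Matrix.det _ = Matrix.det _
      congr 1
      ext r t
      rw [Matrix.sum_apply]
      exact (Finset.sum_apply t S (fun i => H i r)).symm
    rw [e, h, ← Finset.sum_filter]
    refine Finset.sum_congr ?_ fun f _ => rfl
    ext f
    simp [Finset.image_subset_iff]
  calc _ = ∑ f : Fin n → Fin n, (∑ S ∈ (Finset.univ : Finset (Fin n)).powerset,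
          (if Finset.univ.image f ⊆ S then (-1 : ℝ) ^ (n - S.card) else 0)) *
            (Matrix.of fun r => H (f r) r).det := by
        simp only [h1, Finset.mul_sum, Finset.sum_mul]
        rw [Finset.sum_comm]
        refine Finset.sum_congr rfl fun f _ => Finset.sum_congr rfl fun S _ => ?_
        split_ifs <;> simp
    _ = ∑ f ∈ Finset.univ.filter (fun f : Fin n → Fin n => Function.Bijective f),
            (Matrix.of fun r => H (f r) r).det := by
        rw [Finset.sum_filter]
        refine Finset.sum_congr rfl fun f _ => ?_
        rw [incl_excl]
        have : (Finset.univ.image f = Finset.univ) ↔ Function.Bijective f := by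
          rw [← Finite.surjective_iff_bijective, Finset.eq_univ_iff_forall]
          simp [Function.Surjective]
        by_cases hf : Function.Bijective f
        · rw [if_pos (this.2 hf), if_pos hf, one_mul]
        · rw [if_neg (fun h => hf (this.1 h)), if_neg hf, zero_mul]
    _ = ∑ σ : Equiv.Perm (Fin n), (Matrix.of fun r => H (σ r) r).det := by
        symm
        refine Finset.sum_bij (fun σ _ => (σ : Fin n → Fin n)) ?_ ?_ ?_ ?_
        · intro σ _; simp only [Finset.mem_filter, Finset.mem_univ, true_and]; exact σ.bijective
        · intro σ _ τ _ h; exact DFunLike.coe_injective h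
        · intro f hf
          simp only [Finset.mem_filter] at hf
          exact ⟨Equiv.ofBijective f hf.2, Finset.mem_univ _, rfl⟩
        · intro σ _; rfl
    _ = _ := by
        rw [← Equiv.sum_comp (Equiv.inv (Equiv.Perm (Fin n)))]
        refine Finset.sum_congr rfl fun σ _ => ?_
        have := Matrix.det_permute σ (Matrix.of fun r => H ((Equiv.inv _ σ) r) r)
        have e : ((Matrix.of fun r => H ((Equiv.inv (Equiv.Perm (Fin n)) σ) r) r).submatrix σ id) =
            Matrix.of fun i => H i (σ i) := by
          ext i t
          simp
        rw [e] at this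
        rw [this, ← mul_assoc]
        have s2 : ((Equiv.Perm.sign σ : ℤ) : ℝ) * ((Equiv.Perm.sign σ : ℤ) : ℝ) = 1 := by
          rw [← Int.cast_mul, ← Units.val_mul, Int.units_mul_self]; simp
        rw [s2, one_mul]

lemma mixed_disc {n : ℕ} {κ : Type*} [DecidableEq κ] (E : Fin n → Finset κ) (q : Fin n → κ → ℝ)
    (v : κ → Fin n → ℝ) (H : Fin n → Matrix (Fin n) (Fin n) ℝ)
    (hH : ∀ i r t, H i r t = ∑ e ∈ E i, q i e * (v e r * v e t)) :
    ∑ S ∈ (Finset.univ : Finset (Fin n)).powerset,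
      (-1 : ℝ) ^ (n - S.card) * (∑ i ∈ S, H i).det =
    ∑ e ∈ Fintype.piFinset E, (∏ i, q i (e i)) * (Matrix.of fun i => v (e i)).det ^ 2 := by
  rw [polarization]
  have h1 : ∀ σ : Equiv.Perm (Fin n), (Matrix.of fun i => H i (σ i)).det =
      ∑ e ∈ Fintype.piFinset E, (∏ i, q i (e i) * v (e i) (σ i)) *
        (Matrix.of fun i => v (e i)).det := by
    intro σ
    have h := MultilinearMap.map_sum_finset
      (Matrix.detRowAlternating (n := Fin n) (R := ℝ)).toMultilinearMap
      (fun (i : Fin n) (e : κ) => (q i e * v e (σ i)) • v e) E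
    have e : (Matrix.of fun i => H i (σ i)).det =
        (Matrix.detRowAlternating (n := Fin n) (R := ℝ)).toMultilinearMap
        (fun i => ∑ e ∈ E i, (q i e * v e (σ i)) • v e) := by
      change Matrix.det _ = Matrix.det _
      congr 1
      ext i t
      simp only [Matrix.of_apply, hH]
      rw [Finset.sum_apply]
      refine Finset.sum_congr rfl fun e _ => ?_
      simp only [Pi.smul_apply, smul_eq_mul]; ring
    rw [e, h]
    refine Finset.sum_congr rfl fun e _ => ?_
    rw [MultilinearMap.map_smul_univ]
    rfl
  simp only [h1, Finset.mul_sum]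
  rw [Finset.sum_comm]
  refine Finset.sum_congr rfl fun e _ => ?_
  have h2 : (Matrix.of fun i => v (e i)).det =
      ∑ σ : Equiv.Perm (Fin n), ((Equiv.Perm.sign σ : ℤ) : ℝ) * ∏ i, v (e i) (σ i) := by
    rw [← Matrix.det_transpose, Matrix.det_apply']
    rfl
  rw [pow_two]
  nth_rw 2 [h2]
  rw [Finset.sum_mul, Finset.mul_sum]
  refine Finset.sum_congr rfl fun σ _ => ?_
  rw [Finset.prod_mul_distrib]
  ring

/-- The integrand of the mixed volume. -/
noncomputable def DD {n : ℕ} (A : Fin n → Finset (Fin n → ℤ)) (c : Fin n → (Fin n → ℤ) → ℝ)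
    (x : Fin n → ℝ) : ℝ :=
  ∑ e ∈ Fintype.piFinset (fun i => A i ×ˢ A i),
    (∏ i, (1 / 2 * pp (A i) (c i) x (e i).1 * pp (A i) (c i) x (e i).2)) *
      (Matrix.of fun i => toR (e i).1 - toR (e i).2).det ^ 2

lemma DD_eq {n : ℕ} (A : Fin n → Finset (Fin n → ℤ)) (c : Fin n → (Fin n → ℤ) → ℝ)
    (x : Fin n → ℝ) :
    ∑ S ∈ (Finset.univ : Finset (Fin n)).powerset,
      (-1 : ℝ) ^ (n - S.card) * (∑ i ∈ S, HH (A i) (c i) x).det = DD A c x := by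
  unfold DD
  rw [mixed_disc (fun i => A i ×ˢ A i)
    (fun i e => 1 / 2 * pp (A i) (c i) x e.1 * pp (A i) (c i) x e.2)
    (fun e => toR e.1 - toR e.2)]
  intro i r t
  rw [Finset.sum_product]
  rfl

lemma integral_HS {n : ℕ} {A : Fin n → Finset (Fin n → ℤ)} (hA : ∀ i, (A i).Nonempty)
    {c : Fin n → (Fin n → ℤ) → ℝ} (hc : ∀ i a, 0 < c i a) (S : Finset (Fin n)) :
    Integrable (fun x => (∑ i ∈ S, HH (A i) (c i) x).det) ∧
    ∫ x, (∑ i ∈ S, HH (A i) (c i) x).det =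
      (volume (convexHull ℝ (∑ i ∈ S, toR '' (A i : Set (Fin n → ℤ))))).toReal := by
  have hcont : Continuous (fun x => (∑ i ∈ S, HH (A i) (c i) x).det) := by
    apply Continuous.matrix_det
    refine continuous_finset_sum _ fun i _ => ?_
    refine continuous_matrix fun r t => ?_
    simp only [HH, Matrix.of_apply]
    have hp : ∀ a, Continuous fun x => pp (A i) (c i) x a := by
      intro a
      have hexp : ∀ a : Fin n → ℤ, Continuous fun x : Fin n → ℝ => Real.exp (toR a ⬝ᵥ x) :=
        fun a => continuous_iff_continuousAt.2 fun x => (hasFDerivAt_exp_dot (toR a) x).continuousAt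
      unfold pp
      refine Continuous.div (continuous_const.mul (hexp a)) ?_ fun x => (ZZ_pos (hA i) (hc i) x).ne'
      exact continuous_iff_continuousAt.2 fun x => (hasFDerivAt_ZZ (A i) (c i) x).continuousAt
    refine continuous_finset_sum _ fun a _ => continuous_finset_sum _ fun b _ => ?_
    exact ((continuous_const.mul (hp a)).mul (hp b)).mul continuous_const
  have hv := volume_eq_lintegral hA hc S
  have hfin : volume (convexHull ℝ (∑ i ∈ S, toR '' (A i : Set (Fin n → ℤ)))) ≠ ⊤ :=
    (convexHull_tuple_compact A S).measure_lt_top.ne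
  have hnn : 0 ≤ᵐ[volume] (fun x => (∑ i ∈ S, HH (A i) (c i) x).det) :=
    Filter.Eventually.of_forall (HS_det_nonneg hA hc S)
  constructor
  · refine ⟨hcont.aestronglyMeasurable, ?_⟩
    rw [hasFiniteIntegral_iff_ofReal hnn, hv]
    exact hfin.lt_top
  · rw [integral_eq_lintegral_of_nonneg_ae hnn hcont.aestronglyMeasurable, hv]

theorem MV_eq_integral {n : ℕ} (hn : 0 < n) {A : Fin n → Finset (Fin n → ℤ)}
    (hA : ∀ i, (A i).Nonempty) {c : Fin n → (Fin n → ℤ) → ℝ} (hc : ∀ i a, 0 < c i a) :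
    Integrable (DD A c) ∧ MV A = ∫ x, DD A c x := by
  have e : DD A c = fun x => ∑ S ∈ (Finset.univ : Finset (Fin n)).powerset,
      (-1 : ℝ) ^ (n - S.card) * (∑ i ∈ S, HH (A i) (c i) x).det := by
    funext x; rw [DD_eq]
  rw [e]
  have hintg : ∀ S ∈ (Finset.univ : Finset (Fin n)).powerset, Integrable (fun x =>
      (-1 : ℝ) ^ (n - S.card) * (∑ i ∈ S, HH (A i) (c i) x).det) := fun S _ =>
    (integral_HS hA hc S).1.const_mul _
  refine ⟨integrable_finset_sum _ hintg, ?_⟩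
  rw [integral_finset_sum _ hintg]
  unfold MV
  rw [Finset.sum_filter]
  refine Finset.sum_congr rfl fun S _ => ?_
  rw [integral_const_mul, (integral_HS hA hc S).2]
  by_cases hS : S.Nonempty
  · rw [if_pos hS]
  · rw [if_neg hS]
    rw [Finset.not_nonempty_iff_eq_empty] at hS
    subst hS
    have : Nonempty (Fin n) := ⟨⟨0, hn⟩⟩
    rw [← (integral_HS hA hc ∅).2]
    simp

/-! ### Lower bound for the mixed volume -/

lemma DD_nonneg {n : ℕ} {A : Fin n → Finset (Fin n → ℤ)} (hA : ∀ i, (A i).Nonempty)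
    {c : Fin n → (Fin n → ℤ) → ℝ} (hc : ∀ i a, 0 < c i a) (x) : 0 ≤ DD A c x := by
  refine Finset.sum_nonneg fun e _ => mul_nonneg (Finset.prod_nonneg fun i _ => ?_) (sq_nonneg _)
  have h1 := pp_pos (hA i) (hc i) x (e i).1
  have h2 := pp_pos (hA i) (hc i) x (e i).2
  positivity

lemma exists_det_ne_zero {n : ℕ} (hn : 0 < n) {A : Fin n → Finset (Fin n → ℤ)}
    (hA : ∀ i, (A i).Nonempty) (hV : MV A ≠ 0) :
    ∃ a b : Fin n → (Fin n → ℤ), (∀ i, a i ∈ A i) ∧ (∀ i, b i ∈ A i) ∧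
      (Matrix.of fun i => toR (a i) - toR (b i)).det ≠ 0 := by
  by_contra hcon
  push Not at hcon
  apply hV
  rw [(MV_eq_integral hn hA (c := fun _ _ => 1) (fun _ _ => one_pos)).2]
  have : ∀ x, DD A (fun _ _ => 1) x = 0 := by
    intro x
    refine Finset.sum_eq_zero fun e he => ?_
    simp only [Fintype.mem_piFinset, Finset.mem_product] at he
    rw [hcon (fun i => (e i).1) (fun i => (e i).2) (fun i => (he i).1) (fun i => (he i).2)]
    simp
  simp [this]

lemma exists_weight {n : ℕ} {s : Finset (Fin n → ℤ)} {a b : Fin n → ℤ} (ha : a ∈ s) (hb : b ∈ s)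
    {K : Set (Fin n → ℝ)} (hK : IsCompact K) :
    ∃ c : (Fin n → ℤ) → ℝ, (∀ a, 0 < c a) ∧ ∀ x ∈ K, |(toR a - toR b) ⬝ᵥ x| ≤ 1 →
      1 / 8 ≤ pp s c x a ∧ 1 / 8 ≤ pp s c x b := by
  have hexp : ∀ a : Fin n → ℤ, Continuous fun x : Fin n → ℝ => Real.exp (toR a ⬝ᵥ x) :=
    fun a => continuous_iff_continuousAt.2 fun x => (hasFDerivAt_exp_dot (toR a) x).continuousAt
  have hg : Continuous fun x : Fin n → ℝ =>
      (∑ e ∈ s, Real.exp (toR e ⬝ᵥ x)) / (Real.exp (toR a ⬝ᵥ x) + Real.exp (toR b ⬝ᵥ x)) := by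
    refine Continuous.div (continuous_finset_sum _ fun e _ => hexp e) ((hexp a).add (hexp b)) ?_
    intro x; positivity
  obtain ⟨M, hM⟩ := hK.bddAbove_image hg.continuousOn
  set ε : ℝ := 1 / max M 1 with hε
  have hm : 0 < max M 1 := lt_of_lt_of_le one_pos (le_max_right _ _)
  have hεp : 0 < ε := by positivity
  refine ⟨fun e => if e = a ∨ e = b then 1 else ε, ?_, ?_⟩
  · intro e; dsimp only; split_ifs <;> [exact one_pos; exact hεp]
  intro x hx hx1
  set α := Real.exp (toR a ⬝ᵥ x) with hα
  set β := Real.exp (toR b ⬝ᵥ x) with hβ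
  have hαp : 0 < α := Real.exp_pos _
  have hβp : 0 < β := Real.exp_pos _
  have h1 : ε * (∑ e ∈ s, Real.exp (toR e ⬝ᵥ x)) ≤ α + β := by
    have h : (∑ e ∈ s, Real.exp (toR e ⬝ᵥ x)) / (α + β) ≤ M := hM ⟨x, hx, rfl⟩
    rw [div_le_iff₀ (by positivity)] at h
    rw [hε, div_mul_eq_mul_div, one_mul, div_le_iff₀ hm]
    have := mul_le_mul_of_nonneg_right (le_max_left M 1) (by positivity : 0 ≤ α + β)
    linarith
  have hZ : ZZ s (fun e => if e = a ∨ e = b then 1 else ε) x ≤ 2 * (α + β) := by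
    have h2 : ZZ s (fun e => if e = a ∨ e = b then 1 else ε) x ≤
        ∑ e ∈ s, ((if e = a then Real.exp (toR e ⬝ᵥ x) else 0) +
          (if e = b then Real.exp (toR e ⬝ᵥ x) else 0) + ε * Real.exp (toR e ⬝ᵥ x)) := by
      refine Finset.sum_le_sum fun e _ => ?_
      have hp := Real.exp_pos (toR e ⬝ᵥ x)
      have hp2 := mul_pos hεp hp
      beta_reduce
      by_cases h1 : e = a
      · rw [if_pos (Or.inl h1), if_pos h1]
        split_ifs <;> linarith
      · rw [if_neg h1]
        by_cases h2 : e = b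
        · rw [if_pos (Or.inr h2), if_pos h2]; linarith
        · simp only [h1, h2, or_self, if_false]; linarith
    rw [Finset.sum_add_distrib, Finset.sum_add_distrib, Finset.sum_ite_eq', Finset.sum_ite_eq',
      if_pos ha, if_pos hb, ← Finset.mul_sum] at h2
    linarith
  rw [sub_dotProduct, abs_le] at hx1
  have he : Real.exp 1 ≤ 3 := by have := Real.exp_one_lt_d9; linarith
  have hab : α ≤ 3 * β := by
    have : α = β * Real.exp (toR a ⬝ᵥ x - toR b ⬝ᵥ x) := by
      rw [hα, hβ, ← Real.exp_add]; congr 1; ring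
    rw [this]
    have := Real.exp_le_exp.2 hx1.2
    nlinarith
  have hba : β ≤ 3 * α := by
    have : β = α * Real.exp (toR b ⬝ᵥ x - toR a ⬝ᵥ x) := by
      rw [hα, hβ, ← Real.exp_add]; congr 1; ring
    rw [this]
    have := Real.exp_le_exp.2 (by linarith : toR b ⬝ᵥ x - toR a ⬝ᵥ x ≤ 1)
    nlinarith
  have hZp : 0 < ZZ s (fun e => if e = a ∨ e = b then 1 else ε) x := by
    refine ZZ_pos ⟨a, ha⟩ ?_ x
    intro e; split_ifs <;> [exact one_pos; exact hεp]
  constructor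
  · unfold pp
    rw [le_div_iff₀ hZp]
    simp only [true_or, if_true, one_mul]
    rw [← hα]; linarith
  · unfold pp
    rw [le_div_iff₀ hZp]
    simp only [or_true, if_true, one_mul]
    rw [← hβ]; linarith

theorem det_le_MV {n : ℕ} (hn : 0 < n) {A : Fin n → Finset (Fin n → ℤ)}
    (hA : ∀ i, (A i).Nonempty) {a b : Fin n → (Fin n → ℤ)} (ha : ∀ i, a i ∈ A i)
    (hb : ∀ i, b i ∈ A i) :
    |(Matrix.of fun i => toR (a i) - toR (b i)).det| ≤ 64 ^ n * MV A := by
  set U : Matrix (Fin n) (Fin n) ℝ := Matrix.of fun i => toR (a i) - toR (b i) with hU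
  by_cases hd : U.det = 0
  · rw [hd, abs_zero, (MV_eq_integral hn hA (c := fun _ _ => 1) (fun _ _ => one_pos)).2]
    exact mul_nonneg (by positivity)
      (integral_nonneg fun x => DD_nonneg hA (fun _ _ => one_pos) x)
  set R : Set (Fin n → ℝ) := (Matrix.toLin' U) ⁻¹' (Set.Icc (-1) 1) with hR
  have hK : IsCompact ((Matrix.toLin' U⁻¹) '' (Set.Icc (-1 : Fin n → ℝ) 1)) :=
    isCompact_Icc.image (LinearMap.continuous_of_finiteDimensional _)
  have hRK : R ⊆ (Matrix.toLin' U⁻¹) '' (Set.Icc (-1 : Fin n → ℝ) 1) := by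
    intro x hx
    refine ⟨_, hx, ?_⟩
    rw [Matrix.toLin'_apply, Matrix.toLin'_apply, Matrix.mulVec_mulVec,
      Matrix.nonsing_inv_mul _ (isUnit_iff_ne_zero.2 hd), Matrix.one_mulVec]
  choose c hc hcb using fun i => exists_weight (ha i) (hb i) hK
  obtain ⟨hintg, hMV⟩ := MV_eq_integral hn hA hc
  have hvol : volume R = ENNReal.ofReal (|U.det|⁻¹ * 2 ^ n) := by
    rw [hR, Measure.addHaar_preimage_linearMap _ (by rwa [LinearMap.det_toLin']),
      LinearMap.det_toLin', Real.volume_Icc_pi, ENNReal.ofReal_mul (by positivity), abs_inv]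
    congr 1
    norm_num
  have hmeas : MeasurableSet R := by
    refine (LinearMap.continuous_of_finiteDimensional _).measurable measurableSet_Icc
  have hlow : ∀ x ∈ R, (1 / 128 : ℝ) ^ n * U.det ^ 2 ≤ DD A c x := by
    intro x hx
    have hx1 : ∀ i, |(toR (a i) - toR (b i)) ⬝ᵥ x| ≤ 1 := by
      intro i
      rw [abs_le]
      exact ⟨hx.1 i, hx.2 i⟩
    have hmem : (fun i => (a i, b i)) ∈ Fintype.piFinset (fun i => A i ×ˢ A i) := by
      simp [ha, hb]
    have h1 := Finset.single_le_sum (f := fun e : Fin n → (Fin n → ℤ) × (Fin n → ℤ) =>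
      (∏ i, (1 / 2 * pp (A i) (c i) x (e i).1 * pp (A i) (c i) x (e i).2)) *
      (Matrix.of fun i => toR (e i).1 - toR (e i).2).det ^ 2) (fun e _ => by
        refine mul_nonneg (Finset.prod_nonneg fun i _ => ?_) (sq_nonneg _)
        have h1 := pp_pos (hA i) (hc i) x (e i).1
        have h2 := pp_pos (hA i) (hc i) x (e i).2
        positivity) hmem
    refine le_trans ?_ h1
    refine mul_le_mul_of_nonneg_right ?_ (sq_nonneg _)
    calc (1 / 128 : ℝ) ^ n = ∏ i : Fin n, (1 / 128 : ℝ) := by simp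
      _ ≤ _ := by
        refine Finset.prod_le_prod (fun _ _ => by norm_num) fun i _ => ?_
        obtain ⟨h1, h2⟩ := hcb i x (hRK hx) (hx1 i)
        nlinarith
  have hfin : volume R ≠ ⊤ := by rw [hvol]; exact ENNReal.ofReal_ne_top
  have h1 : (1 / 128 : ℝ) ^ n * U.det ^ 2 * (|U.det|⁻¹ * 2 ^ n) ≤ MV A := by
    rw [hMV]
    calc _ = ∫ x in R, (1 / 128 : ℝ) ^ n * U.det ^ 2 := by
          rw [setIntegral_const, smul_eq_mul, Measure.real, hvol,
            ENNReal.toReal_ofReal (by positivity)]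
          ring
      _ ≤ ∫ x in R, DD A c x := by
          refine setIntegral_mono_on ?_ hintg.integrableOn hmeas hlow
          exact integrableOn_const hfin
      _ ≤ _ := setIntegral_le_integral hintg
          (Filter.Eventually.of_forall fun x => DD_nonneg hA hc x)
  have hd' : 0 < |U.det| := abs_pos.2 hd
  have e : (1 / 128 : ℝ) ^ n * U.det ^ 2 * (|U.det|⁻¹ * 2 ^ n) = |U.det| / 64 ^ n := by
    rw [← sq_abs]
    have : (128 : ℝ) ^ n = 64 ^ n * 2 ^ n := by rw [← mul_pow]; norm_num
    rw [one_div, inv_pow, this]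
    field_simp
  rw [e, div_le_iff₀ (by positivity)] at h1
  linarith

/-! ### The path lemma -/

theorem corner_bound (k : ℕ) (N : Matrix (Fin (k+1)) (Fin (k+1)) ℝ) (B Q : ℝ)
    (h1 : ∀ (l : Fin k) m, |N l.castSucc m| ≤ B)
    (h2 : ∀ l : Fin k, N l.castSucc l.succ = 1)
    (h3 : ∀ (l m : Fin k), l < m → N l.castSucc m.succ = 0)
    (h4 : ∀ m : Fin k, |N (Fin.last k) m.succ| ≤ B)
    (hQ : |N.det| ≤ Q) :
    |N (Fin.last k) 0| ≤ Q + k * (B * (k.factorial * B ^ k)) := by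
  rw [Matrix.det_succ_row N (Fin.last k), Fin.sum_univ_succ] at hQ
  have hm0 : (N.submatrix (Fin.last k).succAbove (0 : Fin (k+1)).succAbove).det = 1 := by
    rw [Matrix.det_of_lowerTriangular]
    · apply Finset.prod_eq_one
      intro i _
      simp [h2]
    · intro i j hij
      have : i < j := by simpa using hij
      simp [h3 i j this]
  rw [hm0] at hQ
  have hmin : ∀ m : Fin k, |(N.submatrix (Fin.last k).succAbove m.succ.succAbove).det|
      ≤ k.factorial * B ^ k := by
    intro m
    have := Matrix.det_le (A := N.submatrix (Fin.last k).succAbove m.succ.succAbove)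
      (abv := AbsoluteValue.abs) (x := B) (by
        intro i j
        simpa using h1 i _)
    simpa using this
  have hs : |∑ m : Fin k, (-1 : ℝ) ^ ((Fin.last k : ℕ) + (m.succ : ℕ)) * N (Fin.last k) m.succ *
      (N.submatrix (Fin.last k).succAbove m.succ.succAbove).det| ≤
      k * (B * (k.factorial * B ^ k)) := by
    refine (Finset.abs_sum_le_sum_abs _ _).trans ?_
    refine (Finset.sum_le_card_nsmul _ _ (B * (k.factorial * B ^ k)) ?_).trans ?_
    · intro m _
      rw [abs_mul, abs_mul, abs_pow, abs_neg, abs_one, one_pow, one_mul]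
      exact mul_le_mul (h4 m) (hmin m) (abs_nonneg _) ((abs_nonneg _).trans (h4 m))
    · simp
  have h0 : |(-1 : ℝ) ^ ((Fin.last k : ℕ) + ((0 : Fin (k+1)) : ℕ)) * N (Fin.last k) 0 * 1|
      = |N (Fin.last k) 0| := by
    rw [abs_mul, abs_mul, abs_pow, abs_neg, abs_one, one_pow, one_mul, mul_one]
  rw [← h0]
  have := abs_add_le ((-1 : ℝ) ^ ((Fin.last k : ℕ) + ((0 : Fin (k+1)) : ℕ)) * N (Fin.last k) 0 * 1
    + ∑ m : Fin k, (-1 : ℝ) ^ ((Fin.last k : ℕ) + (m.succ : ℕ)) * N (Fin.last k) m.succ *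
      (N.submatrix (Fin.last k).succAbove m.succ.succAbove).det)
    (-∑ m : Fin k, (-1 : ℝ) ^ ((Fin.last k : ℕ) + (m.succ : ℕ)) * N (Fin.last k) m.succ *
      (N.submatrix (Fin.last k).succAbove m.succ.succAbove).det)
  rw [add_neg_cancel_right, abs_neg] at this
  linarith

/-- The hypotheses of the path lemma. -/
structure PathHyp {n : ℕ} (C : Fin n → Set (Fin n → ℝ)) (d Q : ℝ) : Prop where
  hd : 1 ≤ |d|
  hbase : ∀ i, d • (Pi.single i 1 : Fin n → ℝ) ∈ C i
  hdet : ∀ w : Fin n → Fin n → ℝ, (∀ i, w i ∈ C i) → |(Matrix.of w).det| ≤ Q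
  hintg : ∀ i, ∀ x ∈ C i, ∀ j, x j ≠ 0 → 1 ≤ |x j|

theorem sub_det_bound {n k : ℕ} {C : Fin n → Set (Fin n → ℝ)} {d Q : ℝ} (H : PathHyp C d Q)
    (p : Fin (k+1) → Fin n) (hp : Function.Injective p) (w : Fin (k+1) → Fin n → ℝ)
    (hw : ∀ l, w l ∈ C (p l)) :
    |(Matrix.of fun l m => w l (p m)).det| ≤ Q := by
  classical
  set W : Fin n → Fin n → ℝ :=
    Function.extend p w (fun i => d • (Pi.single i 1 : Fin n → ℝ)) with hW
  have hWp : ∀ l, W (p l) = w l := fun l => hp.extend_apply _ _ _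
  have hWn : ∀ i, i ∉ Set.range p → W i = d • (Pi.single i 1 : Fin n → ℝ) := by
    intro i hi
    exact Function.extend_apply' _ _ _ (by simpa using hi)
  have hmem : ∀ i, W i ∈ C i := by
    intro i
    by_cases hi : i ∈ Set.range p
    · obtain ⟨l, rfl⟩ := hi
      rw [hWp]; exact hw l
    · rw [hWn i hi]; exact H.hbase i
  have hQ := H.hdet W hmem
  have e1 : (Matrix.toSquareBlockProp (Matrix.of W) (fun i => i ∈ Set.range p)).det
      = (Matrix.of fun l m => w l (p m)).det := by
    rw [← Matrix.det_submatrix_equiv_self (Equiv.ofInjective p hp)]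
    congr 1
    ext l m
    simp [Matrix.toSquareBlockProp, hWp]
  have e2 : Matrix.toSquareBlockProp (Matrix.of W) (fun i => i ∉ Set.range p)
      = d • (1 : Matrix {i // i ∉ Set.range p} {i // i ∉ Set.range p} ℝ) := by
    ext i j
    change W i j = _
    rw [hWn i i.2]
    by_cases h : i = j
    · subst h; simp
    · have h' : (j : Fin n) ≠ i := fun h' => h (Subtype.ext h'.symm)
      simp [h, h']
  have h12 : (Matrix.of W).det =
      (Matrix.toSquareBlockProp (Matrix.of W) (fun i => i ∈ Set.range p)).det *
      (Matrix.toSquareBlockProp (Matrix.of W) (fun i => ¬ i ∈ Set.range p)).det := by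
    convert Matrix.twoBlockTriangular_det (Matrix.of W) (fun i => i ∈ Set.range p) (by
      intro i hi j hj
      rw [Matrix.of_apply, hWn i hi]
      have : j ≠ i := fun h => hi (h ▸ hj)
      simp [this])
  rw [h12, e1, abs_mul] at hQ
  have e3 : 1 ≤ |(Matrix.toSquareBlockProp (Matrix.of W) (fun i => ¬ i ∈ Set.range p)).det| := by
    rw [e2, Matrix.det_smul, Matrix.det_one, mul_one, abs_pow]
    exact one_le_pow₀ H.hd
  nlinarith [abs_nonneg ((Matrix.of fun l m => w l (p m)).det)]

theorem scaled_corner {n k : ℕ} {C : Fin n → Set (Fin n → ℝ)} {d Q : ℝ} (H : PathHyp C d Q)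
    (p : Fin (k+1) → Fin n) (hp : Function.Injective p) (w : Fin k → Fin n → ℝ)
    (hw : ∀ l, w l ∈ C (p l.castSucc)) (B : ℝ) (hB : 1 ≤ B)
    (h1 : ∀ (l m : Fin k), m ≤ l → |w l (p m.castSucc)| ≤ B)
    (h2 : ∀ l : Fin k, w l (p l.succ) ≠ 0)
    (h3 : ∀ (l m : Fin k), l < m → w l (p m.succ) = 0)
    (x : Fin n → ℝ) (hx : x ∈ C (p (Fin.last k)))
    (h4 : ∀ m : Fin k, |x (p m.succ)| ≤ B) :
    |x (p 0)| ≤ Q + k * (B * (k.factorial * B ^ k)) := by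
  have hS := sub_det_bound H p hp (Fin.snoc (α := fun _ => Fin n → ℝ) w x) (by
    intro l
    refine Fin.lastCases ?_ (fun l => ?_) l
    · simpa using hx
    · simpa using hw l)
  set s : Fin (k+1) → ℝ := Fin.snoc (α := fun _ => ℝ) (fun l => (w l (p l.succ))⁻¹) 1 with hs
  set M : Matrix (Fin (k+1)) (Fin (k+1)) ℝ :=
    Matrix.of fun l m => (Fin.snoc (α := fun _ => Fin n → ℝ) w x : Fin (k+1) → Fin n → ℝ) l (p m)
    with hM
  have hinv : ∀ l, |(w l (p l.succ))⁻¹| ≤ 1 := by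
    intro l
    rw [abs_inv]
    exact inv_le_one_of_one_le₀ (H.hintg _ _ (hw l) _ (h2 l))
  have hdet : |(Matrix.of fun l m => s l * M l m).det| ≤ Q := by
    rw [Matrix.det_mul_column, abs_mul, Finset.abs_prod]
    have : ∏ l, |s l| ≤ 1 := by
      apply Finset.prod_le_one
      · intros; positivity
      · intro l _
        refine Fin.lastCases ?_ (fun l => ?_) l
        · simp [hs]
        · simpa [hs] using hinv l
    have h0 : 0 ≤ |M.det| := abs_nonneg _
    nlinarith
  have := corner_bound k (Matrix.of fun l m => s l * M l m) B Q ?_ ?_ ?_ ?_ hdet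
  · simpa [hs, hM] using this
  · intro l m
    simp only [Matrix.of_apply, hs, hM, Fin.snoc_castSucc]
    have key : ∀ m' : Fin n, |w l m'| ≤ B → |(w l (p l.succ))⁻¹ * w l m'| ≤ B := by
      intro m' hm'
      rw [abs_mul]
      have := hinv l
      nlinarith [abs_nonneg (w l m'), abs_nonneg ((w l (p l.succ))⁻¹)]
    rcases Nat.lt_trichotomy (m : ℕ) ((l : ℕ) + 1) with h | h | h
    · have hm : (m : ℕ) < k := by have := l.2; omega
      have : m = (⟨m, hm⟩ : Fin k).castSucc := by ext; simp
      rw [this]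
      exact key _ (h1 l _ (by rw [Fin.le_def]; simp; omega))
    · have : m = l.succ := by ext; simp [h]
      rw [this, inv_mul_cancel₀ (h2 l)]
      simpa using hB
    · have hm : (m : ℕ) - 1 < k := by have := m.2; omega
      have hm2 : m = (⟨m - 1, hm⟩ : Fin k).succ := by ext; simp; omega
      have hlt : l < (⟨m - 1, hm⟩ : Fin k) := by rw [Fin.lt_def]; simp; omega
      rw [hm2, h3 l _ hlt]
      simp; linarith
  · intro l
    simp [hs, hM, h2 l]
  · intro l m hlm
    simp [hs, hM, h3 l m hlm]
  · intro m
    simpa [hs, hM] using h4 m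

/-- A walk of length `k` from `j` to `i`. -/
def Walk {n : ℕ} (C : Fin n → Set (Fin n → ℝ)) (k : ℕ) (j i : Fin n) : Prop :=
  ∃ p : ℕ → Fin n, p 0 = j ∧ p k = i ∧ ∀ l < k, ∃ x ∈ C (p l), x (p (l+1)) ≠ 0

theorem walk_of {n : ℕ} {C : Fin n → Set (Fin n → ℝ)} {k : ℕ} {p : ℕ → Fin n}
    (hp : ∀ l < k, ∃ x ∈ C (p l), x (p (l+1)) ≠ 0) {a b : ℕ} (hab : a ≤ b) (hb : b ≤ k) :
    Walk C (b - a) (p a) (p b) := by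
  refine ⟨fun t => p (a + t), rfl, ?_, ?_⟩
  · simp only; congr 1; omega
  · intro l hl
    exact hp (a + l) (by omega)

theorem walk_trans {n : ℕ} {C : Fin n → Set (Fin n → ℝ)} {k k' : ℕ} {a b c : Fin n}
    (h : Walk C k a b) (h' : Walk C k' b c) : Walk C (k + k') a c := by
  obtain ⟨p, p0, pk, hp⟩ := h
  obtain ⟨q, q0, qk, hq⟩ := h'
  refine ⟨fun t => if t ≤ k then p t else q (t - k), by simp [p0], ?_, ?_⟩
  · by_cases h : k' = 0
    · subst h; simp [pk, ← qk, q0]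
    · simp [show ¬ (k + k' ≤ k) by omega, qk]
  · intro l hl
    rcases Nat.lt_trichotomy l k with h | h | h
    · simp only [show l ≤ k by omega, show l + 1 ≤ k by omega, if_true]
      exact hp l h
    · subst h
      simp only [le_refl, if_true, show ¬ (l + 1 ≤ l) by omega, if_false,
        show l + 1 - l = 0 + 1 by omega, pk, ← q0]
      exact hq 0 (by omega)
    · simp only [show ¬ (l ≤ k) by omega, show ¬ (l + 1 ≤ k) by omega, if_false,
        show l + 1 - k = l - k + 1 by omega]
      exact hq (l - k) (by omega)

theorem walk_edge {n : ℕ} {C : Fin n → Set (Fin n → ℝ)} {a b : Fin n} {x : Fin n → ℝ}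
    (hx : x ∈ C a) (h : x b ≠ 0) : Walk C 1 a b := by
  refine ⟨fun t => if t = 0 then a else b, rfl, rfl, ?_⟩
  intro l hl
  have : l = 0 := by omega
  subst this
  exact ⟨x, hx, h⟩

theorem walk_min_inj {n : ℕ} {C : Fin n → Set (Fin n → ℝ)} {k : ℕ} {p : ℕ → Fin n}
    (hp : ∀ l < k, ∃ x ∈ C (p l), x (p (l+1)) ≠ 0)
    (hmin : ∀ k' < k, ¬ Walk C k' (p 0) (p k)) {a b : ℕ} (hab : a < b) (hb : b ≤ k) :
    p a ≠ p b := by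
  intro h
  have h1 := walk_of hp (Nat.zero_le a) (by omega)
  have h2 := walk_of hp hb le_rfl
  rw [← h] at h2
  exact hmin _ (by omega) (walk_trans h1 h2)

theorem walk_min_shortcut {n : ℕ} {C : Fin n → Set (Fin n → ℝ)} {k : ℕ} {p : ℕ → Fin n}
    (hp : ∀ l < k, ∃ x ∈ C (p l), x (p (l+1)) ≠ 0)
    (hmin : ∀ k' < k, ¬ Walk C k' (p 0) (p k)) {a b : ℕ} (hab : a + 1 < b) (hb : b ≤ k)
    {x : Fin n → ℝ} (hx : x ∈ C (p a)) : x (p b) = 0 := by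
  by_contra h
  have h1 := walk_of hp (Nat.zero_le a) (by omega)
  have h2 := walk_of hp hb le_rfl
  exact hmin _ (by omega) (walk_trans (walk_trans h1 (walk_edge hx h)) h2)

theorem walk_bound (n : ℕ) (Q : ℝ) (k : ℕ) : ∃ B : ℝ, 1 ≤ B ∧
    ∀ (C : Fin n → Set (Fin n → ℝ)) (d : ℝ), PathHyp C d Q →
      ∀ k' ≤ k, ∀ i j, Walk C k' j i → ∀ x ∈ C i, |x j| ≤ B := by
  induction k with
  | zero =>
    refine ⟨max 1 Q, le_max_left _ _, ?_⟩
    intro C d H k' hk' i j hw x hx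
    obtain ⟨p, p0, pk, -⟩ := hw
    obtain rfl : k' = 0 := by omega
    obtain rfl : j = i := p0.symm.trans pk
    have := sub_det_bound H (k := 0) (fun _ => j) (fun a b _ => by ext; omega)
      (fun _ => x) (fun _ => hx)
    rw [show (Matrix.of fun (l m : Fin (0+1)) => x j).det = x j from Matrix.det_fin_one _] at this
    exact le_max_of_le_right (by simpa using this)
  | succ k ih =>
    obtain ⟨B, hB, ih⟩ := ih
    refine ⟨max B (Q + (k+1 : ℕ) * (B * ((k+1).factorial * B ^ (k+1)))), le_max_of_le_left hB, ?_⟩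
    intro C d H k' hk' i j hw x hx
    by_cases hs : ∃ k'' < k + 1, Walk C k'' j i
    · obtain ⟨k'', h1, h2⟩ := hs
      exact le_max_of_le_left (ih C d H k'' (by omega) i j h2 x hx)
    · push Not at hs
      obtain rfl : k' = k + 1 := by
        by_contra h
        exact hs k' (by omega) hw
      obtain ⟨p, p0, pk, hp⟩ := hw
      refine le_max_of_le_right ?_
      have hmin : ∀ k' < k + 1, ¬ Walk C k' (p 0) (p (k+1)) := by rw [p0, pk]; exact hs
      have hex : ∀ l : Fin (k+1), ∃ y, y ∈ C (p l) ∧ y (p (l+1)) ≠ 0 := by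
        intro l
        obtain ⟨y, hy, h⟩ := hp l l.2
        exact ⟨y, hy, h⟩
      choose w hwC hw0 using hex
      have := scaled_corner H (k := k+1) (fun l => p l) ?_ w (fun l => hwC l) B hB ?_ (fun l => hw0 l) ?_ x
        (by simpa [pk] using hx) ?_
      · simpa [p0] using this
      · intro a b hab
        rcases lt_trichotomy (a : ℕ) b with h | h | h
        · exact absurd hab (walk_min_inj hp hmin h (by omega))
        · exact Fin.ext h
        · exact absurd hab.symm (walk_min_inj hp hmin h (by omega))
      · intro l m hlm
        have hlm' : (m : ℕ) ≤ l := hlm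
        exact ih C d H (l - m) (by omega) _ _ (walk_of hp hlm' (by omega)) _ (hwC l)
      · intro l m hlm
        have hlm' : (l : ℕ) < m := hlm
        exact walk_min_shortcut hp hmin (by simp; omega) (by simp; omega) (hwC l)
      · intro m
        have := walk_of hp (a := m + 1) (b := k + 1) (by omega) le_rfl
        rw [pk] at this
        exact ih C d H _ (by omega) _ _ this x hx

theorem path_bound (n : ℕ) (Q : ℝ) : ∃ B : ℝ, 1 ≤ B ∧
    ∀ (C : Fin n → Set (Fin n → ℝ)) (d : ℝ), PathHyp C d Q →
      (∀ I : Finset (Fin n), I.Nonempty → I ≠ Finset.univ →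
        ∃ i ∈ I, ∃ x ∈ C i, ∃ j, j ∉ I ∧ x j ≠ 0) →
      ∀ i, ∀ x ∈ C i, ∀ j, |x j| ≤ B := by
  classical
  obtain ⟨B, hB, h⟩ := walk_bound n Q n
  refine ⟨B, hB, ?_⟩
  intro C d H hconn i x hx j
  have hwalk : ∃ k, Walk C k j i := by
    by_contra hno
    have hne : (Finset.univ.filter fun j' => ∃ k, Walk C k j j') ≠ Finset.univ := by
      intro he
      have := Finset.mem_univ i
      rw [← he] at this
      exact hno (by simpa using this)
    obtain ⟨i', hi', y, hy, j', hj', hyj⟩ := hconn _ ⟨j, by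
      simp only [Finset.mem_filter, Finset.mem_univ, true_and]
      exact ⟨0, fun _ => j, rfl, rfl, by simp⟩⟩ hne
    simp only [Finset.mem_filter, Finset.mem_univ, true_and] at hi' hj'
    obtain ⟨k, hk⟩ := hi'
    exact hj' ⟨k + 1, walk_trans hk (walk_edge hy hyj)⟩
  have hmin := fun k' (hk' : k' < Nat.find hwalk) => Nat.find_min hwalk hk'
  have hspec := Nat.find_spec hwalk
  set k := Nat.find hwalk
  refine h C d H k ?_ i j hspec x hx
  obtain ⟨p, p0, pk, hp⟩ := hspec
  have hinj : Function.Injective (fun l : Fin (k+1) => p l) := by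
    have hmin' : ∀ k' < k, ¬ Walk C k' (p 0) (p k) := by rw [p0, pk]; exact hmin
    intro a b hab
    rcases lt_trichotomy (a : ℕ) b with h | h | h
    · exact absurd hab (walk_min_inj hp hmin' h (by omega))
    · exact Fin.ext h
    · exact absurd hab.symm (walk_min_inj hp hmin' h (by omega))
  have := Fintype.card_le_of_injective _ hinj
  simp at this
  omega

/-! ### Finiteness -/

theorem nonempty_of_irr {n V : ℕ} (hn : 0 < n) (hV : 0 < V) {A : Fin n → Finset (Fin n → ℤ)}
    (hI : IsIrreducibleTuple A) (hM : MV A = (V : ℝ)) (i : Fin n) : (A i).Nonempty := by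
  by_contra hne
  rw [Finset.not_nonempty_iff_eq_empty] at hne
  by_cases h1 : n = 1
  · subst h1
    have : MV A = 0 := by
      unfold MV
      apply Finset.sum_eq_zero
      intro S hS
      rw [Finset.mem_filter] at hS
      obtain ⟨j, hj⟩ := hS.2
      have hS' : S = {i} := by
        ext t
        rw [Subsingleton.elim t i]
        rw [Subsingleton.elim j i] at hj
        simp [hj]
      rw [hS', Finset.sum_singleton, hne]
      simp
    rw [this] at hM
    have : (V : ℝ) ≠ 0 := by positivity
    exact this hM.symm
  · apply hI
    refine ⟨{i}, ⊥, by simp, by simp; omega, by simp, ?_⟩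
    intro j hj
    rw [Finset.mem_singleton] at hj
    subst hj
    exact ⟨0, by simp [hne]⟩

theorem cast_det_of {n : ℕ} (w : Fin n → Fin n → ℤ) :
    (Matrix.of fun i => toR (w i)).det = (((Matrix.of w).det : ℤ) : ℝ) := by
  rw [Int.cast_det]
  congr 1

theorem exists_data (n V : ℕ) (hn : 0 < n) (hV : 0 < V) : ∃ R : ℤ,
    ∀ A : Fin n → Finset (Fin n → ℤ), IsIrreducibleTuple A → MV A = (V : ℝ) →
      ∃ (d : ℤ) (Ψ : (Fin n → ℤ) →ₗ[ℤ] (Fin n → ℤ)) (b : Fin n → Fin n → ℤ),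
        d ≠ 0 ∧ |d| ≤ R ∧ Function.Injective Ψ ∧
        (∀ i, (Pi.single i d : Fin n → ℤ) ∈ LinearMap.range Ψ) ∧
        (∀ i, ∀ a ∈ A i, ∀ j, |Ψ (a - b i) j| ≤ R) := by
  classical
  obtain ⟨B, hB, hpath⟩ := path_bound n ((64 ^ n * V : ℝ) ^ n * (64 ^ n * V))
  refine ⟨⌈max (64 ^ n * V : ℝ) B⌉, ?_⟩
  intro A hI hM
  have hne := nonempty_of_irr hn hV hI hM
  obtain ⟨a, b, ha, hb, hdet⟩ := exists_det_ne_zero hn hne (by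
    rw [hM]; positivity)
  set U : Matrix (Fin n) (Fin n) ℤ := Matrix.of fun i => a i - b i with hU
  have hcast : ∀ p q : Fin n → Fin n → ℤ, (Matrix.of fun i => toR (p i) - toR (q i)).det =
      (((Matrix.of fun i => p i - q i).det : ℤ) : ℝ) := by
    intro p q
    rw [← cast_det_of]
    simp only [toR_sub]
  have hbound : ∀ p q : Fin n → Fin n → ℤ, (∀ i, p i ∈ A i) → (∀ i, q i ∈ A i) →
      |(((Matrix.of fun i => p i - q i).det : ℤ) : ℝ)| ≤ 64 ^ n * V := by
    intro p q hp hq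
    rw [← hcast, ← hM]
    exact det_le_MV hn hne hp hq
  rw [hcast] at hdet
  have hd0 : U.det ≠ 0 := by exact_mod_cast hdet
  have hdV : |(U.det : ℝ)| ≤ 64 ^ n * V := hbound a b ha hb
  have hd1 : 1 ≤ |(U.det : ℝ)| := by exact_mod_cast Int.one_le_abs hd0
  set Ψ : (Fin n → ℤ) →ₗ[ℤ] (Fin n → ℤ) := Matrix.cramer U.transpose with hΨ
  have hmv : ∀ x, U.transpose.mulVec (Ψ x) = U.det • x := by
    intro x
    rw [hΨ, Matrix.mulVec_cramer, Matrix.det_transpose]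
  have hinj : Function.Injective Ψ := by
    intro x y hxy
    have h1 := hmv x
    rw [hxy, hmv y] at h1
    exact (smul_right_injective _ hd0 h1).symm
  have hrow : ∀ i, Ψ (a i - b i) = Pi.single i U.det := by
    intro i
    exact Matrix.cramer_transpose_row_self U i
  have hP : PathHyp (fun i => {x | ∃ p ∈ A i, ∃ q ∈ A i, x = toR (Ψ (p - q))}) (U.det : ℝ)
      ((64 ^ n * V : ℝ) ^ n * (64 ^ n * V)) := by
    refine ⟨hd1, ?_, ?_, ?_⟩
    · intro i
      refine ⟨a i, ha i, b i, hb i, ?_⟩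
      rw [hrow]
      ext j
      by_cases h : j = i
      · subst h; simp [toR]
      · simp [toR, h]
    · intro w hw
      choose p hp q hq hw using hw
      obtain rfl : w = fun i => toR (Ψ (p i - q i)) := funext hw
      rw [cast_det_of]
      have hmul : (Matrix.of fun i => Ψ (p i - q i)) * U = U.det • Matrix.of fun i => p i - q i := by
        ext i j
        have := congrFun (hmv (p i - q i)) j
        rw [Matrix.mulVec_transpose] at this
        exact this
      have hmul' := congrArg Matrix.det hmul
      rw [Matrix.det_mul, Matrix.det_smul, Fintype.card_fin] at hmul'
      have h3 : |(((Matrix.of fun i => Ψ (p i - q i)).det : ℤ) : ℝ)| * |(U.det : ℝ)| =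
          |(U.det : ℝ)| ^ n * |(((Matrix.of fun i => p i - q i).det : ℤ) : ℝ)| := by
        rw [← abs_mul, ← abs_pow, ← abs_mul]
        exact_mod_cast congrArg (fun z : ℤ => |z|) hmul'
      calc |(((Matrix.of fun i => Ψ (p i - q i)).det : ℤ) : ℝ)|
          ≤ |(((Matrix.of fun i => Ψ (p i - q i)).det : ℤ) : ℝ)| * |(U.det : ℝ)| :=
            le_mul_of_one_le_right (abs_nonneg _) hd1
        _ = _ := h3
        _ ≤ _ := by
            apply mul_le_mul _ (hbound p q hp hq) (abs_nonneg _) (by positivity)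
            exact pow_le_pow_left₀ (abs_nonneg _) hdV n
    · rintro i x ⟨p, hp, q, hq, rfl⟩ j hj
      have : Ψ (p - q) j ≠ 0 := by
        intro h
        apply hj
        simp [toR, h]
      have := Int.one_le_abs this
      change 1 ≤ |((Ψ (p - q) j : ℤ) : ℝ)|
      exact_mod_cast this
  have hbd := hpath _ _ hP (by
    intro I hIne hIu
    by_contra hcon
    push Not at hcon
    let L : Submodule ℤ (Fin n → ℤ) :=
      { carrier := {x | ∀ j, j ∉ I → Ψ x j = 0}
        add_mem' := by
          intro x y hx hy j hj
          rw [map_add, Pi.add_apply, hx j hj, hy j hj, add_zero]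
        zero_mem' := by
          intro j hj
          simp
        smul_mem' := by
          intro c x hx j hj
          rw [map_smul, Pi.smul_apply, hx j hj, smul_zero] }
    apply hI
    refine ⟨I, L, Finset.card_pos.mpr hIne, ?_, ?_, ?_⟩
    · have := Finset.card_lt_univ_of_notMem (s := I)
        (Classical.choose_spec (by
          by_contra h
          push Not at h
          exact hIu (Finset.eq_univ_iff_forall.mpr h) : ∃ x, x ∉ I))
      simpa using this
    · let g : L →ₗ[ℤ] (I → ℤ) :=
        { toFun := fun x j => Ψ x.1 j.1
          map_add' := by
            intro x y; ext j
            simp only [Submodule.coe_add, map_add, Pi.add_apply]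
          map_smul' := by
            intro c x; ext j
            simp only [Submodule.coe_smul, map_smul, Pi.smul_apply, RingHom.id_apply] }
      have hg : Function.Injective g := by
        intro x y hxy
        apply Subtype.ext
        apply hinj
        ext j
        by_cases hj : j ∈ I
        · exact congrFun hxy ⟨j, hj⟩
        · rw [x.2 j hj, y.2 j hj]
      have := LinearMap.finrank_le_finrank_of_injective hg
      simpa using this
    · intro i hi
      refine ⟨b i, ?_⟩
      intro p hp j hj
      have := hcon i hi (toR (Ψ (p - b i))) ⟨p, hp, b i, hb i, rfl⟩ j hj
      change ((Ψ (p - b i) j : ℤ) : ℝ) = 0 at this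
      exact_mod_cast this)
  refine ⟨U.det, Ψ, b, hd0, ?_, hinj, ?_, ?_⟩
  · have : ((|U.det| : ℤ) : ℝ) ≤ (⌈max (64 ^ n * V : ℝ) B⌉ : ℤ) := by
      rw [Int.cast_abs]
      exact (hdV.trans (le_max_left _ _)).trans (Int.le_ceil _)
    exact_mod_cast this
  · intro i
    exact ⟨_, hrow i⟩
  · intro i p hp j
    have h1 := hbd i _ ⟨p, hp, b i, hb i, rfl⟩ j
    have : ((|Ψ (p - b i) j| : ℤ) : ℝ) ≤ (⌈max (64 ^ n * V : ℝ) B⌉ : ℤ) := by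
      rw [Int.cast_abs]
      exact (h1.trans (le_max_right _ _)).trans (Int.le_ceil _)
    exact_mod_cast this

theorem range_le_of_box {n : ℕ} {R d : ℤ} (hd0 : d ≠ 0) (hd : |d| ≤ R)
    (M M' : Submodule ℤ (Fin n → ℤ)) (hM : ∀ i, (Pi.single i d : Fin n → ℤ) ∈ M)
    (h : ∀ x : Fin n → ℤ, (∀ j, |x j| ≤ R) → x ∈ M → x ∈ M') : M ≤ M' := by
  intro x hx
  have hs : ∀ i, (Pi.single i d : Fin n → ℤ) ∈ M' := by
    intro i
    apply h _ _ (hM i)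
    intro j
    by_cases hj : j = i
    · subst hj; simpa using hd
    · simpa [hj] using (abs_nonneg d).trans hd
  have hsum : ∀ N : Submodule ℤ (Fin n → ℤ), (∀ i, (Pi.single i d : Fin n → ℤ) ∈ N) →
      (fun j => d * (x j / d)) ∈ N := by
    intro N hN
    have : (fun j => d * (x j / d)) = ∑ i, (x i / d) • (Pi.single i d : Fin n → ℤ) := by
      ext j
      simp [Finset.sum_apply, Pi.single_apply, mul_comm]
    rw [this]
    exact Submodule.sum_mem _ fun i _ => Submodule.smul_mem _ _ (hN i)
  have hdec : x = (fun j => x j % d) + (fun j => d * (x j / d)) := by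
    ext j
    simp [Int.emod_add_mul_ediv]
  have hm : (fun j => x j % d) ∈ M := by
    have : (fun j => x j % d) = x - (fun j => d * (x j / d)) := by
      rw [eq_sub_iff_add_eq]; exact hdec.symm
    rw [this]
    exact Submodule.sub_mem _ hx (hsum M hM)
  rw [hdec]
  refine Submodule.add_mem _ (h _ ?_ hm) (hsum M' hs)
  intro j
  rw [abs_of_nonneg (Int.emod_nonneg _ hd0)]
  exact (Int.emod_lt_abs _ hd0).le.trans hd

/-- The box of radius `R`. -/
abbrev Box (n : ℕ) (R : ℤ) := {x : Fin n → ℤ // x ∈ Set.Icc (fun _ => -R) (fun _ => R)}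

theorem mem_box {n : ℕ} {R : ℤ} {x : Fin n → ℤ} (h : ∀ j, |x j| ≤ R) :
    x ∈ Set.Icc (fun _ => -R) (fun _ => R) :=
  ⟨fun j => (abs_le.mp (h j)).1, fun j => (abs_le.mp (h j)).2⟩

/-- Theorem 1.11: for all positive integers `n` and `V` there are only
finitely many irreducible tuples of `n` finite subsets of `ℤⁿ` of lattice mixed volume `V`,
up to automorphisms of the lattice `ℤⁿ` and independent translations of the sets. -/
theorem finitely_many_irreducible_tuples (n V : ℕ) (hn : 0 < n) (hV : 0 < V) :
    Finite (Quot (fun (A B : {A : Fin n → Finset (Fin n → ℤ) //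
        IsIrreducibleTuple A ∧ MV A = (V : ℝ)}) =>
      ∃ (φ : (Fin n → ℤ) ≃+ (Fin n → ℤ)) (v : Fin n → (Fin n → ℤ)),
        ∀ i, B.1 i = (A.1 i).image (fun a => φ a + v i))) := by
  classical
  obtain ⟨R, hR⟩ := exists_data n V hn hV
  choose d Ψ b hd0 hdR hinj hrow hbox using fun A : {A : Fin n → Finset (Fin n → ℤ) //
        IsIrreducibleTuple A ∧ MV A = (V : ℝ)} => hR A.1 A.2.1 A.2.2
  have hfin : Finite (Box n R) := (Set.finite_Icc _ _).to_subtype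
  let f : {A : Fin n → Finset (Fin n → ℤ) // IsIrreducibleTuple A ∧ MV A = (V : ℝ)} →
      Set (Box n R) × (Fin n → Set (Box n R)) := fun A =>
    ({y | y.1 ∈ LinearMap.range (Ψ A)}, fun i => {y | ∃ a ∈ A.1 i, Ψ A (a - b A i) = y.1})
  have key : ∀ A B, f A = f B → ∃ (φ : (Fin n → ℤ) ≃+ (Fin n → ℤ)) (v : Fin n → (Fin n → ℤ)),
        ∀ i, B.1 i = (A.1 i).image (fun a => φ a + v i) := by
    intro A B hAB
    have h1 : ∀ x : Fin n → ℤ, (∀ j, |x j| ≤ R) →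
        (x ∈ LinearMap.range (Ψ A) ↔ x ∈ LinearMap.range (Ψ B)) := by
      intro x hx
      have := congrArg (fun s => (⟨x, mem_box hx⟩ : Box n R) ∈ s.1) hAB
      exact iff_of_eq this
    have h2 : ∀ i, ∀ x : Fin n → ℤ, (∀ j, |x j| ≤ R) →
        ((∃ a ∈ A.1 i, Ψ A (a - b A i) = x) ↔ (∃ a ∈ B.1 i, Ψ B (a - b B i) = x)) := by
      intro i x hx
      have := congrArg (fun s => (⟨x, mem_box hx⟩ : Box n R) ∈ s.2 i) hAB
      exact iff_of_eq this
    have hrange : LinearMap.range (Ψ A) = LinearMap.range (Ψ B) := by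
      apply le_antisymm
      · exact range_le_of_box (hd0 A) (hdR A) _ _ (hrow A) fun x hx => (h1 x hx).1
      · exact range_le_of_box (hd0 B) (hdR B) _ _ (hrow B) fun x hx => (h1 x hx).2
    let e : (Fin n → ℤ) ≃ₗ[ℤ] (Fin n → ℤ) :=
      (LinearEquiv.ofInjective (Ψ A) (hinj A)).trans
        ((LinearEquiv.ofEq _ _ hrange).trans (LinearEquiv.ofInjective (Ψ B) (hinj B)).symm)
    have he : ∀ x, Ψ B (e x) = Ψ A x := by
      intro x
      have := (LinearEquiv.ofInjective (Ψ B) (hinj B)).apply_symm_apply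
        ((LinearEquiv.ofEq _ _ hrange) (LinearEquiv.ofInjective (Ψ A) (hinj A) x))
      exact congrArg Subtype.val this
    refine ⟨e.toAddEquiv, fun i => b B i - e (b A i), ?_⟩
    intro i
    ext c
    rw [Finset.mem_image]
    have hiff : ∀ a, (e a + (b B i - e (b A i)) = c) ↔ Ψ A (a - b A i) = Ψ B (c - b B i) := by
      intro a
      rw [← he, (hinj B).eq_iff, map_sub]
      constructor
      · rintro rfl; abel
      · intro h
        rw [← add_sub_assoc, add_sub_right_comm, h]; abel
    constructor
    · intro hc
      obtain ⟨a, ha, h⟩ := (h2 i (Ψ B (c - b B i)) (hbox B i c hc)).2 ⟨c, hc, rfl⟩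
      exact ⟨a, ha, (hiff a).2 h⟩
    · rintro ⟨a, ha, h⟩
      have h' := (hiff a).1 h
      obtain ⟨c', hc', h3⟩ := (h2 i (Ψ A (a - b A i)) (hbox A i a ha)).1 ⟨a, ha, rfl⟩
      rw [h'] at h3
      have := hinj B h3
      rw [sub_left_inj] at this
      rwa [← this]
  refine Finite.of_injective (fun q => f q.out) ?_
  intro q q' hq
  rw [← Quot.out_eq q, ← Quot.out_eq q']
  exact Quot.sound (key _ _ hq)

end Esterov
end
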